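/- arXiv:2202.10742 — 4 statements merged into one kernel-verified Lean document; each statement's English description precedes it below -/
import Mathlib

section
/- The squared ℓ² norm of the Jacobi polynomial iteration satisfies the sharp asymptotic equivalence: n^d · ∑_{v∈ℤ^d} x_n(v)² converges, as n → ∞, to Γ(d/2+1)/(π^{d/2} (det Q)^{1/2}) (equivalently, to 1/((det Q)^{1/2} |B(0,1)|) where |B(0,1)| = π^{d/2}/Γ(d/2+1) is the volume of the Euclidean unit ball in ℝ^d). -/
open MeasureTheory Matrix Filter Topology Real

noncomputable section

def latticeConv {d : ℕ} (ω x : (Fin d → ℤ) → ℝ) : (Fin d → ℤ) → ℝ :=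
  fun v => ∑' η : Fin d → ℤ, ω (v - η) * x η

def covQ (d : ℕ) (ω : (Fin d → ℤ) → ℝ) : Matrix (Fin d) (Fin d) ℝ :=
  Matrix.of fun i j => ∑' v : Fin d → ℤ, ω v * (v i : ℝ) * (v j : ℝ)

def ftOmega {d : ℕ} (ω : (Fin d → ℤ) → ℝ) (ξ : Fin d → ℝ) : ℂ :=
  ∑' v : Fin d → ℤ, (ω v : ℂ) * Complex.exp (Complex.I * ((∑ i, ξ i * (v i : ℝ) : ℝ) : ℂ))

def aCoef0 (d : ℕ) : ℝ := ((d : ℝ) + 4) / (2 * (2 + (d : ℝ)))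
def bCoef0 (d : ℕ) : ℝ := (d : ℝ) / (2 * (2 + (d : ℝ)))
def aCoef (d n : ℕ) : ℝ :=
  (2 * (n : ℝ) + (d : ℝ)/2 + 1) * (2 * (n : ℝ) + (d : ℝ)/2 + 2) / (2 * ((n : ℝ) + 1 + (d : ℝ)/2)^2)
def bCoef (d n : ℕ) : ℝ :=
  (d : ℝ)^2 * (2 * (n : ℝ) + (d : ℝ)/2 + 1) / (8 * ((n : ℝ) + 1 + (d : ℝ)/2)^2 * (2 * (n : ℝ) + (d : ℝ)/2))
def cCoef (d n : ℕ) : ℝ :=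
  (n : ℝ)^2 * (2 * (n : ℝ) + (d : ℝ)/2 + 2) / (((n : ℝ) + 1 + (d : ℝ)/2)^2 * (2 * (n : ℝ) + (d : ℝ)/2))

def besselJ (ν z : ℝ) : ℝ :=
  ∑' m : ℕ, ((-1 : ℝ)^m / ((m.factorial : ℝ) * Real.Gamma ((m : ℝ) + ν + 1))) * (z / 2) ^ (2 * (m : ℝ) + ν)

def jacobiP (α β : ℝ) (n : ℕ) (x : ℝ) : ℝ :=
  ∑ s ∈ Finset.range (n + 1),
    (Real.Gamma ((n : ℝ) + α + 1) / (Real.Gamma (α + (s : ℝ) + 1) * ((n - s).factorial : ℝ))) *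
    (Real.Gamma ((n : ℝ) + β + 1) / (Real.Gamma ((n : ℝ) + β - (s : ℝ) + 1) * (s.factorial : ℝ))) *
    ((x - 1) / 2) ^ s * ((x + 1) / 2) ^ (n - s)

def jacobiPi (α β : ℝ) (n : ℕ) (x : ℝ) : ℝ := jacobiP α β n x / jacobiP α β n 1

def pd {d : ℕ} (j : Fin d) (g : (Fin d → ℝ) → ℝ) : (Fin d → ℝ) → ℝ :=
  fun y => deriv (fun s => g (Function.update y j s)) (y j)


def pj (d : ℕ) : ℕ → ℝ → ℝ
  | 0, _ => 1
  | 1, l => aCoef0 d * l + bCoef0 d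
  | (n + 2), l => (aCoef d (n + 1) * l + bCoef d (n + 1)) * pj d (n + 1) l - cCoef d (n + 1) * pj d n l

lemma coef_sum (d n : ℕ) (hn : 1 ≤ n) : aCoef d n + bCoef d n - cCoef d n = 1 := by
  have h1 : (1:ℝ) ≤ n := by exact_mod_cast hn
  have h2 : (0:ℝ) ≤ d := by positivity
  unfold aCoef bCoef cCoef
  have e1 : (n:ℝ) + 1 + d/2 ≠ 0 := by positivity
  have e2 : 2*(n:ℝ) + d/2 ≠ 0 := by positivity
  field_simp
  ring

lemma aCoef_nonneg (d n : ℕ) : 0 ≤ aCoef d n := by unfold aCoef; positivity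
lemma bCoef_nonneg (d n : ℕ) : 0 ≤ bCoef d n := by unfold bCoef; positivity
lemma cCoef_nonneg (d n : ℕ) : 0 ≤ cCoef d n := by unfold cCoef; positivity

lemma aCoef_le (d n : ℕ) : aCoef d n ≤ 2 := by
  have h2 : (0:ℝ) ≤ d := by positivity
  have h1 : (0:ℝ) ≤ n := by positivity
  unfold aCoef
  rw [div_le_iff₀ (by positivity)]
  nlinarith [mul_nonneg h1 h2]

lemma cCoef_le (d n : ℕ) (hn : 1 ≤ n) : cCoef d n ≤ 1 := by
  have h1 : (1:ℝ) ≤ n := by exact_mod_cast hn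
  have h2 : (0:ℝ) ≤ d := by positivity
  unfold cCoef
  rw [div_le_one (by positivity)]
  have e : ((n:ℝ)^2+2*n) * (2 * n + d/2) ≤ (n + 1 + d/2)^2 * (2*n+d/2) := by
    gcongr
    nlinarith [mul_nonneg (by linarith : (0:ℝ) ≤ n) h2]
  refine le_trans ?_ e
  nlinarith [mul_nonneg (by linarith : (0:ℝ) ≤ n) h2]

lemma pj_diff (d n : ℕ) (l : ℝ) : pj d (n+2) l - pj d (n+1) l =
    cCoef d (n+1) * (pj d (n+1) l - pj d n l) - aCoef d (n+1) * (1 - l) * pj d (n+1) l := by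
  have := coef_sum d (n+1) (by omega)
  rw [pj]
  linear_combination (pj d (n+1) l) * this

lemma pj_one (d : ℕ) (l : ℝ) : pj d 1 l - pj d 0 l = - aCoef0 d * (1 - l) := by
  rw [pj, pj]
  unfold aCoef0 bCoef0
  have e : (2:ℝ) + d ≠ 0 := by positivity
  field_simp
  ring

lemma aCoef0_le (d : ℕ) : aCoef0 d ≤ 1 ∧ 0 ≤ aCoef0 d := by
  unfold aCoef0
  refine ⟨?_, by positivity⟩
  rw [div_le_one (by positivity)]
  have h2 : (0:ℝ) ≤ d := by positivity
  linarith

lemma pj_early (d : ℕ) (t : ℝ) (ht : 0 ≤ t) (n : ℕ) (hn : 4 * t * ((n:ℝ)+1)^2 ≤ 1) :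
    |pj d (n+1) (1-t) - 1| ≤ 4 * t * ((n:ℝ)+1)^2 ∧ |pj d n (1-t)| ≤ 2 ∧
    |pj d (n+1) (1-t) - pj d n (1-t)| ≤ 4 * t * ((n:ℝ)+1) := by
  induction n with
  | zero =>
    have h0 := pj_one d (1-t)
    have ⟨h1, h2⟩ := aCoef0_le d
    have h3 : pj d 0 (1-t) = 1 := by rw [pj]
    have h4 : |pj d 1 (1-t) - 1| ≤ 4 * t := by
      rw [h3] at h0; rw [h0, abs_le]; constructor <;> nlinarith
    simp only [Nat.cast_zero, zero_add]
    rw [h3]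
    refine ⟨by linarith, by norm_num, by linarith⟩
  | succ n ih =>
    push_cast at hn ⊢
    have hN : (0:ℝ) ≤ n := by positivity
    obtain ⟨i1, i2, i3⟩ := ih (by nlinarith [mul_nonneg ht hN])
    have hp : |pj d (n+1) (1-t)| ≤ 2 := by
      have : 4 * t * ((n:ℝ)+1)^2 ≤ 1 := by nlinarith [mul_nonneg ht hN]
      rw [abs_le] at i1 ⊢; constructor <;> linarith
    have hd := pj_diff d n (1-t)
    have hdd : |pj d (n+2) (1-t) - pj d (n+1) (1-t)| ≤ 4 * t * ((n:ℝ)+1+1) := by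
      rw [hd]
      refine (abs_sub _ _).trans ?_
      rw [abs_mul, abs_mul, abs_of_nonneg (cCoef_nonneg d _)]
      have e1 : cCoef d (n+1) * |pj d (n+1) (1-t) - pj d n (1-t)| ≤ 1 * (4 * t * ((n:ℝ)+1)) :=
        mul_le_mul (cCoef_le d _ (by omega)) i3 (abs_nonneg _) (by norm_num)
      have e2 : |aCoef d (n+1) * (1 - (1-t))| * |pj d (n+1) (1-t)| ≤ (2 * t) * 2 := by
        have : |aCoef d (n+1) * (1 - (1-t))| = aCoef d (n+1) * t := by
          rw [abs_of_nonneg]; ring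
          have := aCoef_nonneg d (n+1)
          rw [sub_sub_cancel]; positivity
        rw [this]
        exact mul_le_mul (mul_le_mul_of_nonneg_right (aCoef_le d _) ht) hp (abs_nonneg _) (by positivity)
      linarith
    refine ⟨?_, hp, hdd⟩
    have := abs_add_le (pj d (n+2) (1-t) - pj d (n+1) (1-t)) (pj d (n+1) (1-t) - 1)
    rw [sub_add_sub_cancel] at this
    refine this.trans ?_
    nlinarith [mul_nonneg ht hN]

/-! first order approximations -/
def App (f : ℕ → ℝ) (e : ℝ) : Prop := ∃ K : ℝ, 0 ≤ K ∧ ∀ n : ℕ, 1 ≤ n → |f n - 1 - e / n| ≤ K / (n:ℝ)^2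

lemma div_le_self_nat (x : ℝ) (hx : 0 ≤ x) (n : ℕ) (hn : 1 ≤ n) : x / n ≤ x :=
  div_le_self hx (by exact_mod_cast hn)

lemma App.bdd {f e} (hf : App f e) : ∃ B, 0 ≤ B ∧ ∀ n : ℕ, 1 ≤ n → |f n| ≤ B := by
  obtain ⟨K, hK, h⟩ := hf
  refine ⟨K + 1 + |e|, by positivity, fun n hn => ?_⟩
  have h1 := h n hn
  have h2 : K / (n:ℝ)^2 ≤ K := div_le_self hK (by exact_mod_cast Nat.one_le_pow _ _ hn)
  have h3 : |e / n| ≤ |e| := by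
    rw [abs_div, Nat.abs_cast]; exact div_le_self_nat _ (abs_nonneg _) n hn
  have : f n = (f n - 1 - e/n) + 1 + e/n := by ring
  rw [this]
  refine (abs_add_le _ _).trans (add_le_add ((abs_add_le _ _).trans (add_le_add ?_ ?_)) h3)
  · linarith
  · simp

lemma App.mul {f g e e'} (hf : App f e) (hg : App g e') : App (fun n => f n * g n) (e + e') := by
  obtain ⟨B, hB, hb⟩ := hg.bdd
  obtain ⟨K, hK, h⟩ := hf
  obtain ⟨K', hK', h'⟩ := hg
  refine ⟨K * B + (1 + |e|) * K' + |e * e'|, by positivity, fun n hn => ?_⟩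
  have hn0 : (n:ℝ) ≠ 0 := by positivity
  have : f n * g n - 1 - (e + e') / n = (f n - 1 - e/n) * g n + (1 + e/n) * (g n - 1 - e'/n) + e * e'/(n:ℝ)^2 := by
    field_simp; ring
  simp only [this]
  have h3 : |1 + e / n| ≤ 1 + |e| := by
    refine (abs_add_le _ _).trans (add_le_add (by simp) ?_)
    rw [abs_div, Nat.abs_cast]; exact div_le_self_nat _ (abs_nonneg _) n hn
  have : (K * B + (1 + |e|) * K' + |e * e'|) / (n:ℝ)^2 = K / n^2 * B + (1 + |e|) * (K' / n^2) + |e * e'| / (n:ℝ)^2 := by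
    field_simp
  rw [this]
  refine (abs_add_le _ _).trans (add_le_add ((abs_add_le _ _).trans (add_le_add ?_ ?_)) ?_)
  · rw [abs_mul]; exact mul_le_mul (h n hn) (hb n hn) (abs_nonneg _) (by positivity)
  · rw [abs_mul]; exact mul_le_mul h3 (h' n hn) (abs_nonneg _) (by positivity)
  · rw [abs_div]; simp

lemma App.pow {f e} (hf : App f e) (k : ℕ) : App (fun n => f n ^ k) (k * e) := by
  induction k with
  | zero => exact ⟨0, le_rfl, by simp⟩
  | succ k ih =>
    have := ih.mul hf
    simp only [pow_succ]; push_cast; rwa [add_mul, one_mul]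

lemma App.lin (c : ℝ) : App (fun n => 1 + c / n) c := ⟨0, le_rfl, by simp⟩

lemma App.inv (c : ℝ) (hc : 0 ≤ c) : App (fun n => (1 + c / n)⁻¹) (-c) := by
  refine ⟨c^2, by positivity, fun n hn => ?_⟩
  have hn0 : (0:ℝ) < n := by exact_mod_cast hn
  have h1 : (0:ℝ) < 1 + c/n := by positivity
  have : (1 + c / n)⁻¹ - 1 - -c / n = c^2/(n:ℝ)^2 * (1 + c/n)⁻¹ := by
    have : (n:ℝ) + c ≠ 0 := by positivity
    field_simp; ring
  rw [this, abs_of_nonneg (by positivity)]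
  refine mul_le_of_le_one_right (by positivity) (inv_le_one_of_one_le₀ ?_)
  have : 0 ≤ c / n := by positivity
  linarith

lemma App.sqrt (c : ℝ) (hc : 0 ≤ c) : App (fun n => √(1 + c / n)) (c/2) := by
  refine ⟨c^2/8, by positivity, fun n hn => ?_⟩
  have hn0 : (0:ℝ) < n := by exact_mod_cast hn
  have h0 : (0:ℝ) ≤ c/n := by positivity
  have hs := Real.sq_sqrt (by positivity : (0:ℝ) ≤ 1 + c/n)
  have hr : 1 ≤ √(1+c/n) := by rw [Real.one_le_sqrt]; linarith
  have e1 : c/2/n = c/n/2 := by ring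
  have e2 : c^2/8/(n:ℝ)^2 = (c/n)^2/8 := by field_simp
  rw [e1, e2]
  set y := c/n
  set r := √(1+y)
  have h3 : r - 1 ≤ y/2 := by nlinarith [sq_nonneg (r-1)]
  rw [abs_le]
  constructor <;> nlinarith

lemma App.congr {f g e e'} (hf : App f e) (h : ∀ n : ℕ, 1 ≤ n → f n = g n) (he : e = e') : App g e' := by
  subst he
  obtain ⟨K, hK, H⟩ := hf
  exact ⟨K, hK, fun n hn => by rw [← h n hn]; exact H n hn⟩

def hh (d n : ℕ) : ℝ := √((n:ℝ)+1) ^ (d+1)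

lemma hh_pos (d n : ℕ) : 0 < hh d n := by unfold hh; positivity

lemma app_a (d : ℕ) : App (fun n => hh d (n+1) / hh d n * (aCoef d n / 2)) 0 := by
  have h1 := (((App.sqrt 2 (by norm_num)).mul (App.sqrt 1 (by norm_num))).mul (App.inv 1 (by norm_num))).pow (d+1)
  have h2 := ((App.lin (((d:ℝ)/2+1)/2)).mul (App.lin (((d:ℝ)/2+2)/2))).mul ((App.inv (1+(d:ℝ)/2) (by positivity)).pow 2)
  refine (h1.mul h2).congr (fun n hn => ?_) (by push_cast; ring)
  have hn0 : (0:ℝ) < n := by exact_mod_cast hn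
  congr 1
  · unfold hh
    rw [← div_pow]
    congr 1
    have e1 : 1 + 2/(n:ℝ) = (n+2)/n := by field_simp
    have e2 : 1 + 1/(n:ℝ) = (n+1)/n := by field_simp
    rw [e1, e2, Real.sqrt_div (by positivity), Real.sqrt_div (by positivity)]
    push_cast
    have e3 : (n:ℝ)+1+1 = n+2 := by ring
    rw [e3, inv_div]
    have q1 : √(n:ℝ)^2 = n := Real.sq_sqrt hn0.le
    have q2 : √((n:ℝ)+1)^2 = n+1 := Real.sq_sqrt (by positivity)
    have p1 : 0 < √(n:ℝ) := by positivity
    have p2 : 0 < √((n:ℝ)+1) := by positivity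
    field_simp
    rw [q1, q2]
  · unfold aCoef
    field_simp
    ring

lemma app_c (d : ℕ) : App (fun n => hh d (n+1) / hh d (n-1) * (cCoef d n)) 0 := by
  have h1 := ((App.sqrt 2 (by norm_num))).pow (d+1)
  have h2 := ((App.lin (((d:ℝ)/2+2)/2)).mul (App.inv (((d:ℝ)/2)/2) (by positivity))).mul ((App.inv (1+(d:ℝ)/2) (by positivity)).pow 2)
  refine (h1.mul h2).congr (fun n hn => ?_) (by push_cast; ring)
  have hn0 : (0:ℝ) < n := by exact_mod_cast hn
  congr 1
  · unfold hh
    rw [← div_pow]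
    congr 1
    have e1 : 1 + 2/(n:ℝ) = (n+2)/n := by field_simp
    rw [e1, Real.sqrt_div (by positivity)]
    rw [Nat.cast_sub hn]
    push_cast
    congr 2 <;> ring
  · unfold cCoef
    field_simp
    ring

lemma app_b (d : ℕ) : ∃ K : ℝ, 0 ≤ K ∧ ∀ n : ℕ, 1 ≤ n → hh d (n+1) / hh d n * bCoef d n ≤ K / (n:ℝ)^2 := by
  have h1 := (((App.sqrt 2 (by norm_num)).mul (App.sqrt 1 (by norm_num))).mul (App.inv 1 (by norm_num))).pow (d+1)
  refine ⟨2^(d+1) * (d^2/4), by positivity, fun n hn => ?_⟩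
  have hn0 : (1:ℝ) ≤ n := by exact_mod_cast hn
  have a1 : hh d (n+1) / hh d n ≤ 2^(d+1) := by
    unfold hh
    rw [← div_pow]
    gcongr
    rw [div_le_iff₀ (by positivity), ← Real.sqrt_sq (by norm_num : (0:ℝ) ≤ 2), ← Real.sqrt_mul (by norm_num)]
    apply Real.sqrt_le_sqrt
    push_cast; linarith
  have a2 : bCoef d n ≤ (d^2/4) / (n:ℝ)^2 := by
    unfold bCoef
    rw [div_le_div_iff₀ (by positivity) (by positivity)]
    have i1 : (n:ℝ)^2 ≤ (n+1+d/2)^2 := by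
      gcongr; have : (0:ℝ) ≤ d := by positivity
      linarith
    have i2 : 2*(n:ℝ)+d/2+1 ≤ 2*(2*n+d/2) := by
      have : (0:ℝ) ≤ d := by positivity
      linarith
    calc (d:ℝ)^2 * (2*n+d/2+1) * (n:ℝ)^2 ≤ (d:ℝ)^2 * (2*(2*n+d/2)) * (n+1+d/2)^2 := by gcongr
      _ = _ := by ring
  rw [mul_div_assoc]
  exact mul_le_mul a1 a2 (bCoef_nonneg d n) (by positivity)

def uu (d n : ℕ) (l : ℝ) : ℝ := hh d n * pj d n l

lemma uu_rec (d : ℕ) : ∃ K : ℝ, 0 ≤ K ∧ ∀ (n : ℕ) (l : ℝ), |l| ≤ 1 →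
    |uu d (n+2) l - 2 * l * uu d (n+1) l + uu d n l| ≤ K / ((n:ℝ)+1)^2 * (|uu d (n+1) l| + |uu d n l|) := by
  obtain ⟨K1, hK1, h1⟩ := app_a d
  obtain ⟨K2, hK2, h2⟩ := app_b d
  obtain ⟨K3, hK3, h3⟩ := app_c d
  refine ⟨2*K1+K2+K3, by positivity, fun n l hl => ?_⟩
  have h1 := h1 (n+1) (by omega)
  have h2 := h2 (n+1) (by omega)
  have h3 := h3 (n+1) (by omega)
  push_cast at h1 h2 h3
  simp only [zero_div, sub_zero] at h1 h2 h3
  have := hh_pos d (n+1)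
  have := hh_pos d n
  have := hh_pos d (n+2)
  have e : uu d (n+2) l - 2 * l * uu d (n+1) l + uu d n l =
    2 * (hh d (n+1+1) / hh d (n+1) * (aCoef d (n+1) / 2) - 1) * l * uu d (n+1) l
    + (hh d (n+1+1) / hh d (n+1) * bCoef d (n+1)) * uu d (n+1) l
    - (hh d (n+1+1) / hh d n * cCoef d (n+1) - 1) * uu d n l := by
    unfold uu; rw [pj]; field_simp; ring
  rw [e]
  set A := hh d (n+1+1) / hh d (n+1) * (aCoef d (n+1) / 2) - 1
  have hB : 0 ≤ hh d (n+1+1) / hh d (n+1) * bCoef d (n+1) := by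
    have := bCoef_nonneg d (n+1); have := hh_pos d (n+1+1); positivity
  set B := hh d (n+1+1) / hh d (n+1) * bCoef d (n+1)
  set C := hh d (n+1+1) / hh d n * cCoef d (n+1) - 1
  set N2 := ((n:ℝ)+1)^2
  have hN2 : 0 < N2 := by positivity
  refine (abs_sub _ _).trans ((add_le_add_left (abs_add_le _ _) _).trans ?_)
  have f1 : |2 * A * l * uu d (n+1) l| ≤ 2 * (K1/N2) * 1 * |uu d (n+1) l| := by
    rw [abs_mul, abs_mul, abs_mul, abs_two]; gcongr
  have f2 : |B * uu d (n+1) l| ≤ K2/N2 * |uu d (n+1) l| := by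
    rw [abs_mul, abs_of_nonneg hB]; gcongr
  have f3 : |C * uu d n l| ≤ K3/N2 * |uu d n l| := by
    rw [abs_mul]; gcongr
  have f4 : (2*K1+K2+K3)/N2 * (|uu d (n+1) l| + |uu d n l|) = 2 * (K1/N2) * 1 * |uu d (n+1) l| + K2/N2 * |uu d (n+1) l|
    + K3/N2 * |uu d n l| + (K3/N2 * |uu d (n+1) l| + (2*(K1/N2)+K2/N2) * |uu d n l|) := by ring
  rw [f4]
  have : 0 ≤ K3/N2 * |uu d (n+1) l| + (2*(K1/N2)+K2/N2) * |uu d n l| := by positivity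
  linarith


lemma late_aux (u : ℕ → ℝ) (K l σ : ℝ) (hK : 0 ≤ K) (hσ : 0 < σ) (hl : l^2 + σ^2 = 1)
    (h : ∀ n : ℕ, |u (n+2) - 2 * l * u (n+1) + u n| ≤ K / ((n:ℝ)+1)^2 * (|u (n+1)| + |u n|))
    (M : ℕ) (m : ℕ) (hm : M ≤ m) :
    σ * |u (m+1)| ≤ (|u (M+1) - u M| + √(2 - 2*l) * |u M|) * Real.exp (4 * K / (σ * ((M:ℝ)+1))) := by
  set e : ℂ := ⟨l, σ⟩ with he
  have hne : ‖e‖ = 1 := by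
    rw [Complex.norm_eq_sqrt_sq_add_sq]; simp [he, hl]
  set e' : ℂ := ⟨l, -σ⟩ with he'
  have hne' : ‖e'‖ = 1 := by
    rw [Complex.norm_eq_sqrt_sq_add_sq]; simp [he', hl]
  have hee : e' * e = 1 := by
    apply Complex.ext
    · simp [he, he']; nlinarith
    · simp [he, he']; ring
  have hsum : e + e' = 2 * l := by
    apply Complex.ext <;> simp [he, he']; ring
  set w : ℕ → ℂ := fun n => (u (n+1) : ℂ) - e * u n with hw
  have hw1 : ∀ n, σ * |u n| ≤ ‖w n‖ := by
    intro n
    have := Complex.abs_im_le_norm (w n)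
    simp only [hw, he] at this
    simp at this
    rw [abs_of_pos hσ] at this
    simpa [hw, he] using this
  have hw2 : ∀ n, σ * |u (n+1)| ≤ ‖w n‖ := by
    intro n
    have h1 : ‖w n‖ = ‖e' * u (n+1) - u n‖ := by
      have : e' * u (n+1) - u n = e' * w n := by
        simp only [hw]; linear_combination (u n : ℂ) * hee
      rw [this, norm_mul, hne', one_mul]
    rw [h1]
    have := Complex.abs_im_le_norm (e' * u (n+1) - u n)
    simp [he'] at this
    rw [abs_of_pos hσ] at this
    exact this
  have hstep : ∀ n : ℕ, ‖w (n+1)‖ ≤ ‖w n‖ * (1 + 2 * K / (σ * ((n:ℝ)+1)^2)) := by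
    intro n
    have e1 : w (n+1) = e' * w n + ((u (n+2) - 2 * l * u (n+1) + u n : ℝ) : ℂ) := by
      simp only [hw]; push_cast
      linear_combination (- u (n+1) : ℂ) * hsum + (u n : ℂ) * hee
    rw [e1]
    refine (norm_add_le _ _).trans ?_
    rw [norm_mul, hne', one_mul, Complex.norm_real, Real.norm_eq_abs]
    have h1 := h n
    have h2 : |u (n+1)| + |u n| ≤ 2 * ‖w n‖ / σ := by
      rw [le_div_iff₀ hσ]; nlinarith [hw1 n, hw2 n]
    have h3 : K / ((n:ℝ)+1)^2 * (|u (n+1)| + |u n|) ≤ K / ((n:ℝ)+1)^2 * (2 * ‖w n‖ / σ) := by gcongr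
    have h4 : ‖w n‖ * (1 + 2 * K / (σ * ((n:ℝ)+1)^2)) = ‖w n‖ + K / ((n:ℝ)+1)^2 * (2 * ‖w n‖ / σ) := by
      field_simp
    linarith
  have hpot : ∀ k : ℕ, ‖w (M+k)‖ ≤ ‖w M‖ * Real.exp (4 * K / σ * (1/((M:ℝ)+1) - 1/((M:ℝ)+k+1))) := by
    intro k
    induction k with
    | zero => simp
    | succ k ih =>
      have h1 := hstep (M+k)
      rw [← add_assoc]
      refine h1.trans ?_
      have h2 : 1 + 2 * K / (σ * (((M+k:ℕ):ℝ)+1)^2) ≤ Real.exp (4 * K / σ * (1/((M:ℝ)+k+1) - 1/((M:ℝ)+(k+1:ℕ)+1))) := by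
        refine le_trans ?_ (Real.add_one_le_exp _)
        rw [add_comm]
        gcongr
        push_cast
        set x : ℝ := (M:ℝ)+k with hx
        have hx0 : 0 ≤ x := by positivity
        have e1 : (M:ℝ) + (k+1) + 1 = x + 2 := by rw [hx]; ring
        rw [e1]
        have e2 : 4 * K / σ * (1/(x+1) - 1/(x+2)) = 2 * K / σ * (2 / ((x+1)*(x+2))) := by
          field_simp; ring
        have e3 : 2 * K / (σ * (x+1)^2) = 2 * K / σ * (1/(x+1)^2) := by field_simp
        rw [e2, e3]
        refine mul_le_mul_of_nonneg_left ?_ (by positivity)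
        rw [div_le_div_iff₀ (by positivity) (by positivity)]
        nlinarith
      calc _ ≤ _ := mul_le_mul ih h2 (by positivity) (by positivity)
        _ = _ := by
          rw [mul_assoc, ← Real.exp_add]; congr 2; ring
  have hM : ‖w M‖ ≤ |u (M+1) - u M| + √(2 - 2*l) * |u M| := by
    have e1 : w M = ((u (M+1) - u M : ℝ) : ℂ) + (1 - e) * u M := by
      simp only [hw]; push_cast; ring
    rw [e1]
    refine (norm_add_le _ _).trans ?_
    rw [norm_mul, Complex.norm_real, Complex.norm_real, Real.norm_eq_abs, Real.norm_eq_abs]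
    gcongr
    rw [Complex.norm_eq_sqrt_sq_add_sq]
    apply Real.sqrt_le_sqrt
    simp [he]; nlinarith
  obtain ⟨k, rfl⟩ := Nat.exists_eq_add_of_le hm
  refine (hw2 _).trans ((hpot k).trans ?_)
  gcongr
  have : 4 * K / (σ * ((M:ℝ)+1)) = 4 * K / σ * (1/((M:ℝ)+1)) := by field_simp
  rw [this]
  gcongr
  have : 0 ≤ 1 / ((M:ℝ)+k+1) := by positivity
  linarith

lemma pj_start (d : ℕ) (t : ℝ) (ht : 0 < t) (ht2 : t ≤ 2) : ∃ M : ℕ, 1/4 ≤ ((M:ℝ)+1) * √t ∧ ((M:ℝ)+1) * √t ≤ 2 ∧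
    |pj d (M+1) (1-t)| ≤ 5 ∧ |pj d (M+1) (1-t) - pj d M (1-t)| ≤ 3 * √t ∧ ∀ n ≤ M, |pj d n (1-t)| ≤ 5 := by
  have hs : 0 < √t := Real.sqrt_pos.mpr ht
  have hss : √t^2 = t := Real.sq_sqrt ht.le
  by_cases h : t ≤ 1/4
  · have hs2 : √t ≤ 1/2 := by nlinarith
    have h1 : 1 ≤ ⌊1/(2*√t)⌋₊ := by
      rw [Nat.one_le_floor_iff, le_div_iff₀ (by positivity)]; linarith
    obtain ⟨M, hM⟩ := Nat.exists_eq_add_of_le h1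
    have a1 := Nat.floor_le (by positivity : 0 ≤ 1/(2*√t))
    have a2 := Nat.lt_floor_add_one (1/(2*√t))
    rw [hM] at a1 a2
    push_cast at a1 a2
    rw [le_div_iff₀ (by positivity)] at a1
    rw [div_lt_iff₀ (by positivity)] at a2
    have hM0 : (0:ℝ) ≤ M := by positivity
    have key : ∀ n : ℕ, n ≤ M → 4 * t * ((n:ℝ)+1)^2 ≤ 1 := by
      intro n hn
      have hn' : (n:ℝ) ≤ M := by exact_mod_cast hn
      have hn0 : (0:ℝ) ≤ n := by positivity
      have : 2 * √t * ((n:ℝ)+1) ≤ 1 := by nlinarith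
      have h0 : 0 ≤ 2 * √t * ((n:ℝ)+1) := by positivity
      have e : 4 * t * ((n:ℝ)+1)^2 = (2 * √t * ((n:ℝ)+1))^2 := by rw [mul_pow, mul_pow, hss]; ring
      rw [e]; nlinarith
    obtain ⟨b1, b2, b3⟩ := pj_early d t ht.le M (key M le_rfl)
    refine ⟨M, by nlinarith, by nlinarith, ?_, ?_, ?_⟩
    · have := key M le_rfl
      rw [abs_le] at b1 ⊢; constructor <;> linarith
    · have : 4 * t * ((M:ℝ)+1) = 2 * √t * (2 * √t * ((M:ℝ)+1)) := by
        have : 4 * √t^2 * ((M:ℝ)+1) = 2 * √t * (2 * √t * ((M:ℝ)+1)) := by ring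
        rwa [hss] at this
      nlinarith
    · intro n hn
      have := (pj_early d t ht.le n (key n hn)).2.1
      linarith
  · push Not at h
    have h0 := pj_one d (1-t)
    have ⟨h1, h2⟩ := aCoef0_le d
    have h3 : pj d 0 (1-t) = 1 := by rw [pj]
    have hb : 1/2 ≤ √t := by nlinarith
    have hb2 : √t ≤ 3/2 := by nlinarith
    refine ⟨0, by simp; linarith, by simp; linarith, ?_, ?_, ?_⟩
    · rw [h3] at h0
      have : pj d (0+1) (1-t) = 1 - aCoef0 d * t := by simp only [zero_add]; linarith
      rw [this, abs_le]; constructor <;> nlinarith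
    · simp only [zero_add]
      rw [h0, abs_le]
      have : aCoef0 d * t ≤ 3 * √t := by nlinarith
      constructor <;> nlinarith
    · intro n hn
      obtain rfl : n = 0 := by omega
      rw [h3]; norm_num

lemma hh_diff (d M : ℕ) : hh d (M+1) - hh d M ≤ hh d (M+1) * ((d+1) / ((M:ℝ)+1)) := by
  have h1 : hh d M = hh d (M+1) * √(((M:ℝ)+1)/(M+2))^(d+1) := by
    unfold hh
    rw [← mul_pow, Real.sqrt_div (by positivity)]
    push_cast
    have : (M:ℝ)+1+1 = M+2 := by ring
    rw [this]
    congr 1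
    field_simp
  have h2 : ((M:ℝ)+1)/(M+2) ≤ √(((M:ℝ)+1)/(M+2)) := by
    apply Real.le_sqrt_of_sq_le
    have : ((M:ℝ)+1)/(M+2) ≤ 1 := by rw [div_le_one (by positivity)]; linarith
    have : 0 ≤ ((M:ℝ)+1)/(M+2) := by positivity
    nlinarith
  have h3 : 1 - (d+1)/((M:ℝ)+1) ≤ √(((M:ℝ)+1)/(M+2))^(d+1) := by
    refine le_trans ?_ (pow_le_pow_left₀ (by positivity) h2 (d+1))
    have hM0 : (0:ℝ) ≤ M := by positivity
    have hq : (-2:ℝ) ≤ -1/((M:ℝ)+2) := by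
      rw [le_div_iff₀ (by positivity)]; linarith
    have := one_add_mul_le_pow hq (d+1)
    have e : 1 + -1/((M:ℝ)+2) = (M+1)/(M+2) := by field_simp; ring
    rw [e] at this
    refine le_trans ?_ this
    have : (d+1)/((M:ℝ)+2) ≤ (d+1)/((M:ℝ)+1) := by gcongr; norm_num
    push_cast
    have e2 : ((d:ℝ)+1) * (-1/((M:ℝ)+2)) = - ((d+1)/((M:ℝ)+2)) := by ring
    linarith
  have := hh_pos d (M+1)
  rw [h1]
  nlinarith

lemma hh_mono (d M : ℕ) : hh d M ≤ hh d (M+1) := by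
  unfold hh
  gcongr
  push_cast; linarith

set_option maxHeartbeats 1000000 in
theorem pj_dom (d : ℕ) (c0 : ℝ) (hc0 : 0 < c0) : ∃ C : ℝ, 0 ≤ C ∧ ∀ t : ℝ, 0 ≤ t → t ≤ 2 - c0 → ∀ n : ℕ,
    (pj d n (1-t))^2 * √(1 + (n:ℝ)^2 * t)^(d+1) ≤ C := by
  obtain ⟨K, hK, hrec⟩ := uu_rec d
  set s0 := √c0 with hs0
  have hs0p : 0 < s0 := Real.sqrt_pos.mpr hc0
  set D := (3 + 20 * ((d:ℝ)+1) + 10) / s0 * Real.exp (16 * K / s0) with hD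
  have hD0 : 0 < D := by positivity
  refine ⟨25 * 5^(d+1) + D^2 * 5^(d+1), by positivity, fun t ht ht2 n => ?_⟩
  have hsmall : ∀ x y : ℝ, |x| ≤ 5 → y ≤ 5 → 0 ≤ y → x^2 * y^(d+1) ≤ 25 * 5^(d+1) + D^2 * 5^(d+1) := by
    intro x y hx hy hy0
    have h1 : x^2 ≤ 25 := by rw [abs_le] at hx; nlinarith
    have h2 : y^(d+1) ≤ 5^(d+1) := by gcongr
    have : x^2 * y^(d+1) ≤ 25 * 5^(d+1) := by gcongr
    have : 0 ≤ D^2 * 5^(d+1) := by positivity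
    linarith
  rcases ht.eq_or_lt with h0 | hpos
  · subst h0
    have := (pj_early d 0 le_rfl n (by simp)).2.1
    exact hsmall _ _ (by linarith) (by simp) (by positivity)
  obtain ⟨M, m1, m2, m3, m4, m5⟩ := pj_start d t hpos (by linarith)
  have hs : 0 < √t := Real.sqrt_pos.mpr hpos
  have hss : √t^2 = t := Real.sq_sqrt hpos.le
  have hsq : √(1 + (n:ℝ)^2 * t) ≤ 1 + n * √t := by
    rw [Real.sqrt_le_left (by positivity)]
    have : 0 ≤ (n:ℝ) * √t := by positivity
    nlinarith
  by_cases hn : n ≤ M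
  · refine hsmall _ _ (m5 n hn) (hsq.trans ?_) (by positivity)
    have : (n:ℝ) ≤ M := by exact_mod_cast hn
    nlinarith
  push Not at hn
  obtain ⟨m, rfl⟩ : ∃ m, n = m + 1 := ⟨n-1, by omega⟩
  have hMm : M ≤ m := by omega
  set l := 1 - t with hl
  set σ := √(1 - l^2) with hσ
  have hll : 1 - l^2 = t * (2 - t) := by rw [hl]; ring
  have hσp : 0 < 1 - l^2 := by rw [hll]; apply mul_pos hpos; linarith
  have hσ2 : σ^2 = 1 - l^2 := Real.sq_sqrt hσp.le
  have hσs : s0 * √t ≤ σ := by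
    rw [hs0, ← Real.sqrt_mul hc0.le, hσ]
    apply Real.sqrt_le_sqrt
    rw [hll]; nlinarith
  have hσ0 : 0 < σ := Real.sqrt_pos.mpr hσp
  have key := late_aux (fun n => uu d n l) K l σ hK hσ0 (by linarith) 
    (fun n => hrec n l (by rw [abs_le, hl]; constructor <;> linarith)) M m hMm
  set H := hh d (M+1) with hH
  have hHp : 0 < H := hh_pos d _
  have w1 : |uu d (M+1) l - uu d M l| ≤ H * √t * (3 + 20 * ((d:ℝ)+1)) := by
    have e : uu d (M+1) l - uu d M l = H * (pj d (M+1) l - pj d M l) + (H - hh d M) * pj d M l := by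
      unfold uu; ring
    rw [e]
    refine (abs_add_le _ _).trans ?_
    rw [abs_mul, abs_mul, abs_of_pos hHp, abs_of_nonneg (sub_nonneg.mpr (hh_mono d M))]
    have i1 : H * |pj d (M+1) l - pj d M l| ≤ H * (3 * √t) := by gcongr
    have i2 : (H - hh d M) * |pj d M l| ≤ (H * ((d+1) / ((M:ℝ)+1))) * 5 :=
      mul_le_mul (hh_diff d M) (m5 M le_rfl) (abs_nonneg _) (by positivity)
    have i3 : (d+1) / ((M:ℝ)+1) ≤ (d+1) * (4 * √t) := by
      rw [div_le_iff₀ (by positivity)]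
      have : 0 ≤ (d:ℝ) + 1 := by positivity
      nlinarith
    have i4 : (H * ((d+1) / ((M:ℝ)+1))) * 5 ≤ H * ((d+1) * (4 * √t)) * 5 := by gcongr
    nlinarith
  have w2 : √(2 - 2*l) * |uu d M l| ≤ H * √t * 10 := by
    have j1 : √(2 - 2*l) ≤ 2 * √t := by
      rw [Real.sqrt_le_left (by positivity)]; rw [mul_pow, hss, hl]; linarith
    have j2 : |uu d M l| ≤ H * 5 := by
      unfold uu
      rw [abs_mul, abs_of_pos (hh_pos d M)]
      exact mul_le_mul (hh_mono d M) (m5 M le_rfl) (abs_nonneg _) hHp.le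
    calc _ ≤ (2 * √t) * (H * 5) := mul_le_mul j1 j2 (abs_nonneg _) (by positivity)
      _ = _ := by ring
  have w3 : Real.exp (4 * K / (σ * ((M:ℝ)+1))) ≤ Real.exp (16 * K / s0) := by
    rw [Real.exp_le_exp]
    have : s0 / 4 ≤ σ * ((M:ℝ)+1) := by
      have : s0 * √t * ((M:ℝ)+1) ≤ σ * ((M:ℝ)+1) := by gcongr
      nlinarith
    calc 4 * K / (σ * ((M:ℝ)+1)) ≤ 4 * K / (s0 / 4) := by gcongr
      _ = _ := by field_simp; ring
  have w4 : |uu d (m+1) l| ≤ D * H := by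
    have : σ * |uu d (m+1) l| ≤ H * √t * (3 + 20 * ((d:ℝ)+1) + 10) * Real.exp (16 * K / s0) := by
      refine key.trans ?_
      gcongr
      linarith
    have : s0 * √t * |uu d (m+1) l| ≤ H * √t * (3 + 20 * ((d:ℝ)+1) + 10) * Real.exp (16 * K / s0) :=
      le_trans (by gcongr) this
    have e : H * √t * (3 + 20 * ((d:ℝ)+1) + 10) * Real.exp (16 * K / s0) = s0 * √t * (D * H) := by
      rw [hD]; field_simp
    rw [e] at this
    exact le_of_mul_le_mul_left this (by positivity)
  have hm := hh_pos d (m+1)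
  have w5 : (pj d (m+1) l)^2 ≤ D^2 * (H / hh d (m+1))^2 := by
    rw [← mul_pow]
    apply sq_le_sq'
    · have := (abs_le.mp w4).1
      unfold uu at this
      rw [mul_div_assoc', neg_le, le_div_iff₀ hm]; linarith
    · have := (abs_le.mp w4).2
      unfold uu at this
      rw [mul_div_assoc', le_div_iff₀ hm]; linarith
  have w6 : (H / hh d (m+1))^2 = (((M:ℝ)+2)/(m+2))^(d+1) := by
    rw [hH]; unfold hh
    rw [← div_pow, ← pow_mul, mul_comm (d+1) 2, pow_mul, ← Real.sqrt_div (by positivity), Real.sq_sqrt (by positivity)]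
    congr 2 <;> push_cast <;> ring
  rw [w6] at w5
  have hMm' : (M:ℝ) ≤ m := by exact_mod_cast hMm
  have hM0 : (0:ℝ) ≤ M := by positivity
  have w7 : ((M:ℝ)+2)/(m+2) * √(1 + ((m+1:ℕ):ℝ)^2 * t) ≤ 5 := by
    calc _ ≤ ((M:ℝ)+2)/(m+2) * (1 + ((m+1:ℕ):ℝ) * √t) := by gcongr
      _ ≤ 5 := by
        rw [div_mul_eq_mul_div, div_le_iff₀ (by positivity)]
        push_cast
        have : ((M:ℝ)+2) * √t ≤ 4 := by nlinarith
        have : (((M:ℝ)+2) * √t) * ((m:ℝ)+1) ≤ 4 * ((m:ℝ)+1) := by gcongr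
        nlinarith
  calc _ ≤ D^2 * (((M:ℝ)+2)/(m+2))^(d+1) * √(1 + ((m+1:ℕ):ℝ)^2 * t)^(d+1) := by gcongr
    _ = D^2 * (((M:ℝ)+2)/(m+2) * √(1 + ((m+1:ℕ):ℝ)^2 * t))^(d+1) := by
      rw [mul_assoc, ← mul_pow]
    _ ≤ D^2 * 5^(d+1) := by gcongr
    _ ≤ _ := by
      have : (0:ℝ) ≤ 25 * 5^(d+1) := by positivity
      linarith


def asc (x : ℝ) (k : ℕ) : ℝ := ∏ j ∈ Finset.range k, (x + j)
def dsc (x : ℝ) (k : ℕ) : ℝ := ∏ j ∈ Finset.range k, (x - j)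

lemma asc_succ (x : ℝ) (k : ℕ) : asc x (k+1) = asc x k * (x + k) := by
  unfold asc; rw [Finset.prod_range_succ]
lemma asc_succ' (x : ℝ) (k : ℕ) : asc x (k+1) = x * asc (x+1) k := by
  unfold asc; rw [Finset.prod_range_succ', mul_comm]; simp
  left; apply Finset.prod_congr rfl; intros; ring
lemma dsc_succ (x : ℝ) (k : ℕ) : dsc x (k+1) = dsc x k * (x - k) := by
  unfold dsc; rw [Finset.prod_range_succ]
lemma dsc_succ' (x : ℝ) (k : ℕ) : dsc x (k+1) = x * dsc (x-1) k := by
  unfold dsc; rw [Finset.prod_range_succ', mul_comm]; simp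
  left; apply Finset.prod_congr rfl; intros; ring
@[simp] lemma asc_zero (x : ℝ) : asc x 0 = 1 := by simp [asc]
@[simp] lemma dsc_zero (x : ℝ) : dsc x 0 = 1 := by simp [dsc]

lemma asc_pos (x : ℝ) (hx : 0 < x) (k : ℕ) : 0 < asc x k := by
  unfold asc; apply Finset.prod_pos; intros; positivity

def TT (d n k : ℕ) : ℝ := dsc n k * asc (n + d/2 + 1) k / (asc (d/2 + 1) k * k.factorial)

@[simp] lemma TT_zero (d n : ℕ) : TT d n 0 = 1 := by simp [TT]

lemma TT_succ (d n k : ℕ) : TT d n (k+1) = TT d n k * (((n:ℝ) - k) * (n + d/2 + 1 + k) / ((d/2+1+k) * (k+1))) := by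
  unfold TT
  rw [dsc_succ, asc_succ, asc_succ, Nat.factorial_succ]
  have := asc_pos (d/2+1) (by positivity) k
  push_cast
  field_simp

lemma TT_rec (d n k : ℕ) : TT d (n+2) (k+1) = TT d (n+1) (k+1) + cCoef d (n+1) * (TT d (n+1) (k+1) - TT d n (k+1))
    + 2 * aCoef d (n+1) * TT d (n+1) k := by
  set D := dsc ((n:ℝ)+1) k with hD
  set R := asc ((n:ℝ)+1+d/2+1) k with hR
  have Zp := asc_pos (d/2+1) (by positivity) k
  set Z := asc ((d:ℝ)/2+1) k with hZ
  have d1 : dsc (((n+2:ℕ)):ℝ) (k+1) = (n+2) * D := by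
    rw [dsc_succ']; push_cast; rw [hD]; congr 2; ring
  have d2 : dsc (((n+1:ℕ)):ℝ) (k+1) = D * (n+1-k) := by
    rw [dsc_succ]; push_cast; rfl
  have d3 : dsc (n:ℝ) (k+1) = D * (n+1-k) * (n-k) / (n+1) := by
    have h1 := dsc_succ' ((n:ℝ)+1) (k+1)
    rw [dsc_succ, dsc_succ] at h1
    rw [add_sub_cancel_right] at h1
    rw [eq_div_iff (by positivity)]
    push_cast at h1
    rw [hD]; linear_combination -h1
  have a1 : asc (((n+2:ℕ):ℝ)+d/2+1) (k+1) = R * (n+1+d/2+1+k) * (n+1+d/2+1+k+1) / (n+1+d/2+1) := by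
    have h1 := asc_succ' ((n:ℝ)+1+d/2+1) (k+1)
    rw [asc_succ, asc_succ] at h1
    rw [eq_div_iff (by positivity)]
    push_cast at h1 ⊢
    have e : (n:ℝ)+2+d/2+1 = n+1+d/2+1+1 := by ring
    rw [e, hR]; linear_combination -h1
  have a2 : asc (((n+1:ℕ):ℝ)+d/2+1) (k+1) = R * (n+1+d/2+1+k) := by
    rw [asc_succ]; push_cast; rfl
  have a3 : asc ((n:ℝ)+d/2+1) (k+1) = (n+d/2+1) * R := by
    rw [asc_succ', hR]; congr 2; ring
  unfold TT
  rw [d1, d2, d3, a1, a2, a3, asc_succ, Nat.factorial_succ]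
  push_cast
  rw [← hD, ← hR, ← hZ]
  unfold aCoef cCoef
  push_cast
  field_simp
  ring

lemma TT_big (d n k : ℕ) (h : n < k) : TT d n k = 0 := by
  unfold TT
  have : dsc (n:ℝ) k = 0 := by
    unfold dsc; apply Finset.prod_eq_zero (Finset.mem_range.mpr h); simp
  rw [this]; simp

lemma pj_closed (d : ℕ) (t : ℝ) : ∀ n N : ℕ, n < N → pj d n (1-t) = ∑ k ∈ Finset.range N, TT d n k * (-t/2)^k := by
  intro n
  induction n using Nat.strong_induction_on with
  | _ n ih =>
    intro N hN
    obtain ⟨M, rfl⟩ : ∃ M, N = M + 1 := ⟨N-1, by omega⟩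
    match n, ih, hN with
    | 0, ih, hN =>
      rw [pj, Finset.sum_range_succ']
      rw [Finset.sum_eq_zero]
      · simp
      · intro k hk; rw [TT_big d 0 (k+1) (by omega)]; simp
    | 1, ih, hN =>
      have h1 := pj_one d (1-t)
      have h0 : pj d 0 (1-t) = 1 := by rw [pj]
      obtain ⟨L, rfl⟩ : ∃ L, M = L + 1 := ⟨M-1, by omega⟩
      rw [Finset.sum_range_succ', Finset.sum_range_succ', Finset.sum_eq_zero]
      · rw [h0] at h1
        rw [sub_eq_iff_eq_add.mp h1, TT_succ]
        unfold aCoef0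
        simp
        field_simp
        ring
      · intro k hk; rw [TT_big d 1 (k+1+1) (by omega)]; simp
    | (n+2), ih, hN =>
      have h1 := pj_diff d n (1-t)
      have e1 := ih (n+1) (by omega) (M+1) (by omega)
      have e1' := ih (n+1) (by omega) M (by omega)
      have e2 := ih n (by omega) (M+1) (by omega)
      have : pj d (n+2) (1-t) = pj d (n+1) (1-t) + cCoef d (n+1) * (pj d (n+1) (1-t) - pj d n (1-t))
          + 2 * aCoef d (n+1) * (-t/2) * pj d (n+1) (1-t) := by linear_combination h1
      rw [this]
      nth_rewrite 3 [e1']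
      rw [e1, e2, Finset.sum_range_succ', Finset.sum_range_succ', Finset.sum_range_succ']
      simp only [TT_zero, pow_zero, mul_one]
      have e3 : ∀ k ∈ Finset.range M, TT d (n+2) (k+1) * (-t/2)^(k+1) = TT d (n+1) (k+1) * (-t/2)^(k+1) +
          cCoef d (n+1) * (TT d (n+1) (k+1) * (-t/2)^(k+1) - TT d n (k+1) * (-t/2)^(k+1)) +
          2 * aCoef d (n+1) * (-t/2) * (TT d (n+1) k * (-t/2)^k) := by
        intro k _; rw [TT_rec]; ring
      rw [Finset.sum_congr rfl e3, Finset.sum_add_distrib, Finset.sum_add_distrib, ← Finset.mul_sum, ← Finset.mul_sum,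
        Finset.sum_sub_distrib]
      ring

def PhiJ (d : ℕ) (τ : ℝ) : ℝ := ∑' k : ℕ, (-τ/2)^k / (asc (d/2+1) k * k.factorial)

lemma pj_tsum (d n : ℕ) (t : ℝ) : pj d n (1-t) = ∑' k : ℕ, TT d n k * (-t/2)^k := by
  rw [tsum_eq_sum (s := Finset.range (n+1)), ← pj_closed d t n (n+1) (by omega)]
  intro k hk
  rw [TT_big, zero_mul]
  simpa using hk

lemma TT_bound (d n k : ℕ) (hn : 1 ≤ n) : |TT d n k| ≤ (((n:ℝ)^2) * (d/2+3))^k / k.factorial := by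
  induction k with
  | zero => simp
  | succ k ih =>
    by_cases hk : n < k + 1
    · rw [TT_big _ _ _ hk]; simp; positivity
    · have hk' : (k:ℝ) + 1 ≤ n := by exact_mod_cast (not_lt.mp hk)
      have hk0 : (0:ℝ) ≤ k := by positivity
      have hd0 : (0:ℝ) ≤ d := by positivity
      have hn1 : (1:ℝ) ≤ n := by exact_mod_cast hn
      rw [TT_succ, abs_mul]
      have h1 : |((n:ℝ) - k) * (n + d/2 + 1 + k) / ((d/2+1+k) * (k+1))| ≤ ((n:ℝ)^2 * (d/2+3)) / (k+1) := by
        rw [abs_of_nonneg (by apply div_nonneg; apply mul_nonneg; linarith; positivity; positivity)]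
        rw [← div_div]
        gcongr
        rw [div_le_iff₀ (by positivity)]
        calc ((n:ℝ) - k) * (n + d/2 + 1 + k) ≤ n * (n * (d/2+3)) := by
              apply mul_le_mul
              · linarith
              · nlinarith
              · positivity
              · positivity
          _ = (n:ℝ)^2 * (d/2+3) * 1 := by ring
          _ ≤ _ := by gcongr; linarith
      calc _ ≤ (((n:ℝ)^2) * (d/2+3))^k / k.factorial * (((n:ℝ)^2 * (d/2+3)) / (k+1)) := by gcongr
        _ = _ := by rw [Nat.factorial_succ, pow_succ ((n:ℝ)^2 * ((d:ℝ)/2+3)) k, div_mul_div_comm]; push_cast; rw [mul_comm (k.factorial : ℝ)]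

lemma tendsto_TT (d : ℕ) (t : ℕ → ℝ) (τ : ℝ) (h : Tendsto (fun n : ℕ => (n:ℝ)^2 * t n) atTop (𝓝 τ)) (k : ℕ) :
    Tendsto (fun n => TT d n k * (-(t n)/2)^k) atTop (𝓝 ((-τ/2)^k / (asc (d/2+1) k * k.factorial))) := by
  induction k with
  | zero => simp
  | succ k ih =>
    have hc : ∀ c : ℝ, Tendsto (fun n : ℕ => c / (n:ℝ)) atTop (𝓝 0) := fun c => tendsto_const_div_atTop_nhds_zero_nat c
    have h1 : Tendsto (fun n : ℕ => (1 - (k:ℝ)/n) * (1 + ((d:ℝ)/2+1+k)/n) / ((d/2+1+k)*(k+1)) * (-((n:ℝ)^2 * t n)/2)) atTop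
        (𝓝 ((1 - 0) * (1+0) / (((d:ℝ)/2+1+k)*(k+1)) * (-τ/2))) := by
      exact ((((tendsto_const_nhds.sub (hc _)).mul (tendsto_const_nhds.add (hc _))).div_const _).mul (h.neg.div_const 2))
    have h2 := ih.mul h1
    have e : (-τ/2)^k / (asc ((d:ℝ)/2+1) k * k.factorial) * ((1 - 0) * (1+0) / (((d:ℝ)/2+1+k)*(k+1)) * (-τ/2)) =
      (-τ/2)^(k+1) / (asc ((d:ℝ)/2+1) (k+1) * (k+1).factorial) := by
      rw [asc_succ, Nat.factorial_succ]
      have := asc_pos (d/2+1) (by positivity) k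
      push_cast
      field_simp
      ring
    rw [e] at h2
    refine h2.congr' ?_
    filter_upwards [eventually_ge_atTop 1] with n hn
    have hn0 : (0:ℝ) < n := by exact_mod_cast hn
    rw [TT_succ]
    field_simp
    ring

theorem pj_limit (d : ℕ) (t : ℕ → ℝ) (τ : ℝ) (h : Tendsto (fun n : ℕ => (n:ℝ)^2 * t n) atTop (𝓝 τ)) :
    Tendsto (fun n => pj d n (1 - t n)) atTop (𝓝 (PhiJ d τ)) := by
  simp only [pj_tsum]
  unfold PhiJ
  refine tendsto_tsum_of_dominated_convergence (bound := fun k => ((d/2+3) * ((|τ|+1)/2))^k / k.factorial)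
    (Real.summable_pow_div_factorial _) (fun k => tendsto_TT d t τ h k) ?_
  have hb : ∀ᶠ n : ℕ in atTop, |(n:ℝ)^2 * t n| ≤ |τ| + 1 := by
    have := h.abs.eventually (gt_mem_nhds (lt_add_one |τ|))
    filter_upwards [this] with n hn using hn.le
  filter_upwards [hb, eventually_ge_atTop 1] with n hn h1 k
  rw [norm_mul, norm_pow, Real.norm_eq_abs, Real.norm_eq_abs]
  have hn0 : (0:ℝ) < n := by exact_mod_cast h1
  have e : |(-(t n)/2)| = |t n|/2 := by rw [abs_div, abs_neg, abs_two]
  rw [e]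
  rw [abs_mul, abs_of_nonneg (by positivity : (0:ℝ) ≤ (n:ℝ)^2)] at hn
  calc _ ≤ (((n:ℝ)^2) * (d/2+3))^k / k.factorial * (|t n|/2)^k := by gcongr; exact TT_bound d n k h1
    _ = ((d/2+3) * ((n^2 * |t n|)/2))^k / k.factorial := by rw [div_mul_eq_mul_div, ← mul_pow]; congr 2; ring
    _ ≤ _ := by gcongr


section Planch
open FourierTransform SchwartzMap
open scoped ContDiff ENNReal InnerProductSpace

lemma fourier_self_adj {E : Type*} [NormedAddCommGroup E] [InnerProductSpace ℝ E] [FiniteDimensional ℝ E]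
    [MeasurableSpace E] [BorelSpace E] (f g : E → ℂ) (hf : Integrable f) (hg : Integrable g) :
    ∫ x, 𝓕 g x • f x = ∫ x, g x • 𝓕 f x := by
  simpa using! (VectorFourier.integral_fourierIntegral_smul_eq_flip (L := innerₗ E)
    (μ := volume) (ν := volume) continuous_fourierChar continuous_inner hg hf)

theorem planch_L1L2 {E : Type*} [NormedAddCommGroup E] [InnerProductSpace ℝ E] [FiniteDimensional ℝ E]
    [MeasurableSpace E] [BorelSpace E] (f : E → ℂ) (hf : Integrable f) (hf2 : MemLp f 2) :
    (∫ x, ‖𝓕 f x‖^2) = ∫ x, ‖f x‖^2 := by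
  have key : (𝓕 (hf2.toLp f) : Lp (α := E) ℂ 2 volume) =ᵐ[volume] 𝓕 f := by
    refine ae_eq_of_integral_contDiff_smul_eq ?_ ?_ ?_
    · exact (Lp.memLp _).locallyIntegrable (by norm_num)
    · exact (VectorFourier.fourierIntegral_continuous continuous_fourierChar (L := innerₗ E) continuous_inner hf).locallyIntegrable
    · intro g hg hgc
      have hg' : ContDiff ℝ ∞ (fun x => (g x : ℂ)) := Complex.ofRealCLM.contDiff.comp hg
      have hgc' : HasCompactSupport (fun x => (g x : ℂ)) := hgc.comp_left (g := fun t : ℝ => (t : ℂ)) (by simp)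
      let G : 𝓢(E, ℂ) := hgc'.toSchwartzMap hg'
      have h := congrArg (fun T => T G) (Lp.fourier_toTemperedDistribution_eq (hf2.toLp f))
      simp only [TemperedDistribution.fourier_apply, Lp.toTemperedDistribution_apply] at h
      have h1 : ∀ x, (G x : ℂ) = (g x : ℂ) := fun x => rfl
      have h2 : ∀ x, (𝓕 G) x = 𝓕 (fun x => (g x : ℂ)) x := fun x => by
        rw [SchwartzMap.fourier_coe]; rfl
      simp only [h1, h2] at h
      have h3 : ∫ x, 𝓕 (fun x => (g x : ℂ)) x • (hf2.toLp f) x = ∫ x, 𝓕 (fun x => (g x : ℂ)) x • f x := by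
        apply integral_congr_ae
        filter_upwards [hf2.coeFn_toLp] with x hx
        rw [hx]
      rw [h3, fourier_self_adj _ _ hf (by exact G.integrable)] at h
      simpa using h.symm
  have h1 : ‖(𝓕 (hf2.toLp f) : Lp (α := E) ℂ 2 volume)‖^2 = ‖hf2.toLp f‖^2 := by rw [Lp.norm_fourier_eq]
  have h2 : ∀ F : Lp (α := E) ℂ 2 volume, ‖F‖^2 = ∫ x, ‖F x‖^2 := by
    intro F
    rw [← real_inner_self_eq_norm_sq, MeasureTheory.L2.inner_def]
    simp
  rw [h2, h2] at h1
  calc _ = ∫ x, ‖(𝓕 (hf2.toLp f) : Lp (α := E) ℂ 2 volume) x‖^2 := by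
        apply integral_congr_ae; filter_upwards [key] with x hx; rw [hx]
    _ = _ := h1
    _ = _ := by apply integral_congr_ae; filter_upwards [hf2.coeFn_toLp] with x hx; rw [hx]
end Planch


section Mom
open scoped InnerProductSpace

lemma ball_scale {d : ℕ} (y : EuclideanSpace ℝ (Fin d)) (k : ℕ) (r : ℝ) (hr : 0 < r) :
    ∫ x in Metric.ball (0 : EuclideanSpace ℝ (Fin d)) r, ⟪y, x⟫_ℝ^(2*k)
      = r^(2*k+d) * ∫ x in Metric.ball (0 : EuclideanSpace ℝ (Fin d)) 1, ⟪y, x⟫_ℝ^(2*k) := by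
  have h := Measure.setIntegral_comp_smul_of_pos (volume : Measure (EuclideanSpace ℝ (Fin d)))
    (fun x => ⟪y, x⟫_ℝ^(2*k)) (Metric.ball (0 : EuclideanSpace ℝ (Fin d)) 1) hr
  rw [smul_unitBall_of_pos hr] at h
  simp only [inner_smul_right, mul_pow, finrank_euclideanSpace, Fintype.card_fin, smul_eq_mul, integral_const_mul] at h
  rw [pow_add, mul_comm (r^(2*k)), mul_assoc, h]
  field_simp

lemma gauss_ball_moment {d : ℕ} (y : EuclideanSpace ℝ (Fin d)) (k : ℕ) :
    ∫ x : EuclideanSpace ℝ (Fin d), ⟪y, x⟫_ℝ^(2*k) * exp (-‖x‖^2) =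
      Real.Gamma (k + d/2 + 1) * ∫ x in Metric.ball (0 : EuclideanSpace ℝ (Fin d)) 1, ⟪y, x⟫_ℝ^(2*k) := by
  set m := ∫ x in Metric.ball (0 : EuclideanSpace ℝ (Fin d)) 1, ⟪y, x⟫_ℝ^(2*k) with hm
  let F : EuclideanSpace ℝ (Fin d) → ℝ → ℝ := fun x u =>
    if ‖x‖^2 < u then ⟪y, x⟫_ℝ^(2*k) * exp (-u) else 0
  have hmeas : Measurable (Function.uncurry F) := by
    apply Measurable.ite
    · exact measurableSet_lt (by fun_prop) (by fun_prop)
    · fun_prop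
    · fun_prop
  have hFnn : ∀ x u, 0 ≤ F x u := by
    intro x u; simp only [F]; split_ifs
    · rw [pow_mul]; positivity
    · exact le_rfl
  have hx : ∀ u, (fun x => F x u) = (Metric.ball (0 : EuclideanSpace ℝ (Fin d)) (√u)).indicator
      (fun x => ⟪y, x⟫_ℝ^(2*k) * exp (-u)) := by
    intro u; ext x
    simp only [F, Set.indicator, Metric.mem_ball, dist_zero_right]
    congr 1
    rw [Real.lt_sqrt (norm_nonneg _)]
  have hIu : ∀ u, Integrable (fun x => F x u) := by
    intro u
    rw [hx, integrable_indicator_iff measurableSet_ball]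
    apply (ContinuousOn.integrableOn_compact (isCompact_closedBall (0 : EuclideanSpace ℝ (Fin d)) (√u)) _).mono_set Metric.ball_subset_closedBall
    fun_prop
  have hSu : ∀ u, ∫ x, F x u = (Set.Ioi 0).indicator (fun u => exp (-u) * u^((k:ℝ) + d/2 + 1 - 1) * m) u := by
    intro u
    rw [hx, integral_indicator measurableSet_ball]
    by_cases hu : 0 < u
    · rw [Set.indicator_of_mem (by exact hu), integral_mul_const, ball_scale _ _ _ (Real.sqrt_pos.2 hu), ← hm]
      have : √u ^ (2*k+d) = u^((k:ℝ) + d/2 + 1 - 1) := by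
        rw [Real.sqrt_eq_rpow, ← Real.rpow_natCast, ← Real.rpow_mul hu.le]
        congr 1; push_cast; ring
      rw [this]; ring
    · rw [Set.indicator_of_notMem (by simpa using hu)]
      rw [Real.sqrt_eq_zero_of_nonpos (not_lt.1 hu)]
      simp
  have hI : Integrable (Function.uncurry F) (volume.prod volume) := by
    rw [integrable_prod_iff' hmeas.aestronglyMeasurable]
    refine ⟨Eventually.of_forall fun u => hIu u, ?_⟩
    have : (fun u => ∫ x, ‖Function.uncurry F (x, u)‖) = (Set.Ioi 0).indicator (fun u => exp (-u) * u^((k:ℝ) + d/2 + 1 - 1) * m) := by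
      ext u; rw [← hSu]
      apply integral_congr_ae; apply Eventually.of_forall; intro x
      exact Real.norm_of_nonneg (hFnn x u)
    rw [this, integrable_indicator_iff measurableSet_Ioi]
    exact (Real.GammaIntegral_convergent (by positivity)).mul_const m
  have hsw := integral_integral_swap hI
  calc _ = ∫ x, ∫ u, F x u := by
        congr 1; ext x
        have : F x = (Set.Ioi (‖x‖^2)).indicator (fun u => ⟪y, x⟫_ℝ^(2*k) * exp (-u)) := by
          ext u; simp only [F, Set.indicator, Set.mem_Ioi]
        rw [this, integral_indicator measurableSet_Ioi, integral_const_mul, integral_exp_neg_Ioi]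
    _ = _ := hsw
    _ = _ := by
      simp_rw [hSu]
      rw [integral_indicator measurableSet_Ioi, integral_mul_const, Real.Gamma_eq_integral (by positivity)]

lemma gauss_1d (k : ℕ) : ∫ t : ℝ, t^(2*k) * exp (-t^2) = Real.Gamma (k + 1/2) := by
  have h := integral_comp_abs (f := fun t => t^(2*k) * exp (-t^2))
  simp only [sq_abs, Even.pow_abs (even_two_mul k)] at h
  rw [h]
  have h2 := integral_rpow_mul_exp_neg_rpow (p := 2) (q := 2*k) (by norm_num) (by have : (0:ℝ) ≤ 2 * k := by positivity
                                                                                  linarith)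
  have h3 : ∫ x in Set.Ioi (0:ℝ), x^(2*k) * exp (-x^2) = ∫ x in Set.Ioi (0:ℝ), x^(2*(k:ℝ)) * exp (-x^(2:ℝ)) := by
    apply setIntegral_congr_fun measurableSet_Ioi
    intro x hx
    simp only
    rw [← Real.rpow_natCast, ← Real.rpow_natCast]; push_cast; rfl
  rw [h3, h2]
  rw [show (2 * (k:ℝ) + 1)/2 = k + 1/2 by ring]; ring

lemma gauss_coord {d : ℕ} (i0 : Fin d) (k : ℕ) :
    ∫ x : EuclideanSpace ℝ (Fin d), (x i0)^(2*k) * exp (-‖x‖^2) = Real.Gamma (k + 1/2) * √π^(d-1) := by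
  rw [← (EuclideanSpace.volume_preserving_symm_measurableEquiv_toLp (Fin d)).symm.integral_comp (MeasurableEquiv.measurableEmbedding _)]
  have h : ∀ x : Fin d → ℝ, ((MeasurableEquiv.toLp 2 (Fin d → ℝ)) x) i0 ^ (2*k) * exp (-‖(MeasurableEquiv.toLp 2 (Fin d → ℝ)) x‖^2)
      = ∏ i, (fun (i : Fin d) (t : ℝ) => (if i = i0 then t^(2*k) else 1) * exp (-t^2)) i (x i) := by
    intro x
    simp only [Finset.prod_mul_distrib, Finset.prod_ite_eq', Finset.mem_univ, if_true]
    rw [← Real.exp_sum, EuclideanSpace.norm_sq_eq]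
    simp
  simp only [MeasurableEquiv.symm_symm]
  simp_rw [h]
  rw [integral_fintype_prod_volume_eq_prod (fun (i : Fin d) (t : ℝ) => (if i = i0 then t^(2*k) else 1) * exp (-t^2))]
  rw [← Finset.mul_prod_erase _ _ (Finset.mem_univ i0)]
  simp only [if_true]
  rw [gauss_1d]
  congr 1
  rw [Finset.prod_congr rfl (g := fun _ => √π)]
  · simp
  · intro i hi
    simp only [if_neg (Finset.ne_of_mem_erase hi)]
    simpa using integral_gaussian 1

lemma gauss_dir {d : ℕ} (i0 : Fin d) (y : EuclideanSpace ℝ (Fin d)) (k : ℕ) :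
    ∫ x : EuclideanSpace ℝ (Fin d), ⟪y, x⟫_ℝ^(2*k) * exp (-‖x‖^2) = ‖y‖^(2*k) * (Real.Gamma (k + 1/2) * √π^(d-1)) := by
  set w : EuclideanSpace ℝ (Fin d) := ‖y‖ • EuclideanSpace.single i0 (1:ℝ) with hw
  have hn : ‖y‖ = ‖w‖ := by rw [hw, norm_smul]; simp
  set R := (ℝ ∙ (y - w))ᗮ.reflection with hR
  have hRy : R y = w := Submodule.reflection_sub hn
  rw [← (R.measurePreserving).integral_comp (R.toHomeomorph.measurableEmbedding)]
  rw [← gauss_coord i0, ← integral_const_mul]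
  congr 1; ext x
  have : ⟪y, R x⟫_ℝ = ‖y‖ * x i0 := by
    rw [← R.inner_map_map, hRy, hR, Submodule.reflection_reflection, hw, inner_smul_left, EuclideanSpace.inner_single_left]
    simp
  rw [this, R.norm_map]; ring

lemma gamma_half (k : ℕ) : Real.Gamma (k + 1/2) * (4^k * k.factorial) = (2*k).factorial * √π := by
  induction k with
  | zero => have := Real.Gamma_one_half_eq; norm_num at this ⊢; exact this
  | succ k ih =>
    have : ((k+1 : ℕ):ℝ) + 1/2 = (k + 1/2) + 1 := by push_cast; ring
    rw [this, Real.Gamma_add_one (by positivity), show 2*(k+1) = (2*k+1)+1 by ring, Nat.factorial_succ, Nat.factorial_succ, Nat.factorial_succ]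
    push_cast
    linear_combination (2 * (k:ℝ) + 1) * (2 * k + 2) * ih

lemma gamma_asc (a : ℝ) (ha : 0 < a) (k : ℕ) : Real.Gamma (k + a) = Real.Gamma a * asc a k := by
  induction k with
  | zero => simp [asc]
  | succ k ih =>
    rw [show ((k+1:ℕ):ℝ) + a = (k + a) + 1 by push_cast; ring, Real.Gamma_add_one (by positivity), ih, asc_succ]; ring

def VB (d : ℕ) : ℝ := √π^d / Real.Gamma (d/2+1)

lemma VB_pos (d : ℕ) : 0 < VB d := by
  unfold VB
  have := Real.Gamma_pos_of_pos (show (0:ℝ) < d/2+1 by positivity)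
  positivity

lemma ball_moment {d : ℕ} (i0 : Fin d) (y : EuclideanSpace ℝ (Fin d)) (k : ℕ) :
    ∫ x in Metric.ball (0 : EuclideanSpace ℝ (Fin d)) 1, ⟪y, x⟫_ℝ^(2*k)
      = VB d * (2*k).factorial * ((‖y‖^2/2/2)^k / (asc (d/2+1) k * k.factorial)) := by
  have h := gauss_ball_moment y k
  rw [gauss_dir i0, add_assoc, gamma_asc ((d:ℝ)/2+1) (by positivity)] at h
  have hG := Real.Gamma_pos_of_pos (show (0:ℝ) < d/2+1 by positivity)
  have ha := asc_pos ((d:ℝ)/2+1) (by positivity) k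
  have hg := gamma_half k
  have hd : √π^d = √π^(d-1) * √π := by rw [← pow_succ]; congr 1; have := i0.pos; omega
  set M := ∫ x in Metric.ball (0 : EuclideanSpace ℝ (Fin d)) 1, ⟪y, x⟫_ℝ^(2*k)
  have h4 : (‖y‖^2/2/2)^k = ‖y‖^(2*k) / 4^k := by rw [pow_mul, ← div_pow]; congr 1; ring
  rw [VB, hd, h4]
  have hk : (0:ℝ) < k.factorial := by positivity
  have h5 : M = ‖y‖^(2*k) * (Real.Gamma (k + 1/2) * √π^(d-1)) / (Real.Gamma (d/2+1) * asc (d/2+1) k) := by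
    rw [h, mul_div_cancel_left₀ _ (mul_pos hG ha).ne.symm]
  rw [h5]
  have h6 : Real.Gamma (k + 1/2) = (2*k).factorial * √π / (4^k * k.factorial) := by
    rw [← hg]; field_simp
  rw [h6]
  field_simp

lemma ball_vol {d : ℕ} (i0 : Fin d) : (volume : Measure (EuclideanSpace ℝ (Fin d))).real (Metric.ball 0 1) = VB d := by
  have h := ball_moment i0 0 0
  simpa [asc] using h

lemma asc_ge_one (d k : ℕ) : 1 ≤ asc ((d:ℝ)/2+1) k := by
  induction k with
  | zero => simp [asc]
  | succ k ih =>
    rw [asc_succ]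
    have : (1:ℝ) ≤ d/2+1+k := by have : (0:ℝ) ≤ d/2 + k := by positivity
                                 linarith
    nlinarith

lemma PhiJ_ball {d : ℕ} (i0 : Fin d) (y : EuclideanSpace ℝ (Fin d)) :
    ∫ x in Metric.ball (0 : EuclideanSpace ℝ (Fin d)) 1, cos ⟪y, x⟫_ℝ = VB d * PhiJ d (‖y‖^2/2) := by
  have hI : ∀ k : ℕ, IntegrableOn (fun x => ⟪y, x⟫_ℝ^(2*k)) (Metric.ball (0 : EuclideanSpace ℝ (Fin d)) 1) := by
    intro k
    apply (ContinuousOn.integrableOn_compact (isCompact_closedBall (0 : EuclideanSpace ℝ (Fin d)) 1) _).mono_set Metric.ball_subset_closedBall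
    fun_prop
  have h := hasSum_integral_of_summable_integral_norm (μ := volume.restrict (Metric.ball (0 : EuclideanSpace ℝ (Fin d)) 1))
    (F := fun (k : ℕ) x => (-1)^k * ⟪y, x⟫_ℝ^(2*k) / (2*k).factorial) (fun k => ((hI k).const_mul _).div_const _) ?_
  · simp_rw [← Real.cos_eq_tsum] at h
    rw [← h.tsum_eq, PhiJ, ← tsum_mul_left]
    congr 1; ext k
    rw [integral_div, integral_const_mul, ball_moment i0]
    have hk : (0:ℝ) < (2*k).factorial := by positivity
    rw [show -(‖y‖^2/2)/2 = (-1) * (‖y‖^2/2/2) by ring, mul_pow]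
    field_simp
  · have : ∀ k : ℕ, (∫ a, ‖(-1)^k * ⟪y, a⟫_ℝ^(2*k) / (2*k).factorial‖ ∂(volume.restrict (Metric.ball (0 : EuclideanSpace ℝ (Fin d)) 1)))
        = VB d * ((‖y‖^2/2/2)^k / (asc (d/2+1) k * k.factorial)) := by
      intro k
      have hk : (0:ℝ) < (2*k).factorial := by positivity
      have : ∀ a : EuclideanSpace ℝ (Fin d), ‖(-1)^k * ⟪y, a⟫_ℝ^(2*k) / (2*k).factorial‖ = ⟪y, a⟫_ℝ^(2*k) / (2*k).factorial := by
        intro a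
        rw [norm_div, norm_mul, norm_pow, norm_neg, norm_one, one_pow, one_mul, Real.norm_of_nonneg, Real.norm_of_nonneg]
        · positivity
        · rw [pow_mul]; positivity
      simp_rw [this]
      rw [integral_div, ball_moment i0]
      field_simp
    simp_rw [this]
    apply Summable.mul_left
    refine Summable.of_nonneg_of_le (fun k => ?_) (fun k => ?_) (Real.summable_pow_div_factorial (‖y‖^2/2/2))
    · have := asc_ge_one d k
      positivity
    · have := asc_ge_one d k
      gcongr
      have hk : (0:ℝ) < k.factorial := by positivity
      nlinarith
end Mom


section PhiInt
open FourierTransform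
open scoped InnerProductSpace

lemma fourier_ball {d : ℕ} (i0 : Fin d) (w : EuclideanSpace ℝ (Fin d)) :
    𝓕 ((Metric.ball (0 : EuclideanSpace ℝ (Fin d)) 1).indicator (fun _ => (1:ℂ))) w
      = ((VB d * PhiJ d (‖(2*π) • w‖^2/2) : ℝ) : ℂ) := by
  have hI : ∀ f : EuclideanSpace ℝ (Fin d) → ℂ, Continuous f → IntegrableOn f (Metric.ball (0 : EuclideanSpace ℝ (Fin d)) 1) := by
    intro f hf
    exact (ContinuousOn.integrableOn_compact (isCompact_closedBall (0 : EuclideanSpace ℝ (Fin d)) 1) hf.continuousOn).mono_set Metric.ball_subset_closedBall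
  rw [Real.fourier_eq']
  have h1 : ∀ v, Complex.exp ((-2 * π * ⟪v, w⟫_ℝ : ℝ) * Complex.I) • (Metric.ball (0 : EuclideanSpace ℝ (Fin d)) 1).indicator (fun _ => (1:ℂ)) v
     = (Metric.ball (0 : EuclideanSpace ℝ (Fin d)) 1).indicator (fun v => ((cos ⟪(2*π) • w, v⟫_ℝ : ℝ) : ℂ) + -((sin ⟪(2*π) • w, v⟫_ℝ : ℝ) : ℂ) * Complex.I) v := by
    intro v
    by_cases hv : v ∈ Metric.ball (0 : EuclideanSpace ℝ (Fin d)) 1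
    · rw [Set.indicator_of_mem hv, Set.indicator_of_mem hv, Complex.exp_mul_I, ← Complex.ofReal_cos, ← Complex.ofReal_sin,
        inner_smul_left, real_inner_comm]
      have : (-2 * π * ⟪w, v⟫_ℝ) = -((2*π) * ⟪w, v⟫_ℝ) := by ring
      rw [this, Real.cos_neg, Real.sin_neg]
      simp
    · rw [Set.indicator_of_notMem hv, Set.indicator_of_notMem hv]; simp
  simp_rw [h1]
  rw [integral_indicator measurableSet_ball, integral_add (hI _ (by fun_prop)) (hI _ (by fun_prop)), integral_mul_const,
    integral_neg, integral_complex_ofReal, integral_complex_ofReal, PhiJ_ball i0]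
  have hs : ∫ x in Metric.ball (0 : EuclideanSpace ℝ (Fin d)) 1, sin ⟪(2*π) • w, x⟫_ℝ = 0 := by
    have h := integral_neg_eq_self ((Metric.ball (0 : EuclideanSpace ℝ (Fin d)) 1).indicator (fun x => sin ⟪(2*π) • w, x⟫_ℝ)) volume
    have h2 : ∀ x, (Metric.ball (0 : EuclideanSpace ℝ (Fin d)) 1).indicator (fun x => sin ⟪(2*π) • w, x⟫_ℝ) (-x)
       = - (Metric.ball (0 : EuclideanSpace ℝ (Fin d)) 1).indicator (fun x => sin ⟪(2*π) • w, x⟫_ℝ) x := by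
      intro x; simp only [Set.indicator, Metric.mem_ball, dist_zero_right, norm_neg, inner_neg_right, Real.sin_neg]
      split_ifs <;> simp
    simp_rw [h2] at h
    rw [integral_neg, integral_indicator measurableSet_ball] at h
    linarith
  rw [hs]; simp

theorem PhiJ_int {d : ℕ} (i0 : Fin d) :
    ∫ y : EuclideanSpace ℝ (Fin d), PhiJ d (‖y‖^2/2)^2 = (2*π)^d / VB d := by
  have hf : MemLp ((Metric.ball (0 : EuclideanSpace ℝ (Fin d)) 1).indicator (fun _ => (1:ℂ))) 2 volume :=
    memLp_indicator_const 2 measurableSet_ball _ (Or.inr measure_ball_lt_top.ne)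
  have hf1 : Integrable ((Metric.ball (0 : EuclideanSpace ℝ (Fin d)) 1).indicator (fun _ => (1:ℂ))) volume :=
    (integrable_indicator_iff measurableSet_ball).2 (integrableOn_const measure_ball_lt_top.ne)
  have h := planch_L1L2 _ hf1 hf
  simp_rw [fourier_ball i0] at h
  have h2 : ∫ x : EuclideanSpace ℝ (Fin d), ‖(Metric.ball (0 : EuclideanSpace ℝ (Fin d)) 1).indicator (fun _ => (1:ℂ)) x‖^2 = VB d := by
    rw [← ball_vol i0]
    rw [← integral_indicator_one measurableSet_ball]
    congr 1; ext x
    by_cases hv : x ∈ Metric.ball (0 : EuclideanSpace ℝ (Fin d)) 1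
    · rw [Set.indicator_of_mem hv, Set.indicator_of_mem hv]; simp
    · rw [Set.indicator_of_notMem hv, Set.indicator_of_notMem hv]; simp
  rw [h2] at h
  simp only [Complex.norm_real, norm_mul, mul_pow, Real.norm_eq_abs, sq_abs] at h
  rw [integral_const_mul, Measure.integral_comp_smul_of_nonneg volume (fun y : EuclideanSpace ℝ (Fin d) => PhiJ d (‖y‖^2/2)^2) (2*π) (hR := by positivity)] at h
  simp only [finrank_euclideanSpace, Fintype.card_fin, smul_eq_mul] at h
  have hV := VB_pos d
  set J := ∫ y : EuclideanSpace ℝ (Fin d), PhiJ d (‖y‖^2/2)^2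
  have hp : (0:ℝ) < (2*π)^d := by positivity
  have h3 : VB d * J = (2*π)^d := by
    have : VB d * (VB d * ((2*π)^d)⁻¹ * J) = VB d * 1 := by rw [← mul_assoc, mul_one]; nth_rw 3 [← h]; ring
    have := mul_left_cancel₀ hV.ne' this
    field_simp at this
    linarith
  rw [eq_div_iff hV.ne']; linarith
end PhiInt


section Pars
variable {d : ℕ}

def ech (ξ : Fin d → ℝ) (v : Fin d → ℤ) : ℂ := Complex.exp (Complex.I * ((∑ i, ξ i * (v i : ℝ) : ℝ) : ℂ))

lemma ech_add (ξ : Fin d → ℝ) (v w : Fin d → ℤ) : ech ξ (v + w) = ech ξ v * ech ξ w := by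
  unfold ech
  rw [← Complex.exp_add, ← mul_add, ← Complex.ofReal_add, ← Finset.sum_add_distrib]
  congr 4; ext i; simp; ring

lemma ech_neg (ξ : Fin d → ℝ) (v : Fin d → ℤ) : ech ξ (-v) = (starRingEnd ℂ) (ech ξ v) := by
  unfold ech
  rw [← Complex.exp_conj]
  simp

lemma ft_eq (f : (Fin d → ℤ) → ℝ) (ξ : Fin d → ℝ) : ftOmega f ξ = ∑' v, (f v : ℂ) * ech ξ v := rfl

lemma ft_sum (f : (Fin d → ℤ) → ℝ) (hf : (Function.support f).Finite) (ξ : Fin d → ℝ) :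
    ftOmega f ξ = ∑ v ∈ hf.toFinset, (f v : ℂ) * ech ξ v := by
  rw [ft_eq]
  apply tsum_eq_sum
  intro v hv
  simp at hv
  simp [hv]

lemma ft_summable (f : (Fin d → ℤ) → ℝ) (hf : (Function.support f).Finite) (ξ : Fin d → ℝ) :
    Summable (fun v => (f v : ℂ) * ech ξ v) := by
  apply summable_of_hasFiniteSupport
  apply hf.subset
  intro v hv
  simp at hv ⊢
  exact hv.1

lemma conv_eq (f g : (Fin d → ℤ) → ℝ) (hg : (Function.support g).Finite) (v) :
    latticeConv f g v = ∑ η ∈ hg.toFinset, f (v - η) * g η := by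
  unfold latticeConv
  apply tsum_eq_sum
  intro v hv
  simp at hv
  simp [hv]

lemma conv_fin (f g : (Fin d → ℤ) → ℝ) (hf : (Function.support f).Finite) (hg : (Function.support g).Finite) :
    (Function.support (latticeConv f g)).Finite := by
  apply (hf.add hg).subset
  intro v hv
  rw [Function.mem_support, conv_eq f g hg] at hv
  obtain ⟨η, hη, h⟩ := Finset.exists_ne_zero_of_sum_ne_zero hv
  refine ⟨v - η, ?_, η, ?_, by simp⟩
  · exact left_ne_zero_of_mul h
  · exact right_ne_zero_of_mul h

lemma ft_conv (f g : (Fin d → ℤ) → ℝ) (hf : (Function.support f).Finite) (hg : (Function.support g).Finite) (ξ : Fin d → ℝ) :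
    ftOmega (latticeConv f g) ξ = ftOmega f ξ * ftOmega g ξ := by
  rw [ft_sum g hg, ft_eq, Finset.mul_sum]
  have h1 : ∀ η, HasSum (fun v => (f (v - η) : ℂ) * ech ξ (v - η)) (ftOmega f ξ) := by
    intro η
    exact (Equiv.hasSum_iff (Equiv.subRight η)).2 (ft_summable f hf ξ).hasSum
  have h2 := hasSum_sum (s := hg.toFinset) (fun η _ => (h1 η).mul_right ((g η : ℂ) * ech ξ η))
  rw [← h2.tsum_eq]
  congr 1; ext v
  rw [conv_eq f g hg]; push_cast
  rw [Finset.sum_mul]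
  apply Finset.sum_congr rfl
  intro η _
  have : ech ξ v = ech ξ (v - η) * ech ξ η := by rw [← ech_add]; simp
  rw [this]; ring

lemma ft_real (f : (Fin d → ℤ) → ℝ) (hs : ∀ v, f (-v) = f v) (ξ : Fin d → ℝ) :
    ftOmega f ξ = ((ftOmega f ξ).re : ℂ) := by
  have : (starRingEnd ℂ) (ftOmega f ξ) = ftOmega f ξ := by
    conv_lhs => rw [ft_eq, Complex.conj_tsum]
    rw [ft_eq, ← (Equiv.neg (Fin d → ℤ)).tsum_eq]
    congr 1; ext v
    simp [hs, ech_neg]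
  exact (Complex.conj_eq_iff_re.1 this).symm

lemma ech_1d (k : ℤ) : ∫ t in Set.Icc (-π) π, Complex.exp (Complex.I * ((t * (k:ℝ) : ℝ) : ℂ)) = if k = 0 then (2*π : ℂ) else 0 := by
  rw [integral_Icc_eq_integral_Ioc, ← intervalIntegral.integral_of_le (by linarith [Real.pi_pos])]
  split_ifs with h
  · subst h; simp; ring
  · have hc : Complex.I * (k:ℂ) ≠ 0 := by simp [h]
    have : ∀ t : ℝ, Complex.exp (Complex.I * ((t * (k:ℝ) : ℝ) : ℂ)) = Complex.exp ((Complex.I * (k:ℂ)) * t) := by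
      intro t; congr 1; push_cast; ring
    simp_rw [this]
    rw [integral_exp_mul_complex hc]
    have : Complex.exp (Complex.I * k * (π:ℝ)) = Complex.exp (Complex.I * k * ((-π:ℝ):ℂ)) := by
      rw [Complex.exp_eq_exp_iff_exists_int]
      exact ⟨k, by push_cast; ring⟩
    rw [this]; simp

def cube (d : ℕ) : Set (Fin d → ℝ) := Set.pi Set.univ (fun _ => Set.Icc (-π) π)

lemma ech_int (v : Fin d → ℤ) : ∫ ξ in cube d, ech ξ v = if v = 0 then (2*π : ℂ)^d else 0 := by
  have h1 : ∀ ξ : Fin d → ℝ, ech ξ v = ∏ i, (fun (i : Fin d) (t : ℝ) => Complex.exp (Complex.I * ((t * (v i:ℝ) : ℝ) : ℂ))) i (ξ i) := by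
    intro ξ
    rw [← Complex.exp_sum, ech]; congr 1; rw [← Finset.mul_sum]; congr 1; push_cast; rfl
  simp_rw [h1]
  rw [cube, volume_pi, Measure.restrict_pi_pi]
  rw [integral_fintype_prod_eq_prod (fun (i : Fin d) (t : ℝ) => Complex.exp (Complex.I * ((t * (v i:ℝ) : ℝ) : ℂ)))]
  simp_rw [ech_1d]
  split_ifs with h
  · subst h; simp
  · obtain ⟨i, hi⟩ := Function.ne_iff.1 h
    apply Finset.prod_eq_zero (Finset.mem_univ i)
    rw [if_neg]; simpa using hi

lemma ech_cont (v : Fin d → ℤ) : Continuous (fun ξ => ech ξ v) := by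
  unfold ech; fun_prop

lemma cube_compact : IsCompact (cube d) := isCompact_univ_pi (fun _ => isCompact_Icc)

theorem parseval (f : (Fin d → ℤ) → ℝ) (hf : (Function.support f).Finite) :
    ∫ ξ in cube d, ‖ftOmega f ξ‖^2 = (2*π)^d * ∑' v, f v^2 := by
  have h1 : ∀ ξ, ((‖ftOmega f ξ‖^2 : ℝ) : ℂ) = ∑ v ∈ hf.toFinset, ∑ w ∈ hf.toFinset, ((f v * f w : ℝ) : ℂ) * ech ξ (v - w) := by
    intro ξ
    push_cast
    rw [← Complex.mul_conj', ft_sum f hf, map_sum, Finset.sum_mul_sum]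
    apply Finset.sum_congr rfl; intro v _; apply Finset.sum_congr rfl; intro w _
    rw [sub_eq_add_neg, ech_add, ech_neg]; simp; ring
  have hint : ∀ (c : ℂ) (v : Fin d → ℤ), Integrable (fun ξ => c * ech ξ v) (volume.restrict (cube d)) := by
    intro c v
    exact ((continuous_const.mul (ech_cont v)).continuousOn).integrableOn_compact cube_compact
  have h2 : ((∫ ξ in cube d, ‖ftOmega f ξ‖^2 : ℝ) : ℂ) = (((2*π)^d * ∑' v, f v^2 : ℝ) : ℂ) := by
    rw [← integral_complex_ofReal]
    simp_rw [h1]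
    rw [integral_finsetSum _ (fun v _ => integrable_finsetSum _ (fun w _ => hint _ _))]
    simp_rw [fun v => integral_finsetSum hf.toFinset (fun w (_ : w ∈ hf.toFinset) => hint ((f v * f w : ℝ) : ℂ) (v - w)), integral_const_mul, ech_int, sub_eq_zero]
    rw [tsum_eq_sum (s := hf.toFinset) (by intro v hv; simp at hv; simp [hv])]
    push_cast
    rw [Finset.mul_sum]
    apply Finset.sum_congr rfl; intro v hv
    rw [Finset.sum_eq_single v]
    · simp; ring
    · intro w _ hw; rw [if_neg (Ne.symm hw)]; simp
    · intro h; exact absurd hv h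
  exact_mod_cast h2

lemma ft_lin (f g : (Fin d → ℤ) → ℝ) (hf : (Function.support f).Finite) (hg : (Function.support g).Finite) (a b : ℝ) :
    (Function.support (fun v => a * f v + b * g v)).Finite ∧ ∀ ξ, ftOmega (fun v => a * f v + b * g v) ξ = a * ftOmega f ξ + b * ftOmega g ξ := by
  constructor
  · apply (hf.union hg).subset
    intro v hv
    by_contra h
    simp only [Set.mem_union, Function.mem_support, not_or, not_not] at h
    simp [h.1, h.2] at hv
  · intro ξ
    have := ((ft_summable f hf ξ).hasSum.mul_left (a:ℂ)).add ((ft_summable g hg ξ).hasSum.mul_left (b:ℂ))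
    rw [ft_eq, ft_eq f, ft_eq g, ← this.tsum_eq]
    congr 1; ext v; push_cast; ring

theorem x_ft (ω : (Fin d → ℤ) → ℝ)
    (hfin : (Function.support ω).Finite) (hsymm : ∀ v, ω (-v) = ω v)
    (x : ℕ → (Fin d → ℤ) → ℝ)
    (hx0 : ∀ v, x 0 v = if v = 0 then 1 else 0)
    (hx1 : ∀ v, x 1 v = aCoef0 d * latticeConv ω (x 0) v + bCoef0 d * x 0 v)
    (hrec : ∀ n, 1 ≤ n → ∀ v,
      x (n + 1) v = aCoef d n * latticeConv ω (x n) v + bCoef d n * x n v - cCoef d n * x (n - 1) v)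
    (n : ℕ) : (Function.support (x n)).Finite ∧ ∀ ξ, ftOmega (x n) ξ = ((pj d n (ftOmega ω ξ).re : ℝ) : ℂ) := by
  have hs : (Function.support (x 0)).Finite := by
    apply (Set.finite_singleton (0 : Fin d → ℤ)).subset
    intro v hv; rw [Function.mem_support, hx0] at hv; simpa using hv
  have h0 : ∀ ξ, ftOmega (x 0) ξ = ((pj d 0 (ftOmega ω ξ).re : ℝ) : ℂ) := by
    intro ξ
    rw [ft_eq, tsum_eq_single 0]
    · simp [hx0, ech, pj]
    · intro v hv; simp [hx0, hv]
  induction n using Nat.twoStepInduction with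
  | zero => exact ⟨hs, h0⟩
  | one =>
    have h1 := ft_lin _ _ (conv_fin ω _ hfin hs) hs (aCoef0 d) (bCoef0 d)
    have he : x 1 = fun v => aCoef0 d * latticeConv ω (x 0) v + bCoef0 d * x 0 v := by
      ext v; rw [hx1]
    rw [he]
    refine ⟨h1.1, fun ξ => ?_⟩
    rw [h1.2, ft_conv _ _ hfin hs, h0, ft_real ω hsymm ξ, Complex.ofReal_re, pj, pj]
    push_cast; ring
  | more n ih0 ih1 =>
    have hc := conv_fin ω _ hfin ih1.1
    have h1 := ft_lin _ _ hc ih1.1 (aCoef d (n+1)) (bCoef d (n+1))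
    have h2 := ft_lin _ _ h1.1 ih0.1 1 (-cCoef d (n+1))
    have he : x (n+2) = fun v => 1 * (aCoef d (n+1) * latticeConv ω (x (n+1)) v + bCoef d (n+1) * x (n+1) v) + -cCoef d (n+1) * x n v := by
      ext v; rw [hrec (n+1) (by omega)]; simp; ring
    rw [he]
    refine ⟨h2.1, fun ξ => ?_⟩
    rw [h2.2, h1.2, ft_conv _ _ hfin ih1.1, ih0.2, ih1.2, ft_real ω hsymm ξ, Complex.ofReal_re, pj]
    push_cast; ring
end Pars


section FinA
variable {d : ℕ}

lemma om_cos (ω : (Fin d → ℤ) → ℝ) (hfin : (Function.support ω).Finite) (ξ : Fin d → ℝ) :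
    (ftOmega ω ξ).re = ∑ v ∈ hfin.toFinset, ω v * cos (∑ i, ξ i * (v i : ℝ)) := by
  rw [ft_sum ω hfin, Complex.re_sum]
  apply Finset.sum_congr rfl; intro v _
  rw [ech, mul_comm Complex.I, Complex.re_ofReal_mul, Complex.exp_ofReal_mul_I_re]

lemma mass_sum (ω : (Fin d → ℤ) → ℝ) (hfin : (Function.support ω).Finite) (hmass : ∑' v : Fin d → ℤ, ω v = 1) :
    ∑ v ∈ hfin.toFinset, ω v = 1 := by
  rw [← hmass, tsum_eq_sum]
  intro v hv; simpa using hv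

lemma om_sub (ω : (Fin d → ℤ) → ℝ) (hfin : (Function.support ω).Finite) (hmass : ∑' v : Fin d → ℤ, ω v = 1) (ξ : Fin d → ℝ) :
    1 - (ftOmega ω ξ).re = ∑ v ∈ hfin.toFinset, ω v * (1 - cos (∑ i, ξ i * (v i : ℝ))) := by
  rw [om_cos ω hfin]
  simp only [mul_sub, mul_one, Finset.sum_sub_distrib, mass_sum ω hfin hmass]

lemma quad_form (ω : (Fin d → ℤ) → ℝ) (hfin : (Function.support ω).Finite) (y : Fin d → ℝ) :
    y ⬝ᵥ (covQ d ω *ᵥ y) = ∑ v ∈ hfin.toFinset, ω v * (∑ i, y i * (v i : ℝ))^2 := by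
  have h : ∀ i j, covQ d ω i j = ∑ v ∈ hfin.toFinset, ω v * (v i : ℝ) * (v j : ℝ) := by
    intro i j
    rw [covQ, Matrix.of_apply]
    apply tsum_eq_sum
    intro v hv
    have : ω v = 0 := by simpa using hv
    simp [this]
  simp only [dotProduct, mulVec, h, Finset.sum_mul, Finset.mul_sum, sq]
  have : ∀ i : Fin d, ∑ j, ∑ v ∈ hfin.toFinset, y i * (ω v * (v i : ℝ) * (v j : ℝ) * y j) = ∑ v ∈ hfin.toFinset, ∑ j, y i * (ω v * (v i : ℝ) * (v j : ℝ) * y j) := fun i => Finset.sum_comm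
  simp_rw [this]
  rw [Finset.sum_comm]
  apply Finset.sum_congr rfl; intro v _
  rw [Finset.sum_comm]
  apply Finset.sum_congr rfl; intro i _; apply Finset.sum_congr rfl; intro j _
  ring

lemma nsin_lim (a : ℝ) : Tendsto (fun n : ℕ => (n:ℝ) * sin (a / n)) atTop (𝓝 a) := by
  by_cases ha : a = 0
  · subst ha; simp
  have h1 : Tendsto (fun n : ℕ => a * Real.sinc (a / n)) atTop (𝓝 (a * Real.sinc 0)) :=
    ((Real.continuous_sinc.tendsto 0).comp (tendsto_const_div_atTop_nhds_zero_nat a)).const_mul a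
  rw [Real.sinc_zero, mul_one] at h1
  refine h1.congr' ?_
  filter_upwards [eventually_gt_atTop 0] with n hn
  have : (n:ℝ) ≠ 0 := by positivity
  rw [Real.sinc_of_ne_zero (by positivity)]
  field_simp

lemma ncos_lim (a : ℝ) : Tendsto (fun n : ℕ => (n:ℝ)^2 * (1 - cos (a / n))) atTop (𝓝 (a^2/2)) := by
  have h := ((nsin_lim (a/2)).pow 2).const_mul 2
  rw [show 2 * (a/2)^2 = a^2/2 by ring] at h
  refine h.congr ?_
  intro n
  have : cos (a/n) = 1 - 2 * sin (a/2/n)^2 := by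
    rw [show a/n = 2 * (a/2/n) by ring, Real.cos_two_mul, Real.cos_sq']; ring
  rw [this]; ring

lemma om_lim (ω : (Fin d → ℤ) → ℝ) (hfin : (Function.support ω).Finite) (hmass : ∑' v : Fin d → ℤ, ω v = 1) (y : Fin d → ℝ) :
    Tendsto (fun n : ℕ => (n:ℝ)^2 * (1 - (ftOmega ω ((n:ℝ)⁻¹ • y)).re)) atTop (𝓝 (y ⬝ᵥ (covQ d ω *ᵥ y) / 2)) := by
  rw [quad_form ω hfin, Finset.sum_div]
  simp_rw [om_sub ω hfin hmass, Finset.mul_sum]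
  apply tendsto_finsetSum
  intro v _
  have h := (ncos_lim (∑ i, y i * (v i : ℝ))).const_mul (ω v)
  rw [mul_div_assoc]
  refine h.congr ?_
  intro n
  have : ∑ i, ((n:ℝ)⁻¹ • y) i * (v i : ℝ) = (∑ i, y i * (v i : ℝ)) / n := by
    rw [Finset.sum_div]; apply Finset.sum_congr rfl; intro i _; simp; ring
  rw [this]; ring

lemma om_cont (ω : (Fin d → ℤ) → ℝ) (hfin : (Function.support ω).Finite) : Continuous (fun ξ => (ftOmega ω ξ).re) := by
  simp_rw [om_cos ω hfin]
  fun_prop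

lemma quad_lower (Q : Matrix (Fin d) (Fin d) ℝ) (hQ : Q.PosDef) : ∃ c, 0 < c ∧ ∀ y : Fin d → ℝ, c * ‖y‖^2 ≤ y ⬝ᵥ (Q *ᵥ y) := by
  by_cases hne : (Metric.sphere (0 : Fin d → ℝ) 1).Nonempty
  · obtain ⟨y0, hy0, hmin⟩ := (isCompact_sphere (0 : Fin d → ℝ) 1).exists_isMinOn hne
      (f := fun y => y ⬝ᵥ (Q *ᵥ y)) (by apply Continuous.continuousOn; simp only [dotProduct, mulVec]; fun_prop)
    have hy00 : y0 ≠ 0 := by rintro rfl; simp at hy0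
    refine ⟨y0 ⬝ᵥ (Q *ᵥ y0), by simpa using hQ.dotProduct_mulVec_pos hy00, fun y => ?_⟩
    by_cases hy : y = 0
    · subst hy; simp
    have hn : 0 < ‖y‖ := norm_pos_iff.2 hy
    have h := hmin (show ‖y‖⁻¹ • y ∈ Metric.sphere (0 : Fin d → ℝ) 1 by simp [norm_smul, hn.ne'])
    simp only [Set.mem_ofPred_eq, mulVec_smul, dotProduct_smul, smul_dotProduct, smul_eq_mul] at h
    calc _ ≤ (‖y‖⁻¹ * (‖y‖⁻¹ * y ⬝ᵥ (Q *ᵥ y))) * ‖y‖^2 := by gcongr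
      _ = _ := by field_simp
  · refine ⟨1, one_pos, fun y => ?_⟩
    have : y = 0 := by
      by_contra hy
      exact hne ⟨‖y‖⁻¹ • y, by simp [norm_smul, hy]⟩
    subst this; simp

lemma om_upper (ω : (Fin d → ℤ) → ℝ) (hfin : (Function.support ω).Finite) (hmass : ∑' v : Fin d → ℤ, ω v = 1)
    (haper : ∀ ξ : Fin d → ℝ, (∀ i, ξ i ∈ Set.Icc (-π) π) → ξ ≠ 0 → ‖ftOmega ω ξ‖ < 1) :
    ∃ c0, 0 < c0 ∧ ∀ ξ ∈ cube d, 1 - (ftOmega ω ξ).re ≤ 2 - c0 := by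
  have hne : (0 : Fin d → ℝ) ∈ cube d := by
    intro i _; exact ⟨by simp [Real.pi_pos.le], Real.pi_pos.le⟩
  obtain ⟨z, hz, hmin⟩ := (cube_compact (d := d)).exists_isMinOn ⟨0, hne⟩ (om_cont ω hfin).continuousOn
  refine ⟨1 + (ftOmega ω z).re, ?_, fun ξ hξ => ?_⟩
  · by_cases h : z = 0
    · have := om_sub ω hfin hmass z
      rw [h] at this ⊢
      simp at this
      linarith
    · have h1 := haper z (fun i => hz i trivial) h
      have h2 := (abs_le.1 (Complex.abs_re_le_norm (ftOmega ω z))).1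
      linarith
  · have : (ftOmega ω z).re ≤ (ftOmega ω ξ).re := hmin hξ
    linarith

lemma om_lower (ω : (Fin d → ℤ) → ℝ) (hfin : (Function.support ω).Finite) (hnn : ∀ v, 0 ≤ ω v) (hmass : ∑' v : Fin d → ℤ, ω v = 1)
    (hQ : (covQ d ω).PosDef)
    (haper : ∀ ξ : Fin d → ℝ, (∀ i, ξ i ∈ Set.Icc (-π) π) → ξ ≠ 0 → ‖ftOmega ω ξ‖ < 1) :
    ∃ c, 0 < c ∧ ∀ ξ ∈ cube d, c * ‖ξ‖^2 ≤ 1 - (ftOmega ω ξ).re := by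
  obtain ⟨c1, hc1, hq⟩ := quad_lower _ hQ
  -- neighbourhood of zero
  have hU : ∀ᶠ ξ in 𝓝 (0 : Fin d → ℝ), ∀ v ∈ hfin.toFinset, |∑ i, ξ i * (v i : ℝ)| < π := by
    rw [Filter.eventually_all_finset]
    intro v _
    have hc : Continuous (fun ξ : Fin d → ℝ => |∑ i, ξ i * (v i : ℝ)|) := by fun_prop
    exact (hc.tendsto 0).eventually_lt_const (by simp [Real.pi_pos])
  obtain ⟨U, hUs, hUo, hU0⟩ := eventually_nhds_iff.1 hU
  have hnear : ∀ ξ ∈ U, (2/π^2 * c1) * ‖ξ‖^2 ≤ 1 - (ftOmega ω ξ).re := by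
    intro ξ hξ
    calc (2/π^2 * c1) * ‖ξ‖^2 = 2/π^2 * (c1 * ‖ξ‖^2) := by ring
      _ ≤ 2/π^2 * (ξ ⬝ᵥ (covQ d ω *ᵥ ξ)) := by gcongr; exact hq ξ
      _ ≤ _ := by
        rw [quad_form ω hfin, om_sub ω hfin hmass, Finset.mul_sum]
        apply Finset.sum_le_sum
        intro v hv
        have := Real.cos_le_one_sub_mul_cos_sq (hUs ξ hξ v hv).le
        have := mul_le_mul_of_nonneg_left (show 2/π^2 * (∑ i, ξ i * (v i : ℝ))^2 ≤ 1 - cos (∑ i, ξ i * (v i : ℝ)) by linarith) (hnn v)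
        linarith
  have hc2 : ∃ c2, 0 < c2 ∧ ∀ ξ ∈ cube d \ U, c2 ≤ 1 - (ftOmega ω ξ).re := by
    by_cases hne : (cube d \ U).Nonempty
    · obtain ⟨z, hz, hmin⟩ := ((cube_compact (d := d)).diff hUo).exists_isMinOn hne
        (f := fun ξ => 1 - (ftOmega ω ξ).re) (continuous_const.sub (om_cont ω hfin)).continuousOn
      refine ⟨_, ?_, fun ξ hξ => hmin hξ⟩
      have h1 := haper z (fun i => hz.1 i trivial) (by rintro rfl; exact hz.2 hU0)
      have h2 := (abs_le.1 (Complex.abs_re_le_norm (ftOmega ω z))).2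
      linarith
    · exact ⟨1, one_pos, fun ξ hξ => absurd ⟨ξ, hξ⟩ hne⟩
  obtain ⟨c2, hc2, hfar⟩ := hc2
  refine ⟨min (2/π^2*c1) (c2/π^2), by have := Real.pi_pos; positivity, fun ξ hξ => ?_⟩
  by_cases hu : ξ ∈ U
  · exact le_trans (by gcongr; exact min_le_left _ _) (hnear ξ hu)
  · refine le_trans ?_ (hfar ξ ⟨hξ, hu⟩)
    have hn : ‖ξ‖ ≤ π := (pi_norm_le_iff_of_nonneg Real.pi_pos.le).2 (fun i => abs_le.2 (hξ i trivial))
    calc _ ≤ (c2/π^2) * π^2 := by gcongr; exact min_le_right _ _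
      _ = c2 := by field_simp
end FinA


section FinB
variable {d : ℕ}

open scoped MatrixOrder ComplexOrder in
lemma factQ (Q : Matrix (Fin d) (Fin d) ℝ) (hQ : Q.PosDef) : ∃ L : Matrix (Fin d) (Fin d) ℝ, Q = Lᵀ * L := by
  obtain ⟨L, hL⟩ := CStarAlgebra.nonneg_iff_eq_star_mul_self.1 hQ.posSemidef.nonneg
  exact ⟨L, by rw [hL]; simp [star_eq_conjTranspose]⟩

lemma PhiJ_Q (i0 : Fin d) (Q : Matrix (Fin d) (Fin d) ℝ) (hQ : Q.PosDef) :
    ∫ y : Fin d → ℝ, PhiJ d (y ⬝ᵥ (Q *ᵥ y) / 2)^2 = (√Q.det)⁻¹ * ((2*π)^d / VB d) := by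
  obtain ⟨L, hL⟩ := factQ Q hQ
  have hdet : Q.det = L.det^2 := by rw [hL, det_mul, det_transpose]; ring
  have hd0 : L.det ≠ 0 := by
    intro h; have := hQ.det_pos; rw [hdet, h] at this; simp at this
  have hmap := Real.map_matrix_volume_pi_eq_smul_volume_pi hd0
  have hemb : MeasurableEmbedding (Matrix.toLin' L) := by
    apply Continuous.measurableEmbedding
    · exact LinearMap.continuous_of_finiteDimensional _
    · rw [Matrix.toLin'_apply']
      exact Matrix.mulVec_injective_of_isUnit ((Matrix.isUnit_iff_isUnit_det L).2 hd0.isUnit)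
  have h1 : ∀ y : Fin d → ℝ, y ⬝ᵥ (Q *ᵥ y) = (Matrix.toLin' L y) ⬝ᵥ (Matrix.toLin' L y) := by
    intro y
    rw [Matrix.toLin'_apply, hL, ← mulVec_mulVec, dotProduct_mulVec, vecMul_transpose]
  simp_rw [h1]
  rw [← hemb.integral_map (fun z => PhiJ d (z ⬝ᵥ z / 2)^2), hmap, integral_smul_measure]
  rw [← PhiJ_int i0, ← (EuclideanSpace.volume_preserving_symm_measurableEquiv_toLp (Fin d)).symm.integral_comp (MeasurableEquiv.measurableEmbedding _)]
  rw [hdet, Real.sqrt_sq_eq_abs, ENNReal.toReal_ofReal (abs_nonneg _), abs_inv, smul_eq_mul]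
  congr 2
  ext z
  rw [EuclideanSpace.norm_sq_eq]
  simp [dotProduct, sq]

lemma pj_cont (n : ℕ) : Continuous (pj d n) := by
  induction n using Nat.twoStepInduction with
  | zero => simp only [show pj d 0 = fun _ => 1 from by ext; rw [pj]]; fun_prop
  | one => rw [show pj d 1 = fun l => aCoef0 d * l + bCoef0 d from by ext; rw [pj]]; fun_prop
  | more n h0 h1 =>
    rw [show pj d (n+2) = fun l => (aCoef d (n + 1) * l + bCoef d (n + 1)) * pj d (n + 1) l - cCoef d (n + 1) * pj d n l from by ext; rw [pj]]
    fun_prop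

lemma cube_meas : MeasurableSet (cube d) := (cube_compact (d := d)).isClosed.measurableSet

lemma cube_event (y : Fin d → ℝ) : ∀ᶠ n : ℕ in atTop, (n:ℝ)⁻¹ • y ∈ cube d := by
  have h : Tendsto (fun n : ℕ => ‖y‖ / n) atTop (𝓝 0) := tendsto_const_div_atTop_nhds_zero_nat _
  filter_upwards [h.eventually_lt_const Real.pi_pos] with n hn i _
  have h1 : |((n:ℝ)⁻¹ • y) i| ≤ π := by
    refine le_trans (norm_le_pi_norm ((n:ℝ)⁻¹ • y) i) ?_
    rw [norm_smul, norm_inv, Real.norm_natCast, inv_mul_eq_div]; exact hn.le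
  exact abs_le.1 h1

theorem int_limit (i0 : Fin d) (ω : (Fin d → ℤ) → ℝ) (hfin : (Function.support ω).Finite) (hnn : ∀ v, 0 ≤ ω v)
    (hmass : ∑' v : Fin d → ℤ, ω v = 1) (hQ : (covQ d ω).PosDef)
    (haper : ∀ ξ : Fin d → ℝ, (∀ i, ξ i ∈ Set.Icc (-π) π) → ξ ≠ 0 → ‖ftOmega ω ξ‖ < 1) :
    Tendsto (fun n : ℕ => (n:ℝ)^d * ∫ ξ in cube d, (pj d n (ftOmega ω ξ).re)^2) atTop
      (𝓝 ((√(covQ d ω).det)⁻¹ * ((2*π)^d / VB d))) := by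
  obtain ⟨c0, hc0, hup⟩ := om_upper ω hfin hmass haper
  obtain ⟨c, hc, hlow⟩ := om_lower ω hfin hnn hmass hQ haper
  obtain ⟨C, hC, hdom⟩ := pj_dom d c0 hc0
  set e := min 1 c with he
  have he0 : 0 < e := lt_min one_pos hc
  rw [← PhiJ_Q i0 _ hQ]
  let F : ℕ → (Fin d → ℝ) → ℝ := fun n y =>
    (cube d).indicator (fun ξ => (pj d n (ftOmega ω ξ).re)^2) ((n:ℝ)⁻¹ • y)
  have hF : ∀ n : ℕ, (n:ℝ)^d * ∫ ξ in cube d, (pj d n (ftOmega ω ξ).re)^2 = ∫ y, F n y := by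
    intro n
    rw [Measure.integral_comp_inv_smul_of_nonneg volume _ (Nat.cast_nonneg n), integral_indicator cube_meas]
    simp
  have hFm : ∀ n, Measurable (F n) := by
    intro n
    have : Measurable ((cube d).indicator (fun ξ => (pj d n (ftOmega ω ξ).re)^2)) :=
      (((pj_cont n).comp (om_cont ω hfin)).pow 2).measurable.indicator cube_meas
    exact this.comp (measurable_const_smul _)
  have hlim : Tendsto (fun n => ∫ y, F n y) atTop (𝓝 (∫ y : Fin d → ℝ, PhiJ d (y ⬝ᵥ (covQ d ω *ᵥ y) / 2)^2)) := by
    rw [← tendsto_add_atTop_iff_nat 1]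
    refine tendsto_integral_of_dominated_convergence
      (fun y => C / (√e)^(d+1) * (1 + ‖y‖^2)^(-((d:ℝ)+1)/2)) (fun n => (hFm _).aestronglyMeasurable) ?_ ?_ ?_
    · apply Integrable.const_mul
      apply integrable_rpow_neg_one_add_norm_sq
      simp
    · intro n'
      apply Eventually.of_forall
      intro y
      set n := n'+1 with hn
      have hn0 : (0:ℝ) < n := by positivity
      by_cases hy : (n:ℝ)⁻¹ • y ∈ cube d
      · simp only [F, Set.indicator_of_mem hy]
        set ξ := (n:ℝ)⁻¹ • y with hξ
        set t := 1 - (ftOmega ω ξ).re with ht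
        have h1 : c * ‖ξ‖^2 ≤ t := hlow ξ hy
        have h2 : t ≤ 2 - c0 := hup ξ hy
        have ht0 : 0 ≤ t := le_trans (by positivity) h1
        have h3 := hdom t ht0 h2 n
        rw [show (ftOmega ω ξ).re = 1 - t by rw [ht]; ring, Real.norm_of_nonneg (by positivity)]
        have h4 : e * (1 + ‖y‖^2) ≤ 1 + (n:ℝ)^2 * t := by
          have : ‖ξ‖ = ‖y‖ / n := by rw [hξ, norm_smul, norm_inv, Real.norm_natCast, inv_mul_eq_div]
          rw [this] at h1
          have h5 : c * ‖y‖^2 ≤ (n:ℝ)^2 * t := by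
            calc c * ‖y‖^2 = (n:ℝ)^2 * (c * (‖y‖/n)^2) := by field_simp
              _ ≤ _ := by gcongr
          have h6 : e ≤ 1 := min_le_left _ _
          have h7 : e * ‖y‖^2 ≤ c * ‖y‖^2 := by gcongr; exact min_le_right _ _
          linarith
        have h5 : √(e * (1 + ‖y‖^2))^(d+1) ≤ √(1 + (n:ℝ)^2 * t)^(d+1) := by gcongr
        have hpos : 0 < √(e * (1 + ‖y‖^2))^(d+1) := by positivity
        have h6 : (pj d n (1-t))^2 ≤ C / √(e * (1 + ‖y‖^2))^(d+1) := by
          rw [le_div_iff₀ hpos]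
          exact le_trans (by gcongr) h3
        refine h6.trans (le_of_eq ?_)
        rw [Real.sqrt_mul he0.le, mul_pow, ← div_div, div_eq_mul_inv (C / √e^(d+1))]
        congr 1
        rw [neg_div, Real.rpow_neg (by positivity), Real.sqrt_eq_rpow, ← Real.rpow_natCast, ← Real.rpow_mul (by positivity)]
        congr 2; push_cast; ring
      · simp only [F, Set.indicator_of_notMem hy, norm_zero]
        positivity
    · apply Eventually.of_forall
      intro y
      have hmain : Tendsto (fun n => F n y) atTop (𝓝 (PhiJ d (y ⬝ᵥ (covQ d ω *ᵥ y) / 2)^2)) := by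
        have h := (pj_limit d _ _ (om_lim ω hfin hmass y)).pow 2
        refine h.congr' ?_
        filter_upwards [cube_event y] with n hn
        simp only [F, Set.indicator_of_mem hn]
        congr 2; ring
      exact hmain.comp (tendsto_add_atTop_nat 1)
  exact hlim.congr (fun n => (hF n).symm)
end FinB

/-- Sharp asymptotic rate for the squared ℓ² norm of the Jacobi polynomial iteration. -/
theorem jacobi_iteration_sharp_rate
    (d : ℕ) (hd : 1 ≤ d) (ω : (Fin d → ℤ) → ℝ)
    (hfin : (Function.support ω).Finite) (hnn : ∀ v, 0 ≤ ω v)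
    (hmass : ∑' v : Fin d → ℤ, ω v = 1) (hsymm : ∀ v, ω (-v) = ω v)
    (hQ : (covQ d ω).PosDef)
    (haper : ∀ ξ : Fin d → ℝ, (∀ i, ξ i ∈ Set.Icc (-π) π) → ξ ≠ 0 →
      ‖ftOmega ω ξ‖ < 1)
    (x : ℕ → (Fin d → ℤ) → ℝ)
    (hx0 : ∀ v, x 0 v = if v = 0 then 1 else 0)
    (hx1 : ∀ v, x 1 v = aCoef0 d * latticeConv ω (x 0) v + bCoef0 d * x 0 v)
    (hrec : ∀ n, 1 ≤ n → ∀ v,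
      x (n + 1) v = aCoef d n * latticeConv ω (x n) v + bCoef d n * x n v - cCoef d n * x (n - 1) v) :
    Tendsto (fun n : ℕ => (n : ℝ) ^ d * ∑' v : Fin d → ℤ, (x n v) ^ 2)
      atTop
      (𝓝 (Real.Gamma ((d : ℝ) / 2 + 1) / (π ^ ((d : ℝ) / 2) * Real.sqrt (covQ d ω).det))) := by
  have i0 : Fin d := ⟨0, hd⟩
  have h := (int_limit i0 ω hfin hnn hmass hQ haper).const_mul ((2*π)^d)⁻¹
  have hp : ((2*π)^d : ℝ) ≠ 0 := by positivity
  have hval : ((2*π)^d)⁻¹ * ((√(covQ d ω).det)⁻¹ * ((2*π)^d / VB d)) =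
      Real.Gamma ((d : ℝ) / 2 + 1) / (π ^ ((d : ℝ) / 2) * Real.sqrt (covQ d ω).det) := by
    have h1 : π ^ ((d : ℝ) / 2) = √π^d := by
      rw [Real.sqrt_eq_rpow, ← Real.rpow_natCast, ← Real.rpow_mul Real.pi_pos.le]; congr 1; ring
    rw [h1, VB]
    field_simp
  rw [hval] at h
  refine h.congr (fun n => ?_)
  obtain ⟨hs, hft⟩ := x_ft ω hfin hsymm x hx0 hx1 hrec n
  have hP := parseval (x n) hs
  simp_rw [hft, Complex.norm_real, Real.norm_eq_abs, sq_abs] at hP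
  rw [hP]
  field_simp
end
end

section
/- Let t > 0. For every bounded continuous function f : ℝ^d → ℝ, the sums ∑_{v∈ℤ^d} ω^{∗⌊t/ε²⌋}(v) f(εv) converge, as ε → 0⁺, to ∫_{ℝ^d} f(y) (2πt)^{−d/2} (det Q)^{−1/2} exp(−⟨y, Q⁻¹y⟩/(2t)) dy. (Weak convergence of simple gossip on ℤ^d to the fundamental solution of the anisotropic heat equation; lattice central limit theorem.) -/
open MeasureTheory Matrix Filter Topology Real

noncomputable section

lemma gp_conv_support {d : ℕ} (ω x : (Fin d → ℤ) → ℝ) (h1 : (Function.support ω).Finite)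
    (h2 : (Function.support x).Finite) : (Function.support (latticeConv ω x)).Finite := by
  refine (h1.add h2).subset ?_
  intro v hv
  by_contra hcon
  apply hv
  unfold latticeConv
  convert tsum_zero with η
  by_contra h
  refine hcon ⟨v - η, ?_, η, ?_, by simp⟩
  · exact left_ne_zero_of_mul h
  · exact right_ne_zero_of_mul h

lemma gp_conv_char {d : ℕ} (ω x : (Fin d → ℤ) → ℝ) (h1 : (Function.support ω).Finite)
    (h2 : (Function.support x).Finite) (χ : (Fin d → ℤ) → ℂ) (hχ : ∀ v w, χ (v + w) = χ v * χ w) :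
    ∑' v, (latticeConv ω x v : ℂ) * χ v = (∑' v, (ω v : ℂ) * χ v) * ∑' v, (x v : ℂ) * χ v := by
  have hs : Summable (Function.uncurry fun (v η : Fin d → ℤ) =>
      (ω (v - η) : ℂ) * (x η : ℂ) * χ v) := by
    apply summable_of_hasFiniteSupport
    refine ((h1.add h2).prod h2).subset ?_
    rintro ⟨v, η⟩ h
    simp only [Function.mem_support, Function.uncurry_apply_pair] at h
    have ha := left_ne_zero_of_mul (left_ne_zero_of_mul h)
    have hb := right_ne_zero_of_mul (left_ne_zero_of_mul h)
    have ha' : ω (v - η) ≠ 0 := by exact_mod_cast ha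
    have hb' : x η ≠ 0 := by exact_mod_cast hb
    exact ⟨⟨v - η, ha', η, hb', by simp⟩, hb'⟩
  calc ∑' v, (latticeConv ω x v : ℂ) * χ v
      = ∑' v, ∑' η, (ω (v - η) : ℂ) * (x η : ℂ) * χ v := by
        refine tsum_congr fun v => ?_
        rw [tsum_mul_right, latticeConv, Complex.ofReal_tsum]
        simp
    _ = ∑' η, ∑' v, (ω (v - η) : ℂ) * (x η : ℂ) * χ v := hs.tsum_comm.symm
    _ = ∑' η, (∑' v, (ω v : ℂ) * χ v) * ((x η : ℂ) * χ η) := by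
        refine tsum_congr fun η => ?_
        rw [← (Equiv.addRight η).tsum_eq, ← tsum_mul_right]
        refine tsum_congr fun v => ?_
        simp [hχ]; ring
    _ = _ := tsum_mul_left

lemma gp_integral {V E F : Type*} [MeasurableSpace E] [MeasurableSingletonClass E]
    [NormedAddCommGroup F] [NormedSpace ℝ F] [CompleteSpace F]
    (S : Finset V) (w : V → ℝ) (hw : ∀ v, 0 ≤ w v) (T : V → E) (g : E → F) :
    ∫ y, g y ∂(∑ v ∈ S, ENNReal.ofReal (w v) • Measure.dirac (T v)) = ∑ v ∈ S, w v • g (T v) := by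
  rw [integral_finsetSum_measure]
  · refine Finset.sum_congr rfl fun v _ => ?_
    rw [integral_smul_measure, integral_dirac, ENNReal.toReal_ofReal (hw v)]
  · intro v _
    exact (integrable_dirac (by simp)).smul_measure (by simp)

lemma gp_pi_gauss (d : ℕ) :
    Measure.pi (fun _ : Fin d => ProbabilityTheory.gaussianReal 0 1) =
    (volume : Measure (Fin d → ℝ)).withDensity
      (fun x => ENNReal.ofReal (∏ i, ProbabilityTheory.gaussianPDFReal 0 1 (x i))) := by
  apply Measure.pi_eq
  intro s hs
  rw [withDensity_apply _ (MeasurableSet.univ_pi hs), volume_pi, Measure.restrict_pi_pi,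
    ← ofReal_integral_eq_lintegral_ofReal]
  · rw [integral_fintype_prod_eq_prod, ENNReal.ofReal_prod_of_nonneg]
    · refine Finset.prod_congr rfl fun i _ => ?_
      rw [ProbabilityTheory.gaussianReal_apply_eq_integral _ (by simp)]
    · intro i _
      exact integral_nonneg fun _ => ProbabilityTheory.gaussianPDFReal_nonneg _ _ _
  · exact Integrable.fintype_prod fun i =>
      (ProbabilityTheory.integrable_gaussianPDFReal 0 1).integrableOn
  · exact ae_of_all _ fun x => Finset.prod_nonneg fun i _ =>
      ProbabilityTheory.gaussianPDFReal_nonneg _ _ _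

lemma gp_prod_pdf (d : ℕ) (x : Fin d → ℝ) :
    ∏ i, ProbabilityTheory.gaussianPDFReal 0 1 (x i) =
      (2 * π) ^ (-(d : ℝ) / 2) * Real.exp (-(x ⬝ᵥ x) / 2) := by
  simp only [ProbabilityTheory.gaussianPDFReal, Finset.prod_mul_distrib, ← Real.exp_sum]
  congr 1
  · simp only [NNReal.coe_one, mul_one, Finset.prod_const, Finset.card_univ, Fintype.card_fin]
    rw [Real.sqrt_eq_rpow, ← Real.rpow_neg (by positivity), ← Real.rpow_natCast,
      ← Real.rpow_mul (by positivity)]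
    congr 1; ring
  · congr 1
    simp [dotProduct, neg_div, Finset.sum_div, pow_two]

open scoped MatrixOrder Matrix.Norms.L2Operator in
lemma gp_gauss_integral (d : ℕ) (Q : Matrix (Fin d) (Fin d) ℝ) (hQ : Q.PosDef) (t : ℝ) (ht : 0 < t)
    (f : (Fin d → ℝ) → ℝ) (hf : Continuous f) :
    ∫ y, f (WithLp.ofLp y) ∂(ProbabilityTheory.multivariateGaussian 0 (t • Q)) =
    ∫ y : Fin d → ℝ, f y *
          ((2 * π * t) ^ (-(d : ℝ) / 2) * (Real.sqrt Q.det)⁻¹ *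
            Real.exp (-(y ⬝ᵥ (Q⁻¹ *ᵥ y)) / (2 * t))) := by
  set A : Matrix (Fin d) (Fin d) ℝ := CFC.sqrt (t • Q) with hA
  have hAA : A * A = t • Q := CFC.sqrt_mul_sqrt_self _ (hQ.smul ht).posSemidef.nonneg
  have hAs : Aᵀ = A := by
    have := (CFC.sqrt_nonneg (t • Q)).isSelfAdjoint
    simpa [IsSelfAdjoint, Matrix.star_eq_conjTranspose, ← hA] using this
  have hdQ := hQ.det_pos
  have hdA2 : A.det * A.det = t ^ d * Q.det := by
    rw [← Matrix.det_mul, hAA, Matrix.det_smul]; simp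
  have hdA : A.det ≠ 0 := by
    intro h; rw [h] at hdA2; have : 0 < t ^ d * Q.det := by positivity
    linarith
  have habs : |A.det| = Real.sqrt (t ^ d) * Real.sqrt Q.det := by
    rw [← Real.sqrt_mul (by positivity), ← hdA2, Real.sqrt_mul_self_eq_abs]
  have hAQ : A * (Q⁻¹ * A) = t • (1 : Matrix (Fin d) (Fin d) ℝ) := by
    have hQi : Q = t⁻¹ • (A * A) := by rw [hAA, smul_smul, inv_mul_cancel₀ ht.ne', one_smul]
    have hQinv : Q⁻¹ = t • (A⁻¹ * A⁻¹) := by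
      apply Matrix.inv_eq_right_inv
      have hu : IsUnit A.det := isUnit_iff_ne_zero.2 hdA
      rw [hQi]
      simp only [smul_mul_assoc, mul_smul_comm, smul_smul]
      rw [mul_inv_cancel₀ ht.ne', one_smul, Matrix.mul_assoc, ← Matrix.mul_assoc A A⁻¹,
        Matrix.mul_nonsing_inv _ hu, Matrix.one_mul, Matrix.mul_nonsing_inv _ hu]
    have hu : IsUnit A.det := isUnit_iff_ne_zero.2 hdA
    rw [hQinv]
    simp only [smul_mul_assoc, mul_smul_comm]
    rw [Matrix.mul_assoc, Matrix.nonsing_inv_mul _ hu, Matrix.mul_one, Matrix.mul_nonsing_inv _ hu]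
  have hL : ∫ y, f (WithLp.ofLp y) ∂(ProbabilityTheory.multivariateGaussian 0 (t • Q)) =
      ∫ x : Fin d → ℝ, f (A *ᵥ x) * ((2 * π) ^ (-(d : ℝ) / 2) * Real.exp (-(x ⬝ᵥ x) / 2)) := by
    rw [ProbabilityTheory.multivariateGaussian, integral_map (by fun_prop)
      (Continuous.aestronglyMeasurable (by fun_prop)), ← ProbabilityTheory.map_pi_eq_stdGaussian,
      integral_map (by fun_prop) (Continuous.aestronglyMeasurable (by fun_prop)), gp_pi_gauss,
      integral_withDensity_eq_integral_toReal_smul (by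
        simp only [ProbabilityTheory.gaussianPDFReal]; fun_prop) (by simp)]
    congr 1; ext x
    rw [ENNReal.toReal_ofReal (Finset.prod_nonneg fun i _ =>
      ProbabilityTheory.gaussianPDFReal_nonneg _ _ _), gp_prod_pdf, smul_eq_mul, mul_comm]
    congr 2
    simp [← hA]
  rw [hL]
  have hvol := Real.map_matrix_volume_pi_eq_smul_volume_pi hdA
  have key : ∀ g : (Fin d → ℝ) → ℝ, Continuous g →
      ∫ x, g (A *ᵥ x) = |A.det|⁻¹ * ∫ y, g y := by
    intro g hg
    have h1 : ∫ y, g y ∂(Measure.map (toLin' A) volume) = ∫ x, g (A *ᵥ x) := by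
      rw [integral_map]
      · simp
      · exact (LinearMap.continuous_of_finiteDimensional _).aemeasurable
      · exact hg.aestronglyMeasurable
    rw [← h1, hvol, integral_smul_measure, ENNReal.toReal_ofReal (abs_nonneg _), abs_inv,
      smul_eq_mul]
  have h2 := key (fun y => f y * ((2 * π * t) ^ (-(d : ℝ) / 2) * (Real.sqrt Q.det)⁻¹ *
            Real.exp (-(y ⬝ᵥ (Q⁻¹ *ᵥ y)) / (2 * t)))) (by fun_prop)
  rw [eq_inv_mul_iff_mul_eq₀ (abs_ne_zero.2 hdA), ← integral_const_mul] at h2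
  rw [← h2]
  congr 1; ext x
  have e1 : (A *ᵥ x) ⬝ᵥ (Q⁻¹ *ᵥ (A *ᵥ x)) = t * (x ⬝ᵥ x) := by
    rw [Matrix.mulVec_mulVec, Matrix.dotProduct_mulVec, ← Matrix.mulVec_transpose,
      Matrix.mulVec_mulVec, Matrix.transpose_mul, hAs]
    have : (A * (Q⁻¹)ᵀ * A) = t • (1 : Matrix (Fin d) (Fin d) ℝ) := by
      have := congrArg Matrix.transpose hAQ
      simpa [Matrix.transpose_mul, hAs, Matrix.mul_assoc] using this
    rw [this, Matrix.smul_mulVec, Matrix.one_mulVec, smul_dotProduct, smul_eq_mul]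
  have e2 : (2 * π * t) ^ (-(d : ℝ) / 2) = (2 * π) ^ (-(d : ℝ) / 2) * (Real.sqrt (t ^ d))⁻¹ := by
    rw [Real.mul_rpow (by positivity) ht.le]
    congr 1
    rw [Real.sqrt_eq_rpow, ← Real.rpow_neg (by positivity), ← Real.rpow_natCast,
      ← Real.rpow_mul ht.le]
    congr 1; ring
  rw [e1, e2, habs]
  have hs1 : Real.sqrt (t ^ d) ≠ 0 := (Real.sqrt_pos.2 (by positivity)).ne'
  have hs2 : Real.sqrt Q.det ≠ 0 := (Real.sqrt_pos.2 hdQ).ne'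
  have e3 : -(t * (x ⬝ᵥ x)) / (2 * t) = -(x ⬝ᵥ x) / 2 := by field_simp
  rw [e3]
  field_simp

lemma gp_exp_bound (x : ℂ) (hx : ‖x‖ ≤ 1) : ‖Complex.exp x - (1 + x + x ^ 2 / 2)‖ ≤ 3 * ‖x‖ ^ 3 := by
  have h := Complex.norm_exp_sub_sum_le_norm_mul_exp x 3
  have : Real.exp ‖x‖ ≤ 3 := by
    calc Real.exp ‖x‖ ≤ Real.exp 1 := Real.exp_le_exp.2 hx
      _ ≤ 3 := by linarith [Real.exp_one_lt_d9]
  simp only [Finset.sum_range_succ, Finset.sum_range_zero] at h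
  norm_num [Nat.factorial] at h
  calc _ ≤ _ := h
    _ ≤ _ := by nlinarith [pow_nonneg (norm_nonneg x) 3]

lemma gp_pow_sub (z w : ℂ) (hz : ‖z‖ ≤ 1) (hw : ‖w‖ ≤ 1) (n : ℕ) :
    ‖z ^ n - w ^ n‖ ≤ n * ‖z - w‖ := by
  induction n with
  | zero => simp
  | succ n ih =>
    have : z ^ (n+1) - w ^ (n+1) = z * (z ^ n - w ^ n) + (z - w) * w ^ n := by ring
    rw [this]
    refine (norm_add_le _ _).trans ?_
    rw [norm_mul, norm_mul, norm_pow]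
    have h1 : ‖w‖ ^ n ≤ 1 := pow_le_one₀ (norm_nonneg _) hw
    push_cast
    nlinarith [norm_nonneg (z ^ n - w ^ n), norm_nonneg (z - w)]

/-- one-dimensional characteristic function limit -/
lemma gp_limit {V : Type*} (S : Finset V) (w a : V → ℝ) (hw : ∀ v, 0 ≤ w v) (h1 : ∑ v ∈ S, w v = 1)
    (h0 : ∑ v ∈ S, w v * a v = 0) (t : ℝ) (ht : 0 < t) :
    Tendsto (fun ε : ℝ => (∑ v ∈ S, (w v : ℂ) * Complex.exp ((ε * a v : ℝ) * Complex.I)) ^ ⌊t / ε ^ 2⌋₊)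
      (𝓝[>] 0) (𝓝 (Complex.exp ((-(t * ∑ v ∈ S, w v * a v ^ 2) / 2 : ℝ)))) := by
  set q := ∑ v ∈ S, w v * a v ^ 2 with hq
  have hq0 : 0 ≤ q := Finset.sum_nonneg fun v _ => mul_nonneg (hw v) (sq_nonneg _)
  set K := ∑ v ∈ S, w v * |a v| ^ 3 with hK
  have hK0 : 0 ≤ K := Finset.sum_nonneg fun v _ => mul_nonneg (hw v) (by positivity)
  set M := ∑ v ∈ S, |a v| with hM
  have hM0 : 0 ≤ M := Finset.sum_nonneg fun v _ => abs_nonneg _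
  have hfl : Tendsto (fun ε : ℝ => (⌊t / ε ^ 2⌋₊ : ℝ) * ε ^ 2) (𝓝[>] 0) (𝓝 t) := by
    have hlow : Tendsto (fun ε : ℝ => t - ε ^ 2) (𝓝[>] 0) (𝓝 t) := by
      have : Tendsto (fun ε : ℝ => t - ε ^ 2) (𝓝 0) (𝓝 (t - 0 ^ 2)) :=
        (Continuous.tendsto (by fun_prop) 0)
      simpa using this.mono_left nhdsWithin_le_nhds
    refine tendsto_of_tendsto_of_tendsto_of_le_of_le' hlow tendsto_const_nhds ?_ ?_
    · filter_upwards [self_mem_nhdsWithin] with ε hε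
      have hε' : 0 < ε ^ 2 := pow_pos hε 2
      have := (Nat.lt_floor_add_one (t / ε ^ 2)).le
      rw [div_le_iff₀ hε'] at this
      linarith
    · filter_upwards [self_mem_nhdsWithin] with ε hε
      have hε' : 0 < ε ^ 2 := pow_pos hε 2
      have := Nat.floor_le (div_nonneg ht.le hε'.le)
      rwa [le_div_iff₀ hε'] at this
  have hB : Tendsto (fun ε : ℝ => (Complex.exp ((-(ε ^ 2 * q) / 2 : ℝ))) ^ ⌊t / ε ^ 2⌋₊)
      (𝓝[>] 0) (𝓝 (Complex.exp ((-(t * q) / 2 : ℝ)))) := by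
    have h := ((hfl.mul_const q).neg.div_const 2)
    have h2 := (Complex.continuous_exp.tendsto _).comp ((Complex.continuous_ofReal.tendsto _).comp h)
    refine h2.congr fun ε => ?_
    simp only [Function.comp]
    rw [← Complex.exp_nat_mul]
    congr 1
    push_cast
    ring
  have hD : Tendsto (fun ε : ℝ =>
      (∑ v ∈ S, (w v : ℂ) * Complex.exp ((ε * a v : ℝ) * Complex.I)) ^ ⌊t / ε ^ 2⌋₊ -
      (Complex.exp ((-(ε ^ 2 * q) / 2 : ℝ))) ^ ⌊t / ε ^ 2⌋₊) (𝓝[>] 0) (𝓝 0) := by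
    have hbd : Tendsto (fun ε : ℝ => t * (3 * K * ε + q ^ 2 * ε ^ 2)) (𝓝[>] 0) (𝓝 0) := by
      have : Tendsto (fun ε : ℝ => t * (3 * K * ε + q ^ 2 * ε ^ 2)) (𝓝 0)
        (𝓝 (t * (3 * K * 0 + q ^ 2 * 0 ^ 2))) := (Continuous.tendsto (by fun_prop) 0)
      simpa using this.mono_left nhdsWithin_le_nhds
    refine squeeze_zero_norm' ?_ hbd
    have hsmall : ∀ᶠ ε : ℝ in 𝓝[>] 0, ε * M < 1 ∧ ε ^ 2 * q < 1 := by
      have hc1 : Tendsto (fun ε : ℝ => ε * M) (𝓝 0) (𝓝 (0 * M)) := Continuous.tendsto (by fun_prop) 0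
      have hc2 : Tendsto (fun ε : ℝ => ε ^ 2 * q) (𝓝 0) (𝓝 (0 ^ 2 * q)) :=
        Continuous.tendsto (by fun_prop) 0
      have e1 := (hc1.mono_left (nhdsWithin_le_nhds (s := Set.Ioi 0))).eventually (gt_mem_nhds (show 0 * M < 1 by simp))
      have e2 := (hc2.mono_left (nhdsWithin_le_nhds (s := Set.Ioi 0))).eventually
        (gt_mem_nhds (show 0 ^ 2 * q < 1 by simp))
      exact e1.and e2
    filter_upwards [self_mem_nhdsWithin, hsmall] with ε hε hsm
    have hε0 : 0 < ε := hε
    have hε' : 0 < ε ^ 2 := pow_pos hε0 2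
    set z := ∑ v ∈ S, (w v : ℂ) * Complex.exp ((ε * a v : ℝ) * Complex.I) with hz
    have hzn : ‖z‖ ≤ 1 := by
      refine (norm_sum_le _ _).trans ?_
      rw [← h1]
      refine Finset.sum_le_sum fun v _ => ?_
      rw [norm_mul, Complex.norm_exp_ofReal_mul_I, mul_one, Complex.norm_real, Real.norm_eq_abs,
        abs_of_nonneg (hw v)]
    have hwn : ‖Complex.exp ((-(ε ^ 2 * q) / 2 : ℝ))‖ ≤ 1 := by
      rw [Complex.norm_exp, Complex.ofReal_re, Real.exp_le_one_iff]
      have := mul_nonneg hε'.le hq0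
      linarith
    have hzT : ‖z - (1 - ε ^ 2 * q / 2)‖ ≤ 3 * K * ε ^ 3 := by
      have : z - (1 - (ε:ℂ) ^ 2 * q / 2) = ∑ v ∈ S, (w v : ℂ) *
          (Complex.exp ((ε * a v : ℝ) * Complex.I) - (1 + (ε * a v : ℝ) * Complex.I +
            ((ε * a v : ℝ) * Complex.I) ^ 2 / 2)) := by
        have h1c : ∑ v ∈ S, (w v : ℂ) = 1 := by exact_mod_cast h1
        have h0c : ∑ v ∈ S, (w v : ℂ) * a v = 0 := by exact_mod_cast h0
        have hqc : (q : ℂ) = ∑ v ∈ S, (w v : ℂ) * a v ^ 2 := by rw [hq]; push_cast; rfl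
        have : ∀ v, (w v : ℂ) *
          (Complex.exp ((ε * a v : ℝ) * Complex.I) - (1 + (ε * a v : ℝ) * Complex.I +
            ((ε * a v : ℝ) * Complex.I) ^ 2 / 2)) =
            (w v : ℂ) * Complex.exp ((ε * a v : ℝ) * Complex.I) - ((w v : ℂ) +
              (w v * a v) * (ε * Complex.I) - (w v * a v ^ 2) * (ε ^ 2 / 2)) := by
          intro v
          push_cast
          rw [mul_pow _ Complex.I, Complex.I_sq]; ring
        simp only [this]
        rw [Finset.sum_sub_distrib, Finset.sum_sub_distrib, Finset.sum_add_distrib,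
          ← Finset.sum_mul, ← Finset.sum_mul, h1c, h0c, ← hqc, ← hz]
        ring
      rw [this, hK, Finset.mul_sum, Finset.sum_mul]
      refine (norm_sum_le _ _).trans (Finset.sum_le_sum fun v hv => ?_)
      have hxn : ‖((ε * a v : ℝ) : ℂ) * Complex.I‖ = ε * |a v| := by
        rw [norm_mul, Complex.norm_I, mul_one, Complex.norm_real, Real.norm_eq_abs, abs_mul,
          abs_of_pos hε0]
      have hav : |a v| ≤ M := Finset.single_le_sum (f := fun v => |a v|)
        (fun _ _ => abs_nonneg _) hv
      have hb := gp_exp_bound (((ε * a v : ℝ) : ℂ) * Complex.I)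
        (by rw [hxn]; exact (mul_le_mul_of_nonneg_left hav hε0.le).trans hsm.1.le)
      rw [hxn] at hb
      rw [norm_mul, Complex.norm_real, Real.norm_eq_abs, abs_of_nonneg (hw v)]
      calc _ ≤ w v * (3 * (ε * |a v|) ^ 3) := mul_le_mul_of_nonneg_left hb (hw v)
        _ = _ := by ring
    have hwT : ‖Complex.exp ((-(ε ^ 2 * q) / 2 : ℝ)) - (1 - ε ^ 2 * q / 2)‖ ≤ q ^ 2 * ε ^ 4 := by
      have hnn : 0 ≤ ε ^ 2 * q := mul_nonneg hε'.le hq0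
      have hn : ‖((-(ε ^ 2 * q) / 2 : ℝ) : ℂ)‖ = ε ^ 2 * q / 2 := by
        rw [Complex.norm_real, Real.norm_eq_abs, abs_of_nonpos (by linarith)]; ring
      have := Complex.norm_exp_sub_one_sub_id_le (x := ((-(ε ^ 2 * q) / 2 : ℝ) : ℂ))
        (by rw [hn]; linarith [hsm.2])
      rw [hn] at this
      have e : Complex.exp ((-(ε ^ 2 * q) / 2 : ℝ)) - (1 - ε ^ 2 * q / 2) =
        Complex.exp ((-(ε ^ 2 * q) / 2 : ℝ)) - 1 - ((-(ε ^ 2 * q) / 2 : ℝ) : ℂ) := by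
        push_cast; ring
      rw [e]
      refine this.trans ?_
      nlinarith [sq_nonneg (ε ^ 2 * q)]
    have hsub : ‖z - Complex.exp ((-(ε ^ 2 * q) / 2 : ℝ))‖ ≤ 3 * K * ε ^ 3 + q ^ 2 * ε ^ 4 := by
      have e : z - Complex.exp ((-(ε ^ 2 * q) / 2 : ℝ)) = (z - (1 - ε ^ 2 * q / 2)) -
        (Complex.exp ((-(ε ^ 2 * q) / 2 : ℝ)) - (1 - ε ^ 2 * q / 2)) := by ring
      rw [e]
      exact (norm_sub_le _ _).trans (add_le_add hzT hwT)
    have hn := Nat.floor_le (div_nonneg ht.le hε'.le)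
    rw [le_div_iff₀ hε'] at hn
    calc _ ≤ (⌊t / ε ^ 2⌋₊ : ℝ) * ‖z - Complex.exp ((-(ε ^ 2 * q) / 2 : ℝ))‖ :=
          gp_pow_sub _ _ hzn hwn _
      _ ≤ (⌊t / ε ^ 2⌋₊ : ℝ) * (3 * K * ε ^ 3 + q ^ 2 * ε ^ 4) := by gcongr
      _ = ((⌊t / ε ^ 2⌋₊ : ℝ) * ε ^ 2) * (3 * K * ε + q ^ 2 * ε ^ 2) := by ring
      _ ≤ _ := by gcongr
  simpa using hD.add hB

/-- Weak convergence of simple gossip on ℤ^d to the fundamental solution of the anisotropic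
heat equation (lattice central limit theorem). -/
theorem simple_gossip_weak_convergence
    (d : ℕ) (hd : 1 ≤ d) (ω : (Fin d → ℤ) → ℝ)
    (hfin : (Function.support ω).Finite) (hnn : ∀ v, 0 ≤ ω v)
    (hmass : ∑' v : Fin d → ℤ, ω v = 1)
    (hcent : ∀ i, ∑' v : Fin d → ℤ, ω v * (v i : ℝ) = 0)
    (hQ : (covQ d ω).PosDef)
    (p : ℕ → (Fin d → ℤ) → ℝ)
    (hp0 : ∀ v, p 0 v = if v = 0 then 1 else 0)
    (hp : ∀ n, p (n + 1) = latticeConv ω (p n))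
    (t : ℝ) (ht : 0 < t)
    (f : (Fin d → ℝ) → ℝ) (hf : Continuous f) (hfb : ∃ M, ∀ y, |f y| ≤ M) :
    Tendsto (fun ε : ℝ => ∑' v : Fin d → ℤ, p ⌊t / ε ^ 2⌋₊ v * f (fun i => ε * (v i : ℝ)))
      (𝓝[>] 0)
      (𝓝 (∫ y : Fin d → ℝ, f y *
          ((2 * π * t) ^ (-(d : ℝ) / 2) * (Real.sqrt (covQ d ω).det)⁻¹ *
            Real.exp (-(y ⬝ᵥ ((covQ d ω)⁻¹ *ᵥ y)) / (2 * t))))) := by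
  have hsum : ∀ n, (Function.support (p n)).Finite ∧ (∀ v, 0 ≤ p n v) ∧
      ∀ χ : (Fin d → ℤ) → ℂ, (∀ v w, χ (v + w) = χ v * χ w) → χ 0 = 1 →
        ∑' v, (p n v : ℂ) * χ v = (∑' v, (ω v : ℂ) * χ v) ^ n := by
    intro n
    induction n with
    | zero =>
      refine ⟨(Set.finite_singleton 0).subset fun v hv => ?_, fun v => ?_, fun χ _ h1 => ?_⟩
      · by_contra h
        exact hv (by rw [hp0, if_neg (show ¬ v = 0 from h)])
      · rw [hp0]; split_ifs <;> simp
      · rw [tsum_eq_single 0 (fun v hv => by rw [hp0, if_neg hv]; simp), hp0]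
        simp [h1]
    | succ n ih =>
      obtain ⟨h1, h2, h3⟩ := ih
      rw [hp n]
      refine ⟨gp_conv_support ω _ hfin h1,
        fun v => tsum_nonneg fun η => mul_nonneg (hnn _) (h2 _), fun χ hχ hχ0 => ?_⟩
      rw [gp_conv_char ω _ hfin h1 χ hχ, h3 χ hχ hχ0]
      ring
  have hfins : ∀ (x : (Fin d → ℤ) → ℝ) (hx : (Function.support x).Finite)
      (g : (Fin d → ℤ) → ℂ), ∑' v, (x v : ℂ) * g v = ∑ v ∈ hx.toFinset, (x v : ℂ) * g v := by
    intro x hx g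
    refine tsum_eq_sum fun v hv => ?_
    have : x v = 0 := by simpa using hv
    simp [this]
  have hfinr : ∀ (x : (Fin d → ℤ) → ℝ) (hx : (Function.support x).Finite)
      (g : (Fin d → ℤ) → ℝ), ∑' v, x v * g v = ∑ v ∈ hx.toFinset, x v * g v := by
    intro x hx g
    refine tsum_eq_sum fun v hv => ?_
    have : x v = 0 := by simpa using hv
    simp [this]
  have hω1 : ∑ v ∈ hfin.toFinset, ω v = 1 := by
    have := hfinr ω hfin (fun _ => 1)
    simp only [mul_one] at this
    rw [← this, hmass]
  have hmass' : ∀ n, ∑ v ∈ (hsum n).1.toFinset, p n v = 1 := by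
    intro n
    have h := (hsum n).2.2 (fun _ => 1) (by simp) rfl
    rw [hfins _ (hsum n).1, hfins _ hfin] at h
    simp only [mul_one] at h
    rw [← Complex.ofReal_sum, ← Complex.ofReal_sum, hω1] at h
    simpa using congrArg Complex.re h
  let T : ℝ → (Fin d → ℤ) → EuclideanSpace ℝ (Fin d) :=
    fun ε v => WithLp.toLp 2 (fun i => ε * (v i : ℝ))
  let m : ℝ → Measure (EuclideanSpace ℝ (Fin d)) := fun ε =>
    ∑ v ∈ (hsum ⌊t / ε ^ 2⌋₊).1.toFinset, ENNReal.ofReal (p ⌊t / ε ^ 2⌋₊ v) • Measure.dirac (T ε v)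
  have hm : ∀ ε, IsProbabilityMeasure (m ε) := by
    intro ε
    constructor
    simp only [m, Measure.finsetSum_apply, Measure.smul_apply, measure_univ, smul_eq_mul, mul_one]
    rw [← ENNReal.ofReal_sum_of_nonneg (fun v _ => (hsum _).2.1 v), hmass', ENNReal.ofReal_one]
  have hchar : ∀ ε ξ, charFun (m ε) ξ = (∑ v ∈ hfin.toFinset, (ω v : ℂ) *
      Complex.exp ((ε * ∑ i, ξ i * (v i : ℝ) : ℝ) * Complex.I)) ^ ⌊t / ε ^ 2⌋₊ := by
    intro ε ξ
    have h := (hsum ⌊t / ε ^ 2⌋₊).2.2 (fun v =>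
      Complex.exp ((ε * ∑ i, ξ i * (v i : ℝ) : ℝ) * Complex.I)) (fun v w => by
        rw [← Complex.exp_add]
        congr 1
        rw [← add_mul, ← Complex.ofReal_add]
        congr 2
        simp [mul_add, Finset.sum_add_distrib]) (by simp)
    rw [hfins _ (hsum _).1, hfins _ hfin] at h
    rw [← h, charFun_apply, gp_integral _ _ (hsum _).2.1]
    refine Finset.sum_congr rfl fun v _ => ?_
    rw [Complex.real_smul]
    congr 4
    simp only [T, PiLp.inner_apply, Finset.mul_sum]
    refine Finset.sum_congr rfl fun i _ => ?_
    simp; ring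
  have hQt : ((t • covQ d ω)).PosSemidef := (hQ.smul ht).posSemidef
  have hquad : ∀ ξ : EuclideanSpace ℝ (Fin d), ∑ v ∈ hfin.toFinset,
      ω v * (∑ i, ξ i * (v i : ℝ)) ^ 2 = WithLp.ofLp ξ ⬝ᵥ covQ d ω *ᵥ WithLp.ofLp ξ := by
    intro ξ
    have hc : ∀ i j, covQ d ω i j = ∑ v ∈ hfin.toFinset, ω v * ((v i : ℝ) * (v j : ℝ)) := by
      intro i j
      rw [← hfinr, covQ, Matrix.of_apply]
      simp only [mul_assoc]
    simp only [dotProduct, Matrix.mulVec, hc, Finset.mul_sum, Finset.sum_mul, pow_two]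
    rw [Finset.sum_comm]
    refine Finset.sum_congr rfl fun i _ => ?_
    rw [Finset.sum_comm]
    refine Finset.sum_congr rfl fun j _ => ?_
    refine Finset.sum_congr rfl fun v _ => ?_
    ring
  have hcentξ : ∀ ξ : EuclideanSpace ℝ (Fin d), ∑ v ∈ hfin.toFinset,
      ω v * (∑ i, ξ i * (v i : ℝ)) = 0 := by
    intro ξ
    simp only [Finset.mul_sum]
    rw [Finset.sum_comm]
    refine Finset.sum_eq_zero fun i _ => ?_
    have := hcent i
    rw [hfinr _ hfin] at this
    calc _ = ξ i * ∑ v ∈ hfin.toFinset, ω v * (v i : ℝ) := by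
          rw [Finset.mul_sum]
          exact Finset.sum_congr rfl fun v _ => by ring
      _ = 0 := by rw [this, mul_zero]
  have hlim : ∀ ξ, Tendsto (fun ε => charFun (m ε) ξ) (𝓝[>] 0)
      (𝓝 (charFun (ProbabilityTheory.multivariateGaussian 0 (t • covQ d ω)) ξ)) := by
    intro ξ
    simp only [hchar]
    have h := gp_limit hfin.toFinset ω (fun v => ∑ i, ξ i * (v i : ℝ)) hnn hω1 (hcentξ ξ) t ht
    rw [hquad ξ] at h
    rw [ProbabilityTheory.charFun_multivariateGaussian hQt]
    convert h using 3
    simp [Matrix.smul_mulVec]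
    ring
  rw [← gp_gauss_integral d _ hQ t ht f hf]
  refine tendsto_of_seq_tendsto fun u hu => ?_
  let P : ℕ → ProbabilityMeasure (EuclideanSpace ℝ (Fin d)) := fun k => ⟨m (u k), hm (u k)⟩
  let P0 : ProbabilityMeasure (EuclideanSpace ℝ (Fin d)) :=
    ⟨ProbabilityTheory.multivariateGaussian 0 (t • covQ d ω), inferInstance⟩
  have hP : Tendsto P atTop (𝓝 P0) :=
    ProbabilityMeasure.tendsto_iff_tendsto_charFun.2 fun ξ => (hlim ξ).comp hu
  obtain ⟨M, hM⟩ := hfb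
  let F : BoundedContinuousFunction (EuclideanSpace ℝ (Fin d)) ℝ :=
    BoundedContinuousFunction.ofNormedAddCommGroup (fun y => f (WithLp.ofLp y))
      (by fun_prop) M (fun y => hM _)
  have hF := ProbabilityMeasure.tendsto_iff_forall_integral_tendsto.1 hP F
  refine hF.congr fun k => ?_
  change ∫ y, f (WithLp.ofLp y) ∂(m (u k)) = _
  rw [gp_integral _ _ (hsum _).2.1, Function.comp_apply, hfinr _ (hsum _).1]
  rfl
end
end

section
/- Assume in addition that ω is aperiodic. Then sup_{v∈ℤ^d} | ω^{∗n}(v) − (2πn)^{−d/2} (det Q)^{−1/2} exp(−⟨v, Q⁻¹v⟩/(2n)) | = o(n^{−d/2}) as n → ∞; that is, n^{d/2} times this supremum tends to 0. (Local central limit theorem for simple gossip on ℤ^d.) -/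
open MeasureTheory Matrix Filter Topology Real

noncomputable section

def dz {d : ℕ} (ξ : Fin d → ℝ) (v : Fin d → ℤ) : ℝ := ∑ i, ξ i * (v i : ℝ)

lemma dz_cont {d : ℕ} (v : Fin d → ℤ) : Continuous (fun ξ : Fin d → ℝ => dz ξ v) := by
  unfold dz; fun_prop

lemma dz_smul {d : ℕ} (r : ℝ) (ξ : Fin d → ℝ) (v : Fin d → ℤ) : dz (r • ξ) v = r * dz ξ v := by
  simp [dz, Finset.mul_sum, mul_assoc]

lemma dz_sub {d : ℕ} (ξ : Fin d → ℝ) (v u : Fin d → ℤ) : dz ξ (v - u) = dz ξ v - dz ξ u := by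
  simp [dz, mul_sub, Finset.sum_sub_distrib]

lemma ft_eq_s4 {d : ℕ} {ω : (Fin d → ℤ) → ℝ} {S : Finset (Fin d → ℤ)} (hS : ∀ v ∉ S, ω v = 0)
    (ξ : Fin d → ℝ) :
    ftOmega ω ξ = ∑ v ∈ S, (ω v : ℂ) * Complex.exp (Complex.I * (dz ξ v : ℂ)) := by
  unfold ftOmega dz
  rw [tsum_eq_sum (s := S)]
  intro v hv; simp [hS v hv]

lemma ft_cont {d : ℕ} {ω : (Fin d → ℤ) → ℝ} {S : Finset (Fin d → ℤ)} (hS : ∀ v ∉ S, ω v = 0) :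
    Continuous (ftOmega ω) := by
  rw [show ftOmega ω = _ from funext (ft_eq_s4 hS)]
  have := fun v => dz_cont (d := d) v
  fun_prop

def qf {d : ℕ} (ω : (Fin d → ℤ) → ℝ) (ξ : Fin d → ℝ) : ℝ := ξ ⬝ᵥ (covQ d ω *ᵥ ξ)

lemma qf_eq {d : ℕ} {ω : (Fin d → ℤ) → ℝ} {S : Finset (Fin d → ℤ)} (hS : ∀ v ∉ S, ω v = 0)
    (ξ : Fin d → ℝ) : qf ω ξ = ∑ v ∈ S, ω v * (dz ξ v) ^ 2 := by
  have h : ∀ i j, covQ d ω i j = ∑ v ∈ S, ω v * (v i : ℝ) * (v j : ℝ) := by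
    intro i j
    simp only [covQ, Matrix.of_apply]
    rw [tsum_eq_sum (s := S)]
    intro v hv; simp [hS v hv]
  simp only [qf, dotProduct, mulVec, h, dz, sq, Finset.sum_mul, Finset.mul_sum]
  simp_rw [Finset.sum_comm (s := S)]
  refine Finset.sum_congr rfl fun i _ => Finset.sum_congr rfl fun j _ =>
    Finset.sum_congr rfl fun v _ => by ring

lemma exp_taylor (x : ℝ) (hx : |x| ≤ 1) :
    ‖Complex.exp (Complex.I * x) - (1 + Complex.I * x - (x ^ 2 / 2 : ℝ))‖ ≤ |x| ^ 3 := by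
  have h := Complex.exp_bound (x := Complex.I * x) (by simpa using hx) (n := 3) (by norm_num)
  have e : ∑ m ∈ Finset.range 3, (Complex.I * x) ^ m / (m.factorial : ℂ)
      = (1 + Complex.I * x - (x ^ 2 / 2 : ℝ)) := by
    simp [Finset.sum_range_succ, mul_pow, Nat.factorial]; ring
  rw [e] at h
  refine h.trans ?_
  simp only [norm_mul, Complex.norm_I, one_mul, Complex.norm_real, Real.norm_eq_abs]
  have : 0 ≤ |x| ^ 3 := by positivity
  norm_num [Nat.factorial]
  nlinarith

lemma ft_taylor {d : ℕ} {ω : (Fin d → ℤ) → ℝ} {S : Finset (Fin d → ℤ)} (hS : ∀ v ∉ S, ω v = 0)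
    (hnn : ∀ v, 0 ≤ ω v) (hmass : ∑' v : Fin d → ℤ, ω v = 1)
    (hcent : ∀ i, ∑' v : Fin d → ℤ, ω v * (v i : ℝ) = 0) (ξ : Fin d → ℝ) (δ : ℝ) (hδ : δ ≤ 1)
    (hb : ∀ v ∈ S, |dz ξ v| ≤ δ) :
    ‖ftOmega ω ξ - (1 - (qf ω ξ / 2 : ℝ))‖ ≤ δ * qf ω ξ := by
  have hm : ∑ v ∈ S, ω v = 1 := by rw [← hmass, tsum_eq_sum (s := S)]; exact hS
  have hc : ∑ v ∈ S, ω v * dz ξ v = 0 := by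
    simp only [dz, Finset.mul_sum]
    rw [Finset.sum_comm]
    refine Finset.sum_eq_zero fun i _ => ?_
    have := hcent i
    rw [tsum_eq_sum (s := S) (by intro v hv; simp [hS v hv])] at this
    rw [← mul_zero (ξ i), ← this, Finset.mul_sum]
    exact Finset.sum_congr rfl fun v _ => by ring
  have e : (1 - (qf ω ξ / 2 : ℝ) : ℂ) =
      ∑ v ∈ S, (ω v : ℂ) * (1 + Complex.I * dz ξ v - (dz ξ v ^ 2 / 2 : ℝ)) := by
    have : ∑ v ∈ S, (ω v : ℂ) * (1 + Complex.I * dz ξ v - (dz ξ v ^ 2 / 2 : ℝ)) =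
      ((∑ v ∈ S, ω v : ℝ) : ℂ) + Complex.I * ((∑ v ∈ S, ω v * dz ξ v : ℝ) : ℂ)
        - ((∑ v ∈ S, ω v * dz ξ v ^ 2 : ℝ) : ℂ) / 2 := by
      push_cast
      rw [Finset.mul_sum, Finset.sum_div, ← Finset.sum_add_distrib, ← Finset.sum_sub_distrib]
      exact Finset.sum_congr rfl fun v _ => by ring
    rw [this, hm, hc, ← qf_eq hS]
    push_cast; ring
  rw [e, ft_eq_s4 hS, ← Finset.sum_sub_distrib, qf_eq hS, Finset.mul_sum]
  refine (norm_sum_le _ _).trans (Finset.sum_le_sum fun v hv => ?_)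
  rw [← mul_sub, norm_mul, Complex.norm_real, Real.norm_of_nonneg (hnn v)]
  calc ω v * _ ≤ ω v * |dz ξ v| ^ 3 :=
        mul_le_mul_of_nonneg_left (exp_taylor _ ((hb v hv).trans hδ)) (hnn v)
    _ = |dz ξ v| * (ω v * dz ξ v ^ 2) := by rw [← sq_abs (dz ξ v)]; ring
    _ ≤ _ := mul_le_mul_of_nonneg_right (hb v hv) (mul_nonneg (hnn v) (sq_nonneg _))

lemma dz_bound {d : ℕ} (S : Finset (Fin d → ℤ)) :
    ∃ M : ℝ, 0 < M ∧ ∀ ξ : Fin d → ℝ, ∀ v ∈ S, |dz ξ v| ≤ M * ‖ξ‖ := by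
  refine ⟨1 + ∑ v ∈ S, ∑ i, |(v i : ℝ)|, by positivity, fun ξ v hv => ?_⟩
  calc |dz ξ v| ≤ ∑ i, |ξ i * (v i : ℝ)| := Finset.abs_sum_le_sum_abs _ _
    _ ≤ ∑ i, ‖ξ‖ * |(v i : ℝ)| := by
        refine Finset.sum_le_sum fun i _ => ?_
        rw [abs_mul]
        exact mul_le_mul_of_nonneg_right (norm_le_pi_norm ξ i) (abs_nonneg _)
    _ = (∑ i, |(v i : ℝ)|) * ‖ξ‖ := by rw [← Finset.mul_sum, mul_comm]
    _ ≤ _ := by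
        refine mul_le_mul_of_nonneg_right ?_ (norm_nonneg _)
        have := Finset.single_le_sum (f := fun v : Fin d → ℤ => ∑ i, |(v i : ℝ)|)
          (fun v _ => by positivity) hv
        linarith

lemma qf_cont {d : ℕ} (ω : (Fin d → ℤ) → ℝ) : Continuous (qf ω) := by
  unfold qf dotProduct mulVec dotProduct; fun_prop

lemma qf_smul {d : ℕ} (ω : (Fin d → ℤ) → ℝ) (r : ℝ) (ξ : Fin d → ℝ) :
    qf ω (r • ξ) = r ^ 2 * qf ω ξ := by
  simp [qf, mulVec_smul]; ring

lemma ft_bound {d : ℕ} {ω : (Fin d → ℤ) → ℝ} {S : Finset (Fin d → ℤ)} (hS : ∀ v ∉ S, ω v = 0)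
    (hnn : ∀ v, 0 ≤ ω v) (hmass : ∑' v : Fin d → ℤ, ω v = 1)
    (hcent : ∀ i, ∑' v : Fin d → ℤ, ω v * (v i : ℝ) = 0)
    (haper : ∀ ξ : Fin d → ℝ, (∀ i, ξ i ∈ Set.Icc (-π) π) → ξ ≠ 0 →
      ‖ftOmega ω ξ‖ < 1) :
    ∃ c : ℝ, 0 < c ∧ c ≤ 1 / 2 ∧ ∀ ξ : Fin d → ℝ, (∀ i, ξ i ∈ Set.Icc (-π) π) →
      ‖ftOmega ω ξ‖ ≤ Real.exp (-(c * qf ω ξ)) := by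
  have q0 : ∀ ξ, 0 ≤ qf ω ξ := fun ξ => by
    rw [qf_eq hS]; exact Finset.sum_nonneg fun v _ => mul_nonneg (hnn v) (sq_nonneg _)
  have hm : ∑ v ∈ S, ω v = 1 := by rw [← hmass, tsum_eq_sum (s := S)]; exact hS
  obtain ⟨M, hM, hMb⟩ := dz_bound S
  set K : Set (Fin d → ℝ) := Set.pi Set.univ (fun _ => Set.Icc (-π) π) with hK
  have Kc : IsCompact K := isCompact_univ_pi fun _ => isCompact_Icc
  set K' : Set (Fin d → ℝ) := K ∩ {ξ | 1 / 4 ≤ M * ‖ξ‖} with hK'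
  have K'c : IsCompact K' := Kc.inter_right (isClosed_le (by fun_prop) (by fun_prop))
  obtain ⟨B, hB⟩ : ∃ B, ∀ ξ ∈ K, qf ω ξ ≤ B := by
    obtain ⟨B, hB⟩ := Kc.bddAbove_image (qf_cont ω).continuousOn
    exact ⟨B, fun ξ hξ => hB ⟨ξ, hξ, rfl⟩⟩
  obtain ⟨ε, hε, hεb⟩ : ∃ ε : ℝ, 0 < ε ∧ ∀ ξ ∈ K', ‖ftOmega ω ξ‖ ≤ 1 - ε := by
    rcases K'.eq_empty_or_nonempty with h | h
    · exact ⟨1, one_pos, by simp [h]⟩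
    · obtain ⟨ξ₀, h0, hmax⟩ := K'c.exists_isMaxOn h (ft_cont hS).norm.continuousOn
      refine ⟨1 - ‖ftOmega ω ξ₀‖, ?_, fun ξ hξ => by have := hmax hξ; simpa using this⟩
      have hne : ξ₀ ≠ 0 := by
        rintro rfl
        have := h0.2
        norm_num at this
      have := haper ξ₀ (fun i => h0.1 i (Set.mem_univ i)) hne
      linarith
  have hB1 : 0 < |B| + 1 := by positivity
  refine ⟨min (1 / 4) (ε / (|B| + 1)), by positivity, (min_le_left _ _).trans (by norm_num),
    fun ξ hξ => ?_⟩
  have hξK : ξ ∈ K := fun i _ => hξ i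
  rcases le_total (1 / 4) (M * ‖ξ‖) with h | h
  · refine (hεb ξ ⟨hξK, h⟩).trans ?_
    have h1 : min (1 / 4) (ε / (|B| + 1)) * qf ω ξ ≤ ε := by
      calc _ ≤ (ε / (|B| + 1)) * qf ω ξ := mul_le_mul_of_nonneg_right (min_le_right _ _) (q0 ξ)
        _ ≤ (ε / (|B| + 1)) * (|B| + 1) := by
          refine mul_le_mul_of_nonneg_left ?_ (by positivity)
          linarith [hB ξ hξK, le_abs_self B]
        _ = ε := by field_simp
    have := Real.add_one_le_exp (-(min (1 / 4) (ε / (|B| + 1)) * qf ω ξ))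
    linarith
  · have ht := ft_taylor hS hnn hmass hcent ξ (1 / 4) (by norm_num) fun v hv => (hMb ξ v hv).trans h
    have hq : qf ω ξ ≤ 1 := by
      rw [qf_eq hS, ← hm]
      refine Finset.sum_le_sum fun v hv => ?_
      have := (hMb ξ v hv).trans h
      have h2 : dz ξ v ^ 2 ≤ 1 := by rw [← sq_abs]; nlinarith [abs_nonneg (dz ξ v)]
      nlinarith [hnn v]
    have hn : ‖(1 - (qf ω ξ / 2 : ℝ) : ℂ)‖ = 1 - qf ω ξ / 2 := by
      rw [← Complex.ofReal_one, ← Complex.ofReal_sub, Complex.norm_real, Real.norm_of_nonneg]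
      linarith
    have h3 : ‖ftOmega ω ξ‖ ≤ 1 - qf ω ξ / 4 := by
      have := norm_le_norm_add_norm_sub (1 - (qf ω ξ / 2 : ℝ) : ℂ) (ftOmega ω ξ)
      rw [norm_sub_rev _ (ftOmega ω ξ)] at this
      linarith
    have := Real.add_one_le_exp (-(min (1 / 4) (ε / (|B| + 1)) * qf ω ξ))
    have h1 : min (1 / 4) (ε / (|B| + 1)) * qf ω ξ ≤ 1 / 4 * qf ω ξ :=
      mul_le_mul_of_nonneg_right (min_le_left _ _) (q0 ξ)
    linarith

lemma ft_lim {d : ℕ} {ω : (Fin d → ℤ) → ℝ} {S : Finset (Fin d → ℤ)} (hS : ∀ v ∉ S, ω v = 0)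
    (hnn : ∀ v, 0 ≤ ω v) (hmass : ∑' v : Fin d → ℤ, ω v = 1)
    (hcent : ∀ i, ∑' v : Fin d → ℤ, ω v * (v i : ℝ) = 0) (x : Fin d → ℝ) :
    Tendsto (fun n : ℕ => (ftOmega ω ((Real.sqrt n)⁻¹ • x)) ^ n) atTop
      (𝓝 (Complex.exp (-(qf ω x / 2 : ℝ)))) := by
  obtain ⟨M, hM, hMb⟩ := dz_bound S
  have hs : Tendsto (fun n : ℕ => M * ‖(Real.sqrt n)⁻¹ • x‖) atTop (𝓝 0) := by
    have h1 : Tendsto (fun n : ℕ => (Real.sqrt n)⁻¹) atTop (𝓝 0) :=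
      tendsto_inv_atTop_zero.comp (Real.tendsto_sqrt_atTop.comp tendsto_natCast_atTop_atTop)
    have := ((h1.smul_const x).norm).const_mul M
    simpa using this
  have key : Tendsto (fun n : ℕ => (n : ℂ) * (ftOmega ω ((Real.sqrt n)⁻¹ • x) - 1)) atTop
      (𝓝 (-(qf ω x / 2 : ℝ))) := by
    rw [tendsto_iff_norm_sub_tendsto_zero]
    have hs2 := hs.mul_const (qf ω x)
    rw [zero_mul] at hs2
    refine squeeze_zero' (Eventually.of_forall fun _ => norm_nonneg _) ?_ hs2
    filter_upwards [hs.eventually (gt_mem_nhds one_pos), eventually_gt_atTop 0] with n h1 hn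
    have hn' : (0 : ℝ) < n := by exact_mod_cast hn
    have ht := ft_taylor hS hnn hmass hcent ((Real.sqrt n)⁻¹ • x) _ h1.le (hMb _)
    have e : qf ω ((Real.sqrt n)⁻¹ • x) = qf ω x / n := by
      rw [qf_smul, inv_pow, Real.sq_sqrt hn'.le]; ring
    rw [e] at ht
    have e2 : (n : ℂ) * (ftOmega ω ((Real.sqrt n)⁻¹ • x) - 1) - (-(qf ω x / 2 : ℝ)) =
       (n : ℂ) * (ftOmega ω ((Real.sqrt n)⁻¹ • x) - (1 - (qf ω x / n / 2 : ℝ))) := by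
      have : (n : ℂ) ≠ 0 := by exact_mod_cast hn.ne'
      push_cast; field_simp; ring
    rw [e2, norm_mul, Complex.norm_natCast]
    calc (n : ℝ) * _ ≤ n * _ := mul_le_mul_of_nonneg_left ht hn'.le
      _ = _ := by field_simp
  have := Complex.tendsto_one_add_pow_exp_of_tendsto key
  simpa using this

def bx (d : ℕ) : Set (Fin d → ℝ) := Set.pi Set.univ (fun _ => Set.Ioc (-π) π)

lemma bx_meas (d : ℕ) : MeasurableSet (bx d) := MeasurableSet.univ_pi fun _ => measurableSet_Ioc

lemma orth1 (k : ℤ) : ∫ x in Set.Ioc (-π) π, Complex.exp (-(Complex.I * (x * (k : ℝ) : ℝ))) =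
    if k = 0 then (2 * π : ℂ) else 0 := by
  rw [← intervalIntegral.integral_of_le (by linarith [pi_pos])]
  split_ifs with h
  · subst h
    simp; ring
  · have hc : (-(Complex.I * k)) ≠ 0 := by simp [h]
    have : ∀ x : ℝ, Complex.exp (-(Complex.I * (x * (k : ℝ) : ℝ))) =
        Complex.exp ((-(Complex.I * k)) * x) := by
      intro x; congr 1; push_cast; ring
    simp_rw [this]
    rw [integral_exp_mul_complex hc, div_eq_zero_iff]
    left
    rw [sub_eq_zero, Complex.exp_eq_exp_iff_exists_int]
    exact ⟨-k, by push_cast; ring⟩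

lemma orth {d : ℕ} (v : Fin d → ℤ) :
    ∫ ξ in bx d, Complex.exp (-(Complex.I * (dz ξ v : ℂ))) =
      if v = 0 then (2 * π : ℂ) ^ d else 0 := by
  have : ∀ ξ : Fin d → ℝ, Complex.exp (-(Complex.I * (dz ξ v : ℂ))) =
      ∏ i, Complex.exp (-(Complex.I * (ξ i * (v i : ℝ) : ℝ))) := by
    intro ξ
    rw [← Complex.exp_sum]
    congr 1
    simp [dz, Finset.mul_sum]
  simp_rw [this]
  rw [bx, volume_pi, Measure.restrict_pi_pi,
    integral_fintype_prod_eq_prod (f := fun i (x : ℝ) =>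
      Complex.exp (-(Complex.I * (x * (v i : ℝ) : ℝ))))]
  simp_rw [orth1]
  split_ifs with h
  · subst h; simp
  · obtain ⟨i, hi⟩ := Function.ne_iff.1 h
    exact Finset.prod_eq_zero (Finset.mem_univ i) (by simpa using hi)

lemma bx_sub (d : ℕ) : bx d ⊆ Set.pi Set.univ (fun _ => Set.Icc (-π) π) :=
  Set.pi_mono fun _ _ => Set.Ioc_subset_Icc_self

lemma intOn_bx {d : ℕ} {f : (Fin d → ℝ) → ℂ} (hf : Continuous f) : IntegrableOn f (bx d) :=
  (hf.continuousOn.integrableOn_compact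
    (isCompact_univ_pi fun _ => isCompact_Icc)).mono_set (bx_sub d)

lemma inversion {d : ℕ} {ω : (Fin d → ℤ) → ℝ} {S : Finset (Fin d → ℤ)} (hS : ∀ v ∉ S, ω v = 0)
    (p : ℕ → (Fin d → ℤ) → ℝ)
    (hp0 : ∀ v, p 0 v = if v = 0 then 1 else 0)
    (hp : ∀ n, p (n + 1) = latticeConv ω (p n)) (n : ℕ) (v : Fin d → ℤ) :
    ∫ ξ in bx d, ftOmega ω ξ ^ n * Complex.exp (-(Complex.I * (dz ξ v : ℂ))) =
      (2 * π : ℂ) ^ d * p n v := by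
  induction n generalizing v with
  | zero => simp only [pow_zero, one_mul, orth, hp0]; split_ifs <;> simp
  | succ n ih =>
    have e1 : p (n + 1) v = ∑ u ∈ S, ω u * p n (v - u) := by
      rw [hp, latticeConv, ← (Equiv.subLeft v).tsum_eq, tsum_eq_sum (s := S)]
      · simp
      · intro u hu; simp [hS u hu]
    have e2 : ∀ ξ : Fin d → ℝ, ftOmega ω ξ ^ (n + 1) * Complex.exp (-(Complex.I * (dz ξ v : ℂ))) =
        ∑ u ∈ S, (ω u : ℂ) * (ftOmega ω ξ ^ n *
          Complex.exp (-(Complex.I * (dz ξ (v - u) : ℂ)))) := by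
      intro ξ
      rw [pow_succ, mul_assoc]
      nth_rewrite 2 [ft_eq_s4 hS]
      rw [Finset.sum_mul, Finset.mul_sum]
      refine Finset.sum_congr rfl fun u _ => ?_
      rw [dz_sub, show (-(Complex.I * ((dz ξ v - dz ξ u : ℝ) : ℂ))) =
        Complex.I * (dz ξ u : ℂ) + -(Complex.I * (dz ξ v : ℂ)) by push_cast; ring, Complex.exp_add]
      ring
    simp_rw [e2]
    have hc := ft_cont hS
    have hd := fun v => dz_cont (d := d) v
    rw [integral_finsetSum _ fun u _ => (intOn_bx (by fun_prop))]
    simp_rw [integral_const_mul, ih]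
    rw [e1]
    push_cast
    rw [Finset.mul_sum]
    exact Finset.sum_congr rfl fun u _ => by ring

open scoped MatrixOrder ComplexOrder Matrix.Norms.L2Operator in
lemma pd_factor {d : ℕ} {Q : Matrix (Fin d) (Fin d) ℝ} (hQ : Q.PosDef) :
    ∃ A : Matrix (Fin d) (Fin d) ℝ, A.det ≠ 0 ∧ Q = Aᵀ * A := by
  obtain ⟨A, hA⟩ := CStarAlgebra.nonneg_iff_eq_star_mul_self.mp hQ.posSemidef.nonneg
  rw [star_eq_conjTranspose, conjTranspose_eq_transpose_of_trivial] at hA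
  refine ⟨A, fun h => ?_, hA⟩
  have := hQ.det_pos
  rw [hA] at this
  simp [h] at this

lemma cv {d : ℕ} {A : Matrix (Fin d) (Fin d) ℝ} (hA : A.det ≠ 0) (f : (Fin d → ℝ) → ℂ) :
    (∫ x, f (A *ᵥ x) = |A.det|⁻¹ * ∫ x, f x) ∧
    (Integrable f → Integrable fun x => f (A *ᵥ x)) := by
  have hm := Real.map_matrix_volume_pi_eq_smul_volume_pi hA
  have hinj : Function.Injective (A *ᵥ ·) :=
    mulVec_injective_iff_isUnit.2 ((isUnit_iff_isUnit_det _).2 hA.isUnit)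
  have hemb : MeasurableEmbedding (toLin' A) := by
    refine (LinearMap.continuous_of_finiteDimensional (toLin' A)).measurableEmbedding ?_
    simpa [Function.Injective] using hinj
  constructor
  · have := hemb.integral_map (μ := volume) f
    rw [hm, integral_smul_measure] at this
    simp only [toLin'_apply] at this
    rw [← this]
    simp
  · intro hf
    have := (hemb.integrable_map_iff (μ := volume) (g := f)).1
      (by rw [hm]; exact hf.smul_measure ENNReal.ofReal_ne_top)
    simpa [Function.comp_def] using this

lemma sq_sum {d : ℕ} (A : Matrix (Fin d) (Fin d) ℝ) (x : Fin d → ℝ) :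
    x ⬝ᵥ ((Aᵀ * A) *ᵥ x) = ∑ i, (A *ᵥ x) i ^ 2 := by
  rw [← mulVec_mulVec, dotProduct_mulVec, vecMul_transpose]
  simp [dotProduct, sq]

lemma gauss_int {d : ℕ} {Q : Matrix (Fin d) (Fin d) ℝ} (hQ : Q.PosDef) {c : ℝ} (hc : 0 < c) :
    Integrable (fun x : Fin d → ℝ => Real.exp (-(c * (x ⬝ᵥ (Q *ᵥ x))))) := by
  obtain ⟨A, hA, rfl⟩ := pd_factor hQ
  have := (cv hA _).2 (GaussianFourier.integrable_cexp_neg_mul_sum_add (ι := Fin d)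
    (b := (c : ℂ)) (by simpa using hc) 0)
  have := this.norm
  refine this.congr (Eventually.of_forall fun x => ?_)
  simp only [sq_sum]
  rw [Complex.norm_exp]
  congr 1
  have : (-(c : ℂ) * ∑ i, ((A *ᵥ x) i : ℂ) ^ 2 + ∑ i, (0 : Fin d → ℂ) i * ((A *ᵥ x) i : ℂ)) =
      ((-(c * ∑ i, (A *ᵥ x) i ^ 2) : ℝ) : ℂ) := by
    simp
  rw [this, Complex.ofReal_re]

lemma gauss_ft {d : ℕ} {Q : Matrix (Fin d) (Fin d) ℝ} (hQ : Q.PosDef) (t : Fin d → ℝ) :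
    ∫ x : Fin d → ℝ, Complex.exp (-((x ⬝ᵥ (Q *ᵥ x)) / 2 : ℝ)) *
      Complex.exp (-(Complex.I * (x ⬝ᵥ t : ℝ))) =
    (((2 * π) ^ ((d : ℝ) / 2) * (Real.sqrt Q.det)⁻¹ *
      Real.exp (-(t ⬝ᵥ (Q⁻¹ *ᵥ t)) / 2) : ℝ) : ℂ) := by
  obtain ⟨A, hA, rfl⟩ := pd_factor hQ
  have hu : IsUnit A.det := hA.isUnit
  set s : Fin d → ℝ := (A⁻¹)ᵀ *ᵥ t with hs
  have h1 : ∀ x, x ⬝ᵥ t = ∑ i, s i * (A *ᵥ x) i := by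
    intro x
    change _ = s ⬝ᵥ (A *ᵥ x)
    rw [dotProduct_mulVec, hs, mulVec_transpose, vecMul_vecMul, nonsing_inv_mul _ hu,
      vecMul_one, dotProduct_comm]
  have h2 : t ⬝ᵥ ((Aᵀ * A)⁻¹ *ᵥ t) = ∑ i, s i ^ 2 := by
    rw [Matrix.mul_inv_rev, ← transpose_nonsing_inv, hs]
    have := sq_sum ((A⁻¹)ᵀ) t
    rwa [transpose_transpose] at this
  have h3 : Real.sqrt (Aᵀ * A).det = |A.det| := by
    rw [det_mul, det_transpose, Real.sqrt_mul_self_eq_abs]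
  have key := (cv hA fun y => Complex.exp (-(1 / 2 : ℂ) * ∑ i, (y i : ℂ) ^ 2 +
    ∑ i, (-(Complex.I * s i)) * y i)).1
  rw [GaussianFourier.integral_cexp_neg_mul_sum_add (by norm_num)] at key
  rw [h2, h3]
  convert key using 1
  · congr 1
    ext x
    rw [← Complex.exp_add, sq_sum, h1]
    congr 1
    push_cast
    rw [Finset.mul_sum, ← Finset.sum_neg_distrib]
    congr 1
    · ring
    · exact Finset.sum_congr rfl fun i _ => by ring
  · simp only [neg_sq, mul_pow, Complex.I_sq, Fintype.card_fin]
    rw [show (π / (1 / 2) : ℂ) = ((2 * π : ℝ) : ℂ) by push_cast; ring,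
      show ((d : ℂ) / 2) = (((d : ℝ) / 2 : ℝ) : ℂ) by push_cast; ring,
      ← Complex.ofReal_cpow (by positivity)]
    push_cast
    rw [show (∑ i, (-1 : ℂ) * (s i : ℂ) ^ 2) / (4 * (1 / 2)) = -(∑ i, (s i : ℂ) ^ 2) / 2 by
      rw [← Finset.mul_sum]; ring]
    ring

lemma l1_lim {d : ℕ} {ω : (Fin d → ℤ) → ℝ} {S : Finset (Fin d → ℤ)} (hS : ∀ v ∉ S, ω v = 0)
    (hnn : ∀ v, 0 ≤ ω v) (hmass : ∑' v : Fin d → ℤ, ω v = 1)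
    (hcent : ∀ i, ∑' v : Fin d → ℤ, ω v * (v i : ℝ) = 0)
    (hQ : (covQ d ω).PosDef)
    (haper : ∀ ξ : Fin d → ℝ, (∀ i, ξ i ∈ Set.Icc (-π) π) → ξ ≠ 0 →
      ‖ftOmega ω ξ‖ < 1) :
    (∀ n : ℕ, 0 < n → Integrable (fun x : Fin d → ℝ =>
      (bx d).indicator (fun ξ => ftOmega ω ξ ^ n) ((Real.sqrt n)⁻¹ • x))) ∧
    Integrable (fun x : Fin d → ℝ => Complex.exp (-(qf ω x / 2 : ℝ))) ∧
    Tendsto (fun n : ℕ => ∫ x : Fin d → ℝ,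
      ‖(bx d).indicator (fun ξ => ftOmega ω ξ ^ n) ((Real.sqrt n)⁻¹ • x) -
        Complex.exp (-(qf ω x / 2 : ℝ))‖) atTop (𝓝 0) := by
  obtain ⟨c, hc, hc2, hcb⟩ := ft_bound hS hnn hmass hcent haper
  have q0 : ∀ ξ, 0 ≤ qf ω ξ := fun ξ => by
    rw [qf_eq hS]; exact Finset.sum_nonneg fun v _ => mul_nonneg (hnn v) (sq_nonneg _)
  have hI : Integrable (fun x : Fin d → ℝ => Real.exp (-(c * qf ω x))) := gauss_int hQ hc
  have hmeas : ∀ n : ℕ, Measurable (fun x : Fin d → ℝ =>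
      (bx d).indicator (fun ξ => ftOmega ω ξ ^ n) ((Real.sqrt n)⁻¹ • x)) := by
    intro n
    exact (((ft_cont hS).pow n).measurable.indicator (bx_meas d)).comp (measurable_const_smul _)
  have hqc := qf_cont ω
  have hgm : Continuous (fun x : Fin d → ℝ => Complex.exp (-(qf ω x / 2 : ℝ))) := by fun_prop
  have hgb : ∀ x, ‖Complex.exp (-(qf ω x / 2 : ℝ))‖ ≤ Real.exp (-(c * qf ω x)) := by
    intro x
    rw [← Complex.ofReal_neg, Complex.norm_exp_ofReal, Real.exp_le_exp]
    nlinarith [q0 x]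
  have hGb : ∀ n : ℕ, 0 < n → ∀ x, ‖(bx d).indicator (fun ξ => ftOmega ω ξ ^ n)
      ((Real.sqrt n)⁻¹ • x)‖ ≤ Real.exp (-(c * qf ω x)) := by
    intro n hn x
    have hn' : (0 : ℝ) < n := by exact_mod_cast hn
    by_cases h : (Real.sqrt n)⁻¹ • x ∈ bx d
    · rw [Set.indicator_of_mem h, norm_pow]
      have hb := hcb _ fun i => bx_sub d h i (Set.mem_univ i)
      refine (pow_le_pow_left₀ (norm_nonneg _) hb n).trans (le_of_eq ?_)
      rw [← Real.exp_nat_mul, qf_smul, inv_pow, Real.sq_sqrt hn'.le]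
      congr 1
      field_simp
    · rw [Set.indicator_of_notMem h, norm_zero]; positivity
  refine ⟨fun n hn => hI.mono' (hmeas n).aestronglyMeasurable (Eventually.of_forall (hGb n hn)),
    hI.mono' hgm.aestronglyMeasurable (Eventually.of_forall hgb), ?_⟩
  have := tendsto_integral_filter_of_dominated_convergence (μ := volume) (l := atTop)
    (F := fun (n : ℕ) (x : Fin d → ℝ) =>
      ‖(bx d).indicator (fun ξ => ftOmega ω ξ ^ n) ((Real.sqrt n)⁻¹ • x) -
        Complex.exp (-(qf ω x / 2 : ℝ))‖) (f := fun _ => 0)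
    (fun x => Real.exp (-(c * qf ω x)) + Real.exp (-(c * qf ω x)))
    (Eventually.of_forall fun n => ((hmeas n).sub hgm.measurable).norm.aestronglyMeasurable)
    ?_ (hI.add hI) ?_
  · simpa using this
  · filter_upwards [eventually_gt_atTop 0] with n hn
    refine Eventually.of_forall fun x => ?_
    rw [norm_norm]
    exact (norm_sub_le _ _).trans (add_le_add (hGb n hn x) (hgb x))
  · refine Eventually.of_forall fun x => ?_
    have h1 : Tendsto (fun n : ℕ => (Real.sqrt n)⁻¹) atTop (𝓝 0) :=
      tendsto_inv_atTop_zero.comp (Real.tendsto_sqrt_atTop.comp tendsto_natCast_atTop_atTop)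
    have h2 : Tendsto (fun n : ℕ => (Real.sqrt n)⁻¹ • x) atTop (𝓝 0) := by
      simpa using h1.smul_const x
    have h3 : bx d ∈ 𝓝 (0 : Fin d → ℝ) := by
      refine set_pi_mem_nhds Set.finite_univ fun i _ => ?_
      exact Ioc_mem_nhds (by simpa using pi_pos) pi_pos
    have h4 := ft_lim hS hnn hmass hcent x
    rw [tendsto_iff_norm_sub_tendsto_zero] at h4
    refine h4.congr' ?_
    filter_upwards [h2.eventually h3] with n hn
    rw [Set.indicator_of_mem hn]

lemma pt_bound {d : ℕ} {ω : (Fin d → ℤ) → ℝ} {S : Finset (Fin d → ℤ)} (hS : ∀ v ∉ S, ω v = 0)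
    (hQ : (covQ d ω).PosDef)
    (p : ℕ → (Fin d → ℤ) → ℝ)
    (hp0 : ∀ v, p 0 v = if v = 0 then 1 else 0)
    (hp : ∀ n, p (n + 1) = latticeConv ω (p n)) (n : ℕ) (hn : 0 < n)
    (hG : Integrable (fun x : Fin d → ℝ =>
      (bx d).indicator (fun ξ => ftOmega ω ξ ^ n) ((Real.sqrt n)⁻¹ • x)))
    (hg : Integrable (fun x : Fin d → ℝ => Complex.exp (-(qf ω x / 2 : ℝ)))) (v : Fin d → ℤ) :
    (n : ℝ) ^ ((d : ℝ) / 2) * |p n v -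
          (2 * π * (n : ℝ)) ^ (-(d : ℝ) / 2) * (Real.sqrt (covQ d ω).det)⁻¹ *
            Real.exp (-((fun i => (v i : ℝ)) ⬝ᵥ ((covQ d ω)⁻¹ *ᵥ fun i => (v i : ℝ))) /
              (2 * (n : ℝ)))| ≤ ((2 * π) ^ d)⁻¹ * ∫ x : Fin d → ℝ,
      ‖(bx d).indicator (fun ξ => ftOmega ω ξ ^ n) ((Real.sqrt n)⁻¹ • x) -
        Complex.exp (-(qf ω x / 2 : ℝ))‖ := by
  have hn' : (0 : ℝ) < n := by exact_mod_cast hn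
  set e : (Fin d → ℝ) → ℂ :=
    fun x => Complex.exp (-(Complex.I * (dz ((Real.sqrt n)⁻¹ • x) v : ℂ))) with he
  have hec : Continuous e := by
    have := dz_cont v
    have h2 : Continuous fun x : Fin d → ℝ => dz ((Real.sqrt n)⁻¹ • x) v :=
      this.comp (continuous_const_smul _)
    fun_prop
  have heb : ∀ x, ‖e x‖ = 1 := by
    intro x
    simp [he, Complex.norm_exp]
  have i1 : ∫ x, (bx d).indicator (fun ξ => ftOmega ω ξ ^ n) ((Real.sqrt n)⁻¹ • x) * e x =
      (((n : ℝ) ^ ((d : ℝ) / 2) * ((2 * π) ^ d * p n v) : ℝ) : ℂ) := by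
    have := Measure.integral_comp_smul (volume : Measure (Fin d → ℝ))
      ((bx d).indicator (fun ξ => ftOmega ω ξ ^ n *
        Complex.exp (-(Complex.I * (dz ξ v : ℂ))))) (Real.sqrt n)⁻¹
    rw [integral_indicator (bx_meas d), inversion hS p hp0 hp] at this
    have e1 : |(((Real.sqrt n)⁻¹) ^ Module.finrank ℝ (Fin d → ℝ))⁻¹| = (n : ℝ) ^ ((d : ℝ) / 2) := by
      rw [Module.finrank_fin_fun, abs_of_nonneg (by positivity), inv_pow, inv_inv,
        Real.sqrt_eq_rpow, ← Real.rpow_mul_natCast hn'.le]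
      congr 1; ring
    rw [e1] at this
    rw [Complex.ofReal_mul, ← smul_eq_mul, Complex.coe_smul]
    convert this using 1
    · congr 1
      ext x
      by_cases h : (Real.sqrt n)⁻¹ • x ∈ bx d
      · simp [Set.indicator_of_mem h, he]
      · simp [Set.indicator_of_notMem h]
    · push_cast; rfl
  set T : ℝ := (2 * π * (n : ℝ)) ^ (-(d : ℝ) / 2) * (Real.sqrt (covQ d ω).det)⁻¹ *
            Real.exp (-((fun i => (v i : ℝ)) ⬝ᵥ ((covQ d ω)⁻¹ *ᵥ fun i => (v i : ℝ))) /
              (2 * (n : ℝ))) with hT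
  have i2 : ∫ x, Complex.exp (-(qf ω x / 2 : ℝ)) * e x =
      (((n : ℝ) ^ ((d : ℝ) / 2) * ((2 * π) ^ d * T) : ℝ) : ℂ) := by
    have := gauss_ft hQ ((Real.sqrt n)⁻¹ • fun i => (v i : ℝ))
    convert this using 1
    · congr 1
      ext x
      have h5 : dz ((Real.sqrt n)⁻¹ • x) v = x ⬝ᵥ ((Real.sqrt n)⁻¹ • fun i => (v i : ℝ)) := by
        rw [dz_smul, dotProduct_smul]
        rfl
      simp only [he, qf, h5]
    · congr 1
      rw [hT, mulVec_smul, dotProduct_smul, smul_dotProduct, smul_eq_mul, smul_eq_mul,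
        ← mul_assoc (Real.sqrt n)⁻¹, ← mul_inv, Real.mul_self_sqrt hn'.le, Real.mul_rpow (by positivity) hn'.le,
        neg_div, Real.rpow_neg hn'.le, Real.rpow_neg (by positivity)]
      have e1 : (2 * π) ^ d = (2 * π) ^ ((d : ℝ) / 2) * (2 * π) ^ ((d : ℝ) / 2) := by
        rw [← Real.rpow_add (by positivity), add_halves, Real.rpow_natCast]
      rw [e1]
      have p1 : 0 < (2 * π) ^ ((d : ℝ) / 2) := by positivity
      have p2 : 0 < (n : ℝ) ^ ((d : ℝ) / 2) := by positivity
      have e2 : ∀ z : ℝ, -z / (2 * n) = -((n : ℝ)⁻¹ * z) / 2 := by intro z; field_simp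
      rw [e2]
      field_simp
  have i3 : ∫ x, ((bx d).indicator (fun ξ => ftOmega ω ξ ^ n) ((Real.sqrt n)⁻¹ • x) -
        Complex.exp (-(qf ω x / 2 : ℝ))) * e x =
      (((n : ℝ) ^ ((d : ℝ) / 2) * ((2 * π) ^ d * (p n v - T)) : ℝ) : ℂ) := by
    simp_rw [sub_mul]
    rw [integral_sub, i1, i2]
    · push_cast; ring
    · exact hG.mul_bdd (c := 1) hec.aestronglyMeasurable (Eventually.of_forall fun x => (heb x).le)
    · exact hg.mul_bdd (c := 1) hec.aestronglyMeasurable (Eventually.of_forall fun x => (heb x).le)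
  have i4 := norm_integral_le_integral_norm (μ := volume) fun x =>
    ((bx d).indicator (fun ξ => ftOmega ω ξ ^ n) ((Real.sqrt n)⁻¹ • x) -
        Complex.exp (-(qf ω x / 2 : ℝ))) * e x
  simp_rw [norm_mul, heb, mul_one] at i4
  rw [i3, Complex.norm_real, Real.norm_eq_abs, abs_mul, abs_mul,
    abs_of_nonneg (by positivity : (0 : ℝ) ≤ (n : ℝ) ^ ((d : ℝ) / 2)),
    abs_of_nonneg (by positivity : (0 : ℝ) ≤ (2 * π) ^ d)] at i4
  rw [inv_mul_eq_div, le_div_iff₀ (by positivity)]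
  linarith

/-- Local central limit theorem for simple gossip on ℤ^d. -/
theorem simple_gossip_local_clt
    (d : ℕ) (hd : 1 ≤ d) (ω : (Fin d → ℤ) → ℝ)
    (hfin : (Function.support ω).Finite) (hnn : ∀ v, 0 ≤ ω v)
    (hmass : ∑' v : Fin d → ℤ, ω v = 1)
    (hcent : ∀ i, ∑' v : Fin d → ℤ, ω v * (v i : ℝ) = 0)
    (hQ : (covQ d ω).PosDef)
    (haper : ∀ ξ : Fin d → ℝ, (∀ i, ξ i ∈ Set.Icc (-π) π) → ξ ≠ 0 →
      ‖ftOmega ω ξ‖ < 1)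
    (p : ℕ → (Fin d → ℤ) → ℝ)
    (hp0 : ∀ v, p 0 v = if v = 0 then 1 else 0)
    (hp : ∀ n, p (n + 1) = latticeConv ω (p n)) :
    Tendsto (fun n : ℕ => (n : ℝ) ^ ((d : ℝ) / 2) *
        ⨆ v : Fin d → ℤ, |p n v -
          (2 * π * (n : ℝ)) ^ (-(d : ℝ) / 2) * (Real.sqrt (covQ d ω).det)⁻¹ *
            Real.exp (-((fun i => (v i : ℝ)) ⬝ᵥ ((covQ d ω)⁻¹ *ᵥ fun i => (v i : ℝ))) /
              (2 * (n : ℝ)))|)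
      atTop (𝓝 0) := by
  have hS : ∀ v ∉ hfin.toFinset, ω v = 0 := by
    intro v hv; simpa using hv
  obtain ⟨hG, hg, hlim⟩ := l1_lim hS hnn hmass hcent hQ haper
  have hlim2 := hlim.const_mul (((2 * π) ^ d)⁻¹)
  rw [mul_zero] at hlim2
  refine squeeze_zero' (Eventually.of_forall fun n => ?_) ?_ hlim2
  · exact mul_nonneg (by positivity) (Real.iSup_nonneg fun v => abs_nonneg _)
  · filter_upwards [eventually_gt_atTop 0] with n hn
    have hn' : (0 : ℝ) < n := by exact_mod_cast hn
    have hpos : (0 : ℝ) < (n : ℝ) ^ ((d : ℝ) / 2) := by positivity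
    rw [← le_div_iff₀' hpos]
    refine ciSup_le fun v => ?_
    rw [le_div_iff₀' hpos]
    exact pt_bound hS hQ p hp0 hp n hn (hG n hn) hg v
end
end

section
/- Let α > d/2 − 1 be real and define u(t,y) = (Γ(α+1)/(π^{d/2} Γ(α+1−d/2) (det Q)^{1/2})) · t^{−2α} (t² − ⟨y, Q⁻¹y⟩)^{α−d/2} on the open region D = {(t,y) ∈ (0,∞)×ℝ^d : ⟨y, Q⁻¹y⟩ < t²}. Then u satisfies the Euler–Poisson–Darboux equation pointwise on D: ∂²u/∂t² + ((2α+1)/t) ∂u/∂t = ∑_{i,j=1}^d Q_{ij} ∂²u/∂y_i∂y_j for every (t,y) ∈ D. -/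
open MeasureTheory Matrix Filter Topology Real

noncomputable section

def epdSol (d : ℕ) (Q : Matrix (Fin d) (Fin d) ℝ) (α : ℝ) (t : ℝ) (y : Fin d → ℝ) : ℝ :=
  (Real.Gamma (α + 1) /
      (π ^ ((d : ℝ) / 2) * Real.Gamma (α + 1 - (d : ℝ) / 2) * Real.sqrt Q.det)) *
    t ^ (-(2 * α)) * (t ^ 2 - y ⬝ᵥ (Q⁻¹ *ᵥ y)) ^ (α - (d : ℝ) / 2)

theorem aux_coord {d : ℕ} (y : Fin d → ℝ) (j k : Fin d) :
    HasDerivAt (fun s => Function.update y j s k) ((Pi.single j 1 : Fin d → ℝ) k) (y j) :=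
  (hasDerivAt_pi.1 (hasDerivAt_update y j (y j))) k

theorem aux_lin {d : ℕ} (A : Matrix (Fin d) (Fin d) ℝ) (y : Fin d → ℝ) (i j : Fin d) :
    HasDerivAt (fun s => (A *ᵥ Function.update y i s) j) (A j i) (y i) := by
  have h : HasDerivAt (fun s => ∑ l, A j l * Function.update y i s l)
      (∑ l, A j l * (Pi.single i 1 : Fin d → ℝ) l) (y i) :=
    HasDerivAt.fun_sum fun l _ => (aux_coord y i l).const_mul (A j l)
  have e : (∑ l, A j l * (Pi.single i 1 : Fin d → ℝ) l) = A j i := by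
    simp [Pi.single_apply]
  rw [e] at h
  exact h

theorem aux_quad {d : ℕ} (A : Matrix (Fin d) (Fin d) ℝ) (hA : ∀ i j, A i j = A j i)
    (y : Fin d → ℝ) (j : Fin d) :
    HasDerivAt (fun s => Function.update y j s ⬝ᵥ (A *ᵥ Function.update y j s))
      (2 * (A *ᵥ y) j) (y j) := by
  have h : HasDerivAt (fun s => ∑ k, Function.update y j s k * (A *ᵥ Function.update y j s) k)
      (∑ k, ((Pi.single j 1 : Fin d → ℝ) k * (A *ᵥ Function.update y j (y j)) k
        + Function.update y j (y j) k * A k j)) (y j) :=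
    HasDerivAt.fun_sum fun k _ => (aux_coord y j k).mul (aux_lin A y j k)
  have e : (∑ k, ((Pi.single j 1 : Fin d → ℝ) k * (A *ᵥ Function.update y j (y j)) k
        + Function.update y j (y j) k * A k j)) = 2 * (A *ᵥ y) j := by
    rw [Finset.sum_add_distrib, Function.update_eq_self]
    have h1 : ∑ k, (Pi.single j 1 : Fin d → ℝ) k * (A *ᵥ y) k = (A *ᵥ y) j := by
      simp [Pi.single_apply]
    have h2 : ∑ k, y k * A k j = (A *ᵥ y) j := by
      simp only [Matrix.mulVec, dotProduct]
      exact Finset.sum_congr rfl fun k _ => by rw [hA k j, mul_comm]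
    rw [h1, h2]; ring
  rw [e] at h
  exact h

theorem aux_pow {d : ℕ} (A : Matrix (Fin d) (Fin d) ℝ) (hA : ∀ i j, A i j = A j i)
    (T b : ℝ) (y : Fin d → ℝ) (j : Fin d) (hy : y ⬝ᵥ (A *ᵥ y) < T) :
    HasDerivAt (fun s => (T - Function.update y j s ⬝ᵥ (A *ᵥ Function.update y j s)) ^ b)
      (-(2 * (A *ᵥ y) j) * b * (T - y ⬝ᵥ (A *ᵥ y)) ^ (b - 1)) (y j) := by
  have h := ((aux_quad A hA y j).const_sub T).rpow_const (p := b)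
    (Or.inl (by rw [Function.update_eq_self]; linarith))
  rw [Function.update_eq_self] at h
  exact h

theorem aux_pd {d : ℕ} (A : Matrix (Fin d) (Fin d) ℝ) (hA : ∀ i j, A i j = A j i)
    (K T b : ℝ) (y : Fin d → ℝ) (j : Fin d) (hy : y ⬝ᵥ (A *ᵥ y) < T) :
    pd j (fun z => K * (T - z ⬝ᵥ (A *ᵥ z)) ^ b) y
      = K * (-(2 * (A *ᵥ y) j) * b * (T - y ⬝ᵥ (A *ᵥ y)) ^ (b - 1)) :=
  ((aux_pow A hA T b y j hy).const_mul K).deriv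

theorem aux_pd2 {d : ℕ} (A : Matrix (Fin d) (Fin d) ℝ) (hA : ∀ i j, A i j = A j i)
    (K T b : ℝ) (y : Fin d → ℝ) (i j : Fin d) (hy : y ⬝ᵥ (A *ᵥ y) < T) :
    pd i (pd j (fun z => K * (T - z ⬝ᵥ (A *ᵥ z)) ^ b)) y
      = K * b * (-2 * A j i * (T - y ⬝ᵥ (A *ᵥ y)) ^ (b - 1)
        + 4 * (b - 1) * (A *ᵥ y) i * (A *ᵥ y) j * (T - y ⬝ᵥ (A *ᵥ y)) ^ (b - 1 - 1)) := by
  have hc := (aux_quad A hA y i).continuousAt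
  have hev : ∀ᶠ s in 𝓝 (y i), Function.update y i s ⬝ᵥ (A *ᵥ Function.update y i s) < T := by
    apply hc.eventually_lt continuousAt_const
    simpa [Function.update_eq_self] using hy
  have heq : (fun s => pd j (fun z => K * (T - z ⬝ᵥ (A *ᵥ z)) ^ b) (Function.update y i s))
      =ᶠ[𝓝 (y i)] fun s => K * (-(2 * (A *ᵥ Function.update y i s) j) * b *
        (T - Function.update y i s ⬝ᵥ (A *ᵥ Function.update y i s)) ^ (b - 1)) := by
    filter_upwards [hev] with s hs
    exact aux_pd A hA K T b _ j hs
  have h := (((((aux_lin A y i j).const_mul 2).fun_neg.mul_const b).fun_mul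
    (aux_pow A hA T (b - 1) y i hy)).const_mul K)
  unfold pd at heq ⊢
  rw [heq.deriv_eq, h.deriv, Function.update_eq_self]
  ring

theorem aux_t1 (C a b q t : ℝ) (ht : 0 < t) (hq : q < t ^ 2) :
    HasDerivAt (fun r : ℝ => C * r ^ (-(2 * a)) * (r ^ 2 - q) ^ b)
      (C * (-(2 * a)) * t ^ (-(2 * a) - 1) * (t ^ 2 - q) ^ b
        + 2 * b * C * (t ^ (-(2 * a) + 1) * (t ^ 2 - q) ^ (b - 1))) t := by
  have h1 := (Real.hasDerivAt_rpow_const (x := t) (p := -(2 * a)) (Or.inl ht.ne')).const_mul C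
  have h2 := ((hasDerivAt_pow 2 t).sub_const q).rpow_const (p := b)
    (Or.inl (by linarith))
  refine (h1.fun_mul h2).congr_deriv ?_
  rw [Real.rpow_add_one ht.ne']
  push_cast
  ring

theorem aux_t2 (C a b q t : ℝ) (ht : 0 < t) (hq : q < t ^ 2) :
    deriv (fun s => deriv (fun r : ℝ => C * r ^ (-(2 * a)) * (r ^ 2 - q) ^ b) s) t
      + ((2 * a + 1) / t) * deriv (fun r : ℝ => C * r ^ (-(2 * a)) * (r ^ 2 - q) ^ b) t
    = C * t ^ (-(2 * a)) * b * ((4 - 4 * a) * (t ^ 2 - q) ^ (b - 1)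
        + 4 * (b - 1) * t ^ 2 * (t ^ 2 - q) ^ (b - 1 - 1)) := by
  have hev : ∀ᶠ s in 𝓝 t, 0 < s ∧ q < s ^ 2 :=
    (lt_mem_nhds ht).and
      ((continuousAt_const (y := q)).eventually_lt (continuous_pow 2).continuousAt hq)
  have heq : (fun s => deriv (fun r : ℝ => C * r ^ (-(2 * a)) * (r ^ 2 - q) ^ b) s) =ᶠ[𝓝 t]
      fun t => (C * (-(2 * a)) * t ^ (-(2 * a) - 1) * (t ^ 2 - q) ^ b
        + 2 * b * C * (t ^ (-(2 * a) + 1) * (t ^ 2 - q) ^ (b - 1))) := by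
    filter_upwards [hev] with s hs
    exact (aux_t1 C a b q s hs.1 hs.2).deriv
  have hp := fun p : ℝ => Real.hasDerivAt_rpow_const (x := t) (p := p) (Or.inl ht.ne')
  have hw := fun p : ℝ => ((hasDerivAt_pow 2 t).sub_const q).rpow_const (p := p)
    (Or.inl (by linarith))
  have h := (((hp (-(2 * a) - 1)).const_mul (C * (-(2 * a)))).fun_mul (hw b)).fun_add
    (((hp (-(2 * a) + 1)).fun_mul (hw (b - 1))).const_mul (2 * b * C))
  rw [heq.deriv_eq, h.deriv, (aux_t1 C a b q t ht hq).deriv]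
  have e1 : t ^ (-(2 * a) - 1 - 1) = t ^ (-(2 * a)) / t / t := by
    rw [Real.rpow_sub_one ht.ne', Real.rpow_sub_one ht.ne']
  have e2 : t ^ (-(2 * a) - 1) = t ^ (-(2 * a)) / t := Real.rpow_sub_one ht.ne' _
  have e3 : t ^ (-(2 * a) + 1) = t ^ (-(2 * a)) * t := Real.rpow_add_one ht.ne' _
  have e4 : -(2 * a) + 1 - 1 = -(2 * a) := by ring
  rw [e4, e1, e2, e3]
  push_cast
  generalize t ^ (-(2 * a)) = X
  generalize (t ^ 2 - q) ^ b = W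
  generalize (t ^ 2 - q) ^ (b - 1) = W1
  generalize (t ^ 2 - q) ^ (b - 1 - 1) = W2
  field_simp
  ring

/-- The fundamental solution satisfies the Euler–Poisson–Darboux equation pointwise on the
open region D = {(t,y) : 0 < t, ⟨y,Q⁻¹y⟩ < t²}. -/
theorem epd_fundamental_solution_satisfies_epd
    (d : ℕ) (hd : 1 ≤ d) (Q : Matrix (Fin d) (Fin d) ℝ) (hQ : Q.PosDef)
    (α : ℝ) (hα : (d : ℝ) / 2 - 1 < α) :
    ∀ t : ℝ, ∀ y : Fin d → ℝ, 0 < t → y ⬝ᵥ (Q⁻¹ *ᵥ y) < t ^ 2 →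
      deriv (fun s => deriv (fun r => epdSol d Q α r y) s) t +
          ((2 * α + 1) / t) * deriv (fun s => epdSol d Q α s y) t =
        ∑ i, ∑ j, Q i j * pd i (pd j (epdSol d Q α t)) y := by
  intro t y ht hy
  have hdet : IsUnit Q.det := isUnit_iff_ne_zero.2 hQ.det_pos.ne'
  have hQs : ∀ i j, Q i j = Q j i := fun i j => by
    have := hQ.isHermitian.apply j i
    simpa using this
  have hA : ∀ i j, Q⁻¹ i j = Q⁻¹ j i := fun i j => by
    have := hQ.isHermitian.inv.apply j i
    simpa using this
  have hQA : Q * Q⁻¹ = 1 := Matrix.mul_nonsing_inv Q hdet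
  unfold epdSol
  generalize Real.Gamma (α + 1) /
      (π ^ ((d : ℝ) / 2) * Real.Gamma (α + 1 - (d : ℝ) / 2) * Real.sqrt Q.det) = C
  rw [aux_t2 C α (α - (d : ℝ) / 2) _ t ht hy]
  generalize hAd : Q⁻¹ = A at *
  generalize hb : α - (d : ℝ) / 2 = b
  simp only [aux_pd2 A hA _ _ b y _ _ hy]
  have s1 : ∑ i, ∑ j, Q i j * A j i = d := by
    have : Matrix.trace (Q * A) = d := by rw [hQA]; simp
    rw [← this]
    simp [Matrix.trace, Matrix.mul_apply]
  have s2 : ∑ i, ∑ j, Q i j * ((A *ᵥ y) i * (A *ᵥ y) j) = y ⬝ᵥ (A *ᵥ y) := by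
    have h1 : Q *ᵥ (A *ᵥ y) = y := by
      rw [Matrix.mulVec_mulVec, hQA, Matrix.one_mulVec]
    have h2 : (A *ᵥ y) ⬝ᵥ (Q *ᵥ (A *ᵥ y)) = y ⬝ᵥ (A *ᵥ y) := by
      rw [h1, dotProduct_comm]
    rw [← h2]
    simp only [dotProduct, Matrix.mulVec, Finset.mul_sum]
    refine Finset.sum_congr rfl fun i _ => Finset.sum_congr rfl fun j _ => ?_
    simp only [Finset.sum_mul, Finset.mul_sum]
    refine Finset.sum_congr rfl fun k _ => ?_
    refine Finset.sum_congr rfl fun l _ => ?_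
    ring
  have hw : 0 < t ^ 2 - y ⬝ᵥ (A *ᵥ y) := by linarith
  have e : (t ^ 2 - y ⬝ᵥ (A *ᵥ y)) ^ (b - 1)
      = (t ^ 2 - y ⬝ᵥ (A *ᵥ y)) ^ (b - 1 - 1) * (t ^ 2 - y ⬝ᵥ (A *ᵥ y)) := by
    rw [← Real.rpow_add_one hw.ne']; congr 1; ring
  rw [e]
  generalize (t ^ 2 - y ⬝ᵥ (A *ᵥ y)) ^ (b - 1 - 1) = W
  generalize t ^ (-(2 * α)) = X
  generalize hq : y ⬝ᵥ (A *ᵥ y) = q at *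
  have hsum : ∑ i, ∑ j, Q i j * (C * X * b * (-2 * A j i * (W * (t ^ 2 - q))
        + 4 * (b - 1) * (A *ᵥ y) i * (A *ᵥ y) j * W))
      = (C * X * b * -2 * (W * (t ^ 2 - q))) * (∑ i, ∑ j, Q i j * A j i)
        + (C * X * b * 4 * (b - 1) * W) * ∑ i, ∑ j, Q i j * ((A *ᵥ y) i * (A *ᵥ y) j) := by
    simp only [Finset.mul_sum, ← Finset.sum_add_distrib]
    refine Finset.sum_congr rfl fun i _ => Finset.sum_congr rfl fun j _ => ?_
    ring
  rw [hsum, s1, s2]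
  have hd2 : (d : ℝ) = 2 * (α - b) := by rw [← hb]; ring
  rw [hd2]
  ring
end
end
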